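/- arXiv:1004.5146 — 2 statements merged into one kernel-verified Lean document; each statement's English description precedes it below -/
import Mathlib

section
/- Let $1<\alpha<2$ and $n\geq 2$. There exists a constant $c=c(\alpha,n)>0$ such that for every radius $0<r<\infty$ and every continuous function $u$ with compact support in the open ball $B_r=\{x\in\mathbb{R}^n:|x|<r\}$, the fractional Hardy–Sobolev–Maz'ya inequality holds: $\mathcal{E}_{B_r}(u) \geq 2^{\alpha}\kappa_{n,\alpha}\int_{B_r} u^2(x)\, r^{\alpha}(r^2-|x|^2)^{-\alpha}\,dx + c\left(\int_{B_r}|u(x)|^{2^*}\,dx\right)^{2/2^*}$, where $2^*=2n/(n-\alpha)$. -/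
open MeasureTheory Metric Set Filter
open scoped ENNReal Topology

/-- The Euler beta function. -/
noncomputable def eulerBeta (a b : ℝ) : ℝ :=
  Real.Gamma a * Real.Gamma b / Real.Gamma (a + b)

/-- The sharp fractional Hardy constant `κ_{n,α}`. -/
noncomputable def kappa (n : ℕ) (α : ℝ) : ℝ :=
  Real.pi ^ (((n : ℝ) - 1) / 2) * (Real.Gamma ((1 + α) / 2) / Real.Gamma ((n + α) / 2)) *
    ((eulerBeta ((1 + α) / 2) ((2 - α) / 2) - 2 ^ α) / (α * 2 ^ α))

/-- The quadratic form `𝓔_D(u)`, valued in `[0,∞]`. -/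
noncomputable def energy (n : ℕ) (α : ℝ) (D : Set (EuclideanSpace ℝ (Fin n)))
    (u : EuclideanSpace ℝ (Fin n) → ℝ) : ℝ≥0∞ :=
  (1 / 2 : ℝ≥0∞) * ∫⁻ x in D, ∫⁻ y in D,
    ENNReal.ofReal ((u x - u y) ^ 2 / ‖x - y‖ ^ ((n : ℝ) + α))

namespace FHSM

section

theorem polar {E : Type*} [NormedAddCommGroup E] [NormedSpace ℝ E] [MeasurableSpace E]
    [Nontrivial E] [FiniteDimensional ℝ E] [BorelSpace E] (μ : Measure E) [μ.IsAddHaarMeasure]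
    (f : E → ℝ) (hf : Integrable f μ) :
    Integrable (fun θ : sphere (0 : E) 1 => ∫ τ in Ioi (0 : ℝ),
      τ ^ (Module.finrank ℝ E - 1) * f (τ • (θ : E))) μ.toSphere ∧
    ∫ x, f x ∂μ = ∫ θ : sphere (0 : E) 1, (∫ τ in Ioi (0 : ℝ),
      τ ^ (Module.finrank ℝ E - 1) * f (τ • (θ : E))) ∂μ.toSphere := by
  have hin : ∀ θ : sphere (0 : E) 1,
      ∫ τ : Ioi (0 : ℝ), f ((τ : ℝ) • (θ : E)) ∂(Measure.volumeIoiPow (Module.finrank ℝ E - 1)) =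
      ∫ τ in Ioi (0 : ℝ), τ ^ (Module.finrank ℝ E - 1) * f (τ • (θ : E)) := by
    intro θ
    simp only [Measure.volumeIoiPow, ENNReal.ofReal]
    rw [integral_withDensity_eq_integral_smul,
      integral_subtype_comap measurableSet_Ioi
        fun a ↦ Real.toNNReal (a ^ (Module.finrank ℝ E - 1)) • f (a • (θ : E)),
      setIntegral_congr_fun measurableSet_Ioi fun x hx ↦ ?_]
    · rw [NNReal.smul_def, Real.coe_toNNReal _ (pow_nonneg hx.out.le _), smul_eq_mul]
    · exact (measurable_subtype_coe.pow_const _).real_toNNReal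
  have hmp := μ.measurePreserving_homeomorphUnitSphereProd
  set g : sphere (0 : E) 1 × Ioi (0 : ℝ) → ℝ := fun p => f ((p.2 : ℝ) • (p.1 : E)) with hg
  have hgf : ∀ x : ({(0)}ᶜ : Set E), g (homeomorphUnitSphereProd E x) = f x := by
    intro x
    have : ‖(x : E)‖ ≠ 0 := norm_ne_zero_iff.2 x.2
    simp [hg, smul_smul, this]
  have hfi : Integrable (fun x : ({(0)}ᶜ : Set E) => f x) (μ.comap (↑)) := by
    have : IntegrableOn f ({(0)}ᶜ : Set E) μ := hf.integrableOn
    rwa [integrableOn_iff_comap_subtypeVal (measurableSet_singleton _).compl] at this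
  have hgi : Integrable g (μ.toSphere.prod (.volumeIoiPow (Module.finrank ℝ E - 1))) := by
    rw [← hmp.integrable_comp_emb (Homeomorph.measurableEmbedding _)]
    exact hfi.congr (.of_forall fun x => (hgf x).symm)
  refine ⟨?_, ?_⟩
  · refine hgi.integral_prod_left.congr (.of_forall fun θ => hin θ)
  · calc ∫ x, f x ∂μ = ∫ x : ({(0)}ᶜ : Set E), f x.1 ∂(μ.comap (↑)) := by
          rw [integral_subtype_comap (measurableSet_singleton _).compl fun x ↦ f x,
            restrict_compl_singleton]
      _ = ∫ x, g x ∂μ.toSphere.prod (.volumeIoiPow (Module.finrank ℝ E - 1)) := by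
          rw [← hmp.integral_comp (Homeomorph.measurableEmbedding _)]
          exact integral_congr_ae (.of_forall fun x => (hgf x).symm)
      _ = _ := by
          rw [integral_prod _ hgi]
          exact integral_congr_ae (.of_forall fun θ => hin θ)

end

end FHSM

namespace FHSM

section

theorem gauss_one (α : ℝ) (hα : 0 < α) :
    Integrable (fun t : ℝ => |t| ^ α * Real.exp (-t ^ 2)) ∧
    ∫ t : ℝ, |t| ^ α * Real.exp (-t ^ 2) = Real.Gamma ((1 + α) / 2) := by
  have h1 : ∫ t in Ioi (0 : ℝ), t ^ α * Real.exp (-t ^ (2 : ℝ)) = 1 / 2 * Real.Gamma ((α + 1) / 2) :=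
    integral_rpow_mul_exp_neg_rpow (by norm_num) (by linarith)
  have hG : 0 < Real.Gamma ((α + 1) / 2) := Real.Gamma_pos_of_pos (by linarith)
  have hval : ∫ t : ℝ, |t| ^ α * Real.exp (-t ^ 2) = Real.Gamma ((1 + α) / 2) := by
    have := integral_comp_abs (f := fun t : ℝ => t ^ α * Real.exp (-t ^ (2 : ℝ)))
    rw [h1] at this
    simp only [Real.rpow_two, sq_abs] at this
    rw [this, add_comm α 1]; ring
  refine ⟨?_, hval⟩
  by_contra hc
  rw [integral_undef hc, add_comm] at hval
  exact hG.ne hval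

theorem gauss_n (n : ℕ) (α : ℝ) (hα : 0 < α) (e : EuclideanSpace ℝ (Fin (n + 1))) (he : ‖e‖ = 1) :
    Integrable (fun z : EuclideanSpace ℝ (Fin (n + 1)) => |inner ℝ e z| ^ α * Real.exp (-‖z‖ ^ 2)) ∧
    ∫ z : EuclideanSpace ℝ (Fin (n + 1)), |inner ℝ e z| ^ α * Real.exp (-‖z‖ ^ 2) =
      Real.Gamma ((1 + α) / 2) * Real.pi ^ ((n : ℝ) / 2) := by
  classical
  obtain ⟨hi, hv⟩ := gauss_one α hα
  let φ : Fin (n + 1) → ℝ → ℝ := fun i t => (if i = 0 then |t| ^ α else 1) * Real.exp (-t ^ 2)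
  have hφi : ∀ i, Integrable (φ i) := by
    intro i
    by_cases h : i = 0
    · simpa [φ, h] using hi
    · have := integrable_exp_neg_mul_sq (b := 1) one_pos
      simpa [φ, h] using this
  have hφv0 : ∫ t, φ 0 t = Real.Gamma ((1 + α) / 2) := by simpa [φ] using hv
  have hφv1 : ∀ i : Fin n, ∫ t, φ i.succ t = Real.sqrt Real.pi := by
    intro i
    have := integral_gaussian 1
    simpa [φ, Fin.succ_ne_zero] using this
  let f0 : EuclideanSpace ℝ (Fin (n + 1)) → ℝ := fun z => |z 0| ^ α * Real.exp (-‖z‖ ^ 2)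
  have hf0 : ∀ z, f0 z = ∏ i, φ i (z i) := by
    intro z
    simp only [f0, φ, Finset.prod_mul_distrib]
    congr 1
    · rw [Finset.prod_ite_eq' Finset.univ (0 : Fin (n+1)) (fun i => |z i| ^ α)]; simp
    · rw [← Real.exp_sum, EuclideanSpace.norm_sq_eq]; simp
  have hmp := PiLp.volume_preserving_ofLp (Fin (n + 1))
  have hprod : Integrable (fun z : Fin (n + 1) → ℝ => ∏ i, φ i (z i)) :=
    Integrable.fintype_prod hφi
  have hf0eq : f0 = (fun z : Fin (n + 1) → ℝ => ∏ i, φ i (z i)) ∘ (@WithLp.ofLp 2 (Fin (n+1) → ℝ)) := by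
    funext z; exact hf0 z
  have hemb : MeasurableEmbedding (@WithLp.ofLp 2 (Fin (n+1) → ℝ)) :=
    (MeasurableEquiv.toLp 2 (Fin (n+1) → ℝ)).symm.measurableEmbedding
  have hf0i : Integrable f0 := by
    rw [hf0eq]; exact (hmp.integrable_comp_emb hemb).2 hprod
  have hf0v : ∫ z, f0 z = Real.Gamma ((1 + α) / 2) * Real.pi ^ ((n : ℝ) / 2) := by
    rw [hf0eq]
    simp only [Function.comp_def]
    rw [hmp.integral_comp hemb (fun z : Fin (n + 1) → ℝ => ∏ i, φ i (z i)),
      integral_fintype_prod_volume_eq_prod, Fin.prod_univ_succ, hφv0]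
    simp only [hφv1, Finset.prod_const, Finset.card_univ, Fintype.card_fin]
    rw [Real.sqrt_eq_rpow, ← Real.rpow_mul_natCast Real.pi_pos.le]
    congr 2; ring
  let e0 : EuclideanSpace ℝ (Fin (n + 1)) := EuclideanSpace.single 0 1
  have he0 : ‖e‖ = ‖e0‖ := by simp [e0, he]
  let ρ := (Submodule.span ℝ {e - e0})ᗮ.reflection
  have hρ : ρ e = e0 := Submodule.reflection_sub he0
  have hρmp : MeasurePreserving ρ := ρ.measurePreserving
  have hρe : MeasurableEmbedding ρ := ρ.toHomeomorph.measurableEmbedding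
  have hfe : (fun z : EuclideanSpace ℝ (Fin (n + 1)) => |inner ℝ e z| ^ α * Real.exp (-‖z‖ ^ 2)) =
      f0 ∘ ρ := by
    funext z
    have : inner ℝ e z = (ρ z) 0 := by
      rw [← ρ.inner_map_map e z, hρ]
      simp [e0, EuclideanSpace.inner_single_left]
    simp only [Function.comp, f0, this, ρ.norm_map]
  constructor
  · rw [hfe]; exact (hρmp.integrable_comp_emb hρe).2 hf0i
  · rw [hfe]; simp only [Function.comp_def]
    rw [hρmp.integral_comp hρe f0, hf0v]

theorem sphere_const (n : ℕ) (hn : 1 ≤ n) (α : ℝ) (hα : 0 < α) (e : EuclideanSpace ℝ (Fin n))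
    (he : ‖e‖ = 1) :
    ∫ θ : sphere (0 : EuclideanSpace ℝ (Fin n)) 1, |inner ℝ e (θ : EuclideanSpace ℝ (Fin n))| ^ α
      ∂(volume : Measure (EuclideanSpace ℝ (Fin n))).toSphere =
    2 * (Real.pi ^ (((n : ℝ) - 1) / 2) *
      (Real.Gamma ((1 + α) / 2) / Real.Gamma ((n + α) / 2))) := by
  obtain ⟨m, rfl⟩ : ∃ m, n = m + 1 := ⟨n - 1, by omega⟩
  obtain ⟨hi, hv⟩ := gauss_n m α hα e he
  obtain ⟨-, hp⟩ := polar volume _ hi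
  rw [hv] at hp
  have hG : 0 < Real.Gamma ((m + 1 + α) / 2) := Real.Gamma_pos_of_pos (by positivity)
  have h1 : ∫ t in Ioi (0 : ℝ), t ^ (m + α) * Real.exp (-t ^ (2 : ℝ)) =
      1 / 2 * Real.Gamma ((m + α + 1) / 2) :=
    integral_rpow_mul_exp_neg_rpow (by norm_num) (by linarith [(Nat.cast_nonneg m : (0:ℝ) ≤ m)])
  have hin : ∀ θ : sphere (0 : EuclideanSpace ℝ (Fin (m + 1))) 1,
      ∫ τ in Ioi (0 : ℝ), τ ^ (Module.finrank ℝ (EuclideanSpace ℝ (Fin (m + 1))) - 1) *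
        (|inner ℝ e (τ • (θ : EuclideanSpace ℝ (Fin (m+1))))| ^ α *
          Real.exp (-‖τ • (θ : EuclideanSpace ℝ (Fin (m+1)))‖ ^ 2)) =
      |inner ℝ e (θ : EuclideanSpace ℝ (Fin (m+1)))| ^ α *
        (1 / 2 * Real.Gamma ((m + α + 1) / 2)) := by
    intro θ
    rw [← h1, ← integral_const_mul]
    refine setIntegral_congr_fun measurableSet_Ioi fun τ hτ => ?_
    have hτ : 0 < τ := hτ
    have hθ : ‖(θ : EuclideanSpace ℝ (Fin (m+1)))‖ = 1 := by simpa using θ.2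
    simp only [finrank_euclideanSpace, Fintype.card_fin, Nat.add_sub_cancel, inner_smul_right,
      norm_smul, hθ, mul_one, Real.norm_eq_abs, sq_abs, Real.rpow_two, abs_mul, abs_of_pos hτ]
    rw [Real.mul_rpow hτ.le (abs_nonneg _), Real.rpow_add hτ, Real.rpow_natCast]
    ring
  simp_rw [hin] at hp
  rw [integral_mul_const] at hp
  have hm : (((m + 1 : ℕ) : ℝ) - 1) / 2 = (m : ℝ) / 2 := by push_cast; ring
  have hm' : ((m : ℝ) + α + 1) / 2 = (m + 1 + α) / 2 := by ring
  rw [hm]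
  rw [hm'] at hp
  push_cast
  field_simp
  field_simp at hp
  linarith

end

end FHSM

namespace FHSM

section

/-- The truncated one-dimensional integral. -/
noncomputable def A (α ε t : ℝ) : ℝ :=
  ∫ s in Ioo ε 1, ((1 + t * s) ^ (α - 1) + (1 - t * s) ^ (α - 1)
    - 2 * (1 - s ^ 2) ^ ((α - 1) / 2)) * s ^ (-1 - α)

theorem contOn_half {α ε t : ℝ} (hα1 : 1 < α) (hε : 0 < ε) :
    ContinuousOn (fun s : ℝ => ((1 + t * s) ^ (α - 1) - (1 - s ^ 2) ^ ((α - 1) / 2)) * s ^ (-1 - α))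
      (Icc ε 1) := by
  have hs : ∀ s ∈ Icc ε 1, s ≠ 0 := fun s hs => (hε.trans_le hs.1).ne'
  refine ContinuousOn.mul (ContinuousOn.sub ?_ ?_) ?_
  · exact ContinuousOn.rpow_const (by fun_prop) fun s _ => Or.inr (by linarith)
  · exact ContinuousOn.rpow_const (by fun_prop) fun s _ => Or.inr (by linarith)
  · exact ContinuousOn.rpow_const (by fun_prop) fun s h => Or.inl (hs s h)

theorem contOn_full {α ε t : ℝ} (hα1 : 1 < α) (hε : 0 < ε) :
    ContinuousOn (fun s : ℝ => ((1 + t * s) ^ (α - 1) + (1 - t * s) ^ (α - 1)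
      - 2 * (1 - s ^ 2) ^ ((α - 1) / 2)) * s ^ (-1 - α)) (Icc ε 1) := by
  have h := (contOn_half (t := t) hα1 hε).add (contOn_half (t := -t) hα1 hε)
  refine h.congr fun s _ => ?_
  simp only [Pi.add_apply]
  rw [neg_mul, ← sub_eq_add_neg]
  ring

theorem intOn_half {α ε t : ℝ} (hα1 : 1 < α) (hε : 0 < ε) :
    IntegrableOn (fun s : ℝ => ((1 + t * s) ^ (α - 1) - (1 - s ^ 2) ^ ((α - 1) / 2)) * s ^ (-1 - α))
      (Ioo ε 1) :=
  ((contOn_half hα1 hε).integrableOn_compact isCompact_Icc).mono_set Ioo_subset_Icc_self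

theorem intOn_full {α ε t : ℝ} (hα1 : 1 < α) (hε : 0 < ε) :
    IntegrableOn (fun s : ℝ => ((1 + t * s) ^ (α - 1) + (1 - t * s) ^ (α - 1)
      - 2 * (1 - s ^ 2) ^ ((α - 1) / 2)) * s ^ (-1 - α)) (Ioo ε 1) :=
  ((contOn_full hα1 hε).integrableOn_compact isCompact_Icc).mono_set Ioo_subset_Icc_self

theorem A_split {α ε t : ℝ} (hα1 : 1 < α) (hε : 0 < ε) :
    (∫ s in Ioo ε 1, ((1 + t * s) ^ (α - 1) - (1 - s ^ 2) ^ ((α - 1) / 2)) * s ^ (-1 - α)) +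
    (∫ s in Ioo ε 1, ((1 + (-t) * s) ^ (α - 1) - (1 - s ^ 2) ^ ((α - 1) / 2)) * s ^ (-1 - α))
      = A α ε t := by
  rw [← integral_add (intOn_half hα1 hε) (intOn_half hα1 hε), A]
  refine integral_congr_ae (.of_forall fun s => ?_)
  simp only
  rw [neg_mul, ← sub_eq_add_neg]
  ring

theorem slack_fun {β : ℝ} (h0 : 0 < β) (h1 : β < 1) :
    AntitoneOn (fun y : ℝ => (1 + y) ^ β + (1 - y) ^ β + β * (1 - β) / 2 * y ^ 2) (Icc 0 1) := by
  refine antitoneOn_of_deriv_nonpos (convex_Icc 0 1) ?_ ?_ ?_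
  · refine ContinuousOn.add (ContinuousOn.add ?_ ?_) (by fun_prop)
    · exact ContinuousOn.rpow_const (by fun_prop) fun s _ => Or.inr h0.le
    · exact ContinuousOn.rpow_const (by fun_prop) fun s _ => Or.inr h0.le
  all_goals
    rw [interior_Icc]
    have key : ∀ y ∈ Ioo (0:ℝ) 1, HasDerivAt
        (fun y : ℝ => (1 + y) ^ β + (1 - y) ^ β + β * (1 - β) / 2 * y ^ 2)
        (1 * β * (1 + y) ^ (β - 1) + (-1) * β * (1 - y) ^ (β - 1) + β * (1 - β) / 2 * (2 * y)) y := by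
      intro y hy
      have e1 : HasDerivAt (fun y : ℝ => (1 + y) ^ β) (1 * β * (1 + y) ^ (β - 1)) y :=
        ((hasDerivAt_id y).const_add 1).rpow_const (Or.inl (by have := hy.1; simp; linarith))
      have e2 : HasDerivAt (fun y : ℝ => (1 - y) ^ β) ((-1) * β * (1 - y) ^ (β - 1)) y :=
        ((hasDerivAt_id y).const_sub 1).rpow_const (Or.inl (by have := hy.2; simp; linarith))
      have e3 : HasDerivAt (fun y : ℝ => β * (1 - β) / 2 * y ^ 2) (β * (1 - β) / 2 * (2 * y)) y := by
        simpa using (hasDerivAt_pow 2 y).const_mul (β * (1 - β) / 2)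
      exact (e1.add e2).add e3
  · intro y hy
    exact (key y hy).differentiableAt.differentiableWithinAt
  · intro y hy
    rw [(key y hy).deriv]
    have a1 : (1 + y) ^ (β - 1) ≤ 1 :=
      Real.rpow_le_one_of_one_le_of_nonpos (by linarith [hy.1]) (by linarith)
    have a2 : 1 + (1 - β) * y ≤ (1 - y) ^ (β - 1) := by
      have hb : (1 + (-y)) ^ (1 - β) ≤ 1 + (1 - β) * (-y) :=
        rpow_one_add_le_one_add_mul_self (by linarith [hy.2]) (by linarith) (by linarith)
      have hpos : 0 < (1 - y) ^ (1 - β) := Real.rpow_pos_of_pos (by linarith [hy.2]) _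
      have : (1 - y) ^ (β - 1) = ((1 - y) ^ (1 - β))⁻¹ := by
        rw [← Real.rpow_neg (by linarith [hy.2])]; congr 1; ring
      rw [this, le_inv_comm₀ (by nlinarith [hy.1]) hpos]
      rw [← sub_eq_add_neg] at hb
      refine hb.trans ?_
      rw [← one_div, le_div_iff₀ (by nlinarith [hy.1])]
      nlinarith [sq_nonneg ((1 - β) * y)]
    nlinarith [hy.1]

theorem slack {α s t : ℝ} (hα1 : 1 < α) (hα2 : α < 2) (hs0 : 0 ≤ s) (hs1 : s ≤ 1) (ht : |t| ≤ 1) :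
    (1 + s) ^ (α - 1) + (1 - s) ^ (α - 1) + (α - 1) * (2 - α) / 2 * ((1 - t ^ 2) * s ^ 2) ≤
    (1 + t * s) ^ (α - 1) + (1 - t * s) ^ (α - 1) := by
  have h := slack_fun (β := α - 1) (by linarith) (by linarith)
  have h2 := h (a := |t| * s) (b := s) ⟨by positivity, by nlinarith⟩ ⟨hs0, hs1⟩ (by nlinarith)
  simp only at h2
  rw [mul_pow, sq_abs] at h2
  have h3 : (1 + |t| * s) ^ (α - 1) + (1 - |t| * s) ^ (α - 1) =
      (1 + t * s) ^ (α - 1) + (1 - t * s) ^ (α - 1) := by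
    rcases abs_choice t with h | h <;> rw [h]
    rw [neg_mul, ← sub_eq_add_neg, sub_neg_eq_add, add_comm]
  rw [h3] at h2
  nlinarith

theorem A_slack {α ε t : ℝ} (hα1 : 1 < α) (hα2 : α < 2) (hε : 0 < ε) (hε2 : ε ≤ 1 / 2)
    (ht : |t| ≤ 1) : A α ε 1 + (α - 1) * (2 - α) / 4 * (1 - t ^ 2) ≤ A α ε t := by
  have ht2 : 0 ≤ 1 - t ^ 2 := by
    have := (sq_le_one_iff_abs_le_one t).2 ht; linarith
  set C : ℝ := (α - 1) * (2 - α) / 2 * (1 - t ^ 2) with hC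
  have hC0 : 0 ≤ C := by
    have : 0 ≤ (α - 1) * (2 - α) := mul_nonneg (by linarith) (by linarith)
    positivity
  have hind : IntegrableOn (fun s : ℝ => C * (Ioo (1/2:ℝ) 1).indicator 1 s) (Ioo ε 1) := by
    refine Integrable.integrableOn ?_
    refine Integrable.const_mul ?_ _
    rw [integrable_indicator_iff measurableSet_Ioo]
    exact integrableOn_const (by simp) (by simp)
  have hval : ∫ s in Ioo ε 1, C * (Ioo (1/2:ℝ) 1).indicator 1 s = C / 2 := by
    rw [integral_const_mul, setIntegral_indicator measurableSet_Ioo]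
    have : Ioo ε 1 ∩ Ioo (1/2:ℝ) 1 = Ioo (1/2) 1 := by
      apply inter_eq_right.2; exact Ioo_subset_Ioo_left hε2
    rw [this]; simp; norm_num; ring
  have hle : (∫ s in Ioo ε 1, (((1 + 1 * s) ^ (α - 1) + (1 - 1 * s) ^ (α - 1)
    - 2 * (1 - s ^ 2) ^ ((α - 1) / 2)) * s ^ (-1 - α) + C * (Ioo (1/2:ℝ) 1).indicator 1 s)) ≤
      A α ε t := by
    refine setIntegral_mono_on ((intOn_full hα1 hε).add hind) (intOn_full hα1 hε)
      measurableSet_Ioo fun s hs => ?_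
    have hs0 : 0 < s := hε.trans hs.1
    have h1 := slack hα1 hα2 hs0.le hs.2.le ht
    have hp : 0 < s ^ (-1 - α) := Real.rpow_pos_of_pos hs0 _
    have hq : (Ioo (1/2:ℝ) 1).indicator 1 s ≤ s ^ 2 * s ^ (-1 - α) := by
      have : s ^ 2 * s ^ (-1 - α) = s ^ (1 - α) := by
        rw [← Real.rpow_two, ← Real.rpow_add hs0]; congr 1; ring
      rw [this]
      have h1 : 1 ≤ s ^ (1 - α) := Real.one_le_rpow_of_pos_of_le_one_of_nonpos hs0 hs.2.le (by linarith)
      refine le_trans ?_ h1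
      exact indicator_le_self' (by simp) s |>.trans (by simp)
    have h2 := mul_le_mul_of_nonneg_left hq hC0
    have h3 := mul_le_mul_of_nonneg_right h1 hp.le
    have h4 : (α - 1) * (2 - α) / 2 * ((1 - t ^ 2) * s ^ 2) = C * s ^ 2 := by rw [hC]; ring
    rw [h4] at h3
    rw [one_mul]
    linarith
  rw [integral_add (intOn_full hα1 hε) hind, hval] at hle
  have : A α ε 1 + C / 2 ≤ A α ε t := hle
  calc _ = A α ε 1 + C / 2 := by rw [hC]; ring
    _ ≤ _ := this

end

end FHSM

namespace FHSM

section

theorem beta_real {a b : ℝ} (ha : 0 < a) (hb : 0 < b) :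
    IntegrableOn (fun x : ℝ => x ^ (a - 1) * (1 - x) ^ (b - 1)) (Ioo 0 1) ∧
    ∫ x in Ioo (0:ℝ) 1, x ^ (a - 1) * (1 - x) ^ (b - 1) =
      Real.Gamma a * Real.Gamma b / Real.Gamma (a + b) := by
  have hc := Complex.betaIntegral_convergent (u := a) (v := b) (by simpa) (by simpa)
  have hv := Complex.betaIntegral_eq_Gamma_mul_div a b (by simpa) (by simpa)
  rw [Complex.betaIntegral, intervalIntegral.integral_of_le zero_le_one, integral_Ioc_eq_integral_Ioo] at hv
  rw [intervalIntegrable_iff_integrableOn_Ioo_of_le zero_le_one] at hc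
  have hcongr : EqOn (fun x : ℝ => ((x : ℂ) ^ ((a : ℂ) - 1) * (1 - (x : ℂ)) ^ ((b : ℂ) - 1)))
      (fun x : ℝ => ((x ^ (a - 1) * (1 - x) ^ (b - 1) : ℝ) : ℂ)) (Ioo 0 1) := by
    intro x hx
    simp only
    rw [Complex.ofReal_mul, Complex.ofReal_cpow hx.1.le, Complex.ofReal_cpow (by linarith [hx.2])]
    push_cast
    rfl
  rw [setIntegral_congr_fun measurableSet_Ioo hcongr, integral_complex_ofReal] at hv
  rw [integrableOn_congr_fun hcongr measurableSet_Ioo] at hc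
  constructor
  · have := Integrable.re hc
    simpa [IntegrableOn] using this
  · rw [← Complex.ofReal_add, Complex.Gamma_ofReal, Complex.Gamma_ofReal, Complex.Gamma_ofReal] at hv
    exact_mod_cast hv

theorem beta_sq {α : ℝ} (hα1 : 1 < α) (hα2 : α < 2) :
    IntegrableOn (fun s : ℝ => s ^ (1 - α) * (1 - s ^ 2) ^ ((α - 1) / 2 - 1)) (Ioo 0 1) ∧
    2 * (α - 1) * ∫ s in Ioo (0:ℝ) 1, s ^ (1 - α) * (1 - s ^ 2) ^ ((α - 1) / 2 - 1) =
      eulerBeta ((1 + α) / 2) ((2 - α) / 2) := by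
  set p := (α - 1) / 2 with hp
  have hp0 : 0 < p := by rw [hp]; linarith
  set a := 1 - α / 2 with ha
  have ha0 : 0 < a := by rw [ha]; linarith
  obtain ⟨hi, hv⟩ := beta_real ha0 hp0
  have himg : (fun s : ℝ => s ^ 2) '' Ioo 0 1 = Ioo 0 1 := by
    ext y; constructor
    · rintro ⟨s, hs, rfl⟩
      exact ⟨by have := hs.1; positivity, by nlinarith [hs.1, hs.2]⟩
    · intro hy
      refine ⟨Real.sqrt y, ⟨Real.sqrt_pos.2 hy.1, ?_⟩, Real.sq_sqrt hy.1.le⟩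
      rw [Real.sqrt_lt' one_pos]; simpa using hy.2
  have hder : ∀ s ∈ Ioo (0:ℝ) 1, HasDerivWithinAt (fun s : ℝ => s ^ 2) (2 * s) (Ioo 0 1) s := by
    intro s _; simpa using (hasDerivAt_pow 2 s).hasDerivWithinAt
  have hinj : InjOn (fun s : ℝ => s ^ 2) (Ioo 0 1) := by
    intro x hx y hy h
    exact (pow_left_inj₀ hx.1.le hy.1.le (by norm_num)).1 h
  have hcong : EqOn (fun s : ℝ => |2 * s| • ((s ^ 2) ^ (a - 1) * (1 - s ^ 2) ^ (p - 1)))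
      (fun s => 2 * (s ^ (1 - α) * (1 - s ^ 2) ^ (p - 1))) (Ioo 0 1) := by
    intro s hs
    have hs0 : 0 < s := hs.1
    simp only [smul_eq_mul]
    rw [abs_of_pos (by positivity), ← Real.rpow_two, ← Real.rpow_mul hs0.le]
    have : s ^ (1 - α) = s * s ^ (2 * (a - 1)) := by
      rw [← Real.rpow_one_add' hs0.le (by rw [ha]; intro h; linarith)]; congr 1; rw [ha]; ring
    rw [this]; ring
  have h1 := integral_image_eq_integral_abs_deriv_smul measurableSet_Ioo hder hinj
    (fun x => x ^ (a - 1) * (1 - x) ^ (p - 1))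
  have h2 := integrableOn_image_iff_integrableOn_abs_deriv_smul measurableSet_Ioo hder hinj
    (fun x => x ^ (a - 1) * (1 - x) ^ (p - 1))
  rw [himg] at h1 h2
  rw [h2, integrableOn_congr_fun hcong measurableSet_Ioo] at hi
  rw [hv, setIntegral_congr_fun measurableSet_Ioo hcong, integral_const_mul] at h1
  constructor
  · have := hi.const_mul (1/2 : ℝ)
    refine this.congr (.of_forall fun s => ?_)
    simp only; ring
  · have e1 : Real.Gamma ((1 + α) / 2) = p * Real.Gamma p := by
      rw [← Real.Gamma_add_one hp0.ne']; congr 1; rw [hp]; ring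
    have e2 : (1 + α) / 2 + (2 - α) / 2 = (a + p) + 1 := by rw [ha, hp]; ring
    have e3 : a + p = 1 / 2 := by rw [ha, hp]; ring
    have e4 : (2 - α) / 2 = a := by rw [ha]; ring
    rw [eulerBeta, e2, Real.Gamma_add_one (by rw [e3]; norm_num), e1, e4]
    have hαp : α - 1 = 2 * p := by rw [hp]; ring
    rw [hαp]
    have : 2 * (2 * p) * ∫ s in Ioo (0:ℝ) 1, s ^ (1 - α) * (1 - s ^ 2) ^ (p - 1) =
        2 * p * (Real.Gamma a * Real.Gamma p / Real.Gamma (a + p)) := by rw [h1]; ring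
    rw [this, e3]
    have hG : Real.Gamma (1 / 2) ≠ 0 := (Real.Gamma_pos_of_pos (by norm_num)).ne'
    field_simp

theorem A_lower {α ε : ℝ} (hα1 : 1 < α) (hα2 : α < 2) (hε : 0 < ε) (hε1 : ε < 1) :
    (2 * (α - 1) * (∫ s in Ioo ε 1, s ^ (1 - α) * (1 - s ^ 2) ^ ((α - 1) / 2 - 1)) - 2 ^ α) / α
      ≤ A α ε 1 := by
  set p := (α - 1) / 2 with hp
  have hp0 : 0 < p := by rw [hp]; linarith
  have hα0 : 0 < α := by linarith
  obtain ⟨hi0, -⟩ := beta_sq hα1 hα2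
  rw [← hp] at hi0
  have hi : IntegrableOn (fun s : ℝ => s ^ (1 - α) * (1 - s ^ 2) ^ (p - 1)) (Ioo ε 1) :=
    hi0.mono_set (Ioo_subset_Ioo_left hε.le)
  let Φ : ℝ → ℝ := fun s => -(1/α) * ((1 + s⁻¹) ^ α + (s⁻¹ - 1) ^ α) + 2 / α * (s ^ (-α) * (1 - s ^ 2) ^ p)
  let φ : ℝ → ℝ := fun s => ((1 + 1 * s) ^ (α - 1) + (1 - 1 * s) ^ (α - 1)
    - 2 * (1 - s ^ 2) ^ ((α - 1) / 2)) * s ^ (-1 - α) -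
      2 * (α - 1) / α * (s ^ (1 - α) * (1 - s ^ 2) ^ (p - 1))
  have hφi : IntegrableOn φ (Ioo ε 1) := (intOn_full hα1 hε).sub (hi.const_mul _)
  have hne : ∀ s ∈ Icc ε 1, s ≠ 0 := fun s hs => (hε.trans_le hs.1).ne'
  have hcont : ContinuousOn Φ (Icc ε 1) := by
    have hinv : ContinuousOn (fun s : ℝ => s⁻¹) (Icc ε 1) := continuousOn_inv₀.mono hne
    refine ContinuousOn.add (ContinuousOn.mul continuousOn_const (ContinuousOn.add ?_ ?_))
      (ContinuousOn.mul continuousOn_const (ContinuousOn.mul ?_ ?_))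
    · exact ContinuousOn.rpow_const (continuousOn_const.add hinv) fun s _ => Or.inr hα0.le
    · exact ContinuousOn.rpow_const (hinv.sub continuousOn_const) fun s _ => Or.inr hα0.le
    · exact ContinuousOn.rpow_const (by fun_prop) fun s h => Or.inl (hne s h)
    · exact ContinuousOn.rpow_const (by fun_prop) fun s _ => Or.inr hp0.le
  have hderiv : ∀ s ∈ Ioo ε 1, HasDerivAt Φ (φ s) s := by
    intro s hs
    have hs0 : 0 < s := hε.trans hs.1
    have hs1 : s < 1 := hs.2
    have h1s : 1 < s⁻¹ := (one_lt_inv₀ hs0).2 hs1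
    have hsq : 0 < 1 - s ^ 2 := by nlinarith
    have d0 : HasDerivAt (fun s : ℝ => s⁻¹) (-(s ^ 2)⁻¹) s := hasDerivAt_inv hs0.ne'
    have d1 := (d0.const_add 1).rpow_const (p := α) (Or.inl (by positivity))
    have d2 := (d0.sub_const 1).rpow_const (p := α) (Or.inl (by linarith))
    have d3 := (hasDerivAt_id s).rpow_const (p := -α) (Or.inl hs0.ne')
    have d4 := ((hasDerivAt_pow 2 s).const_sub 1).rpow_const (p := p) (Or.inl hsq.ne')
    have d := ((d1.add d2).const_mul (-(1/α))).add ((d3.mul d4).const_mul (2/α))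
    refine d.congr_deriv ?_
    have e1 : (1 + s⁻¹) ^ (α - 1) = (1 + s) ^ (α - 1) * s ^ (-1 - α) * s ^ 2 := by
      have : 1 + s⁻¹ = (1 + s) * s⁻¹ := by field_simp; ring
      rw [this, Real.mul_rpow (by positivity) (by positivity), Real.inv_rpow hs0.le,
        ← Real.rpow_neg hs0.le, mul_assoc, ← Real.rpow_two, ← Real.rpow_add hs0]
      congr 2; ring
    have e2 : (s⁻¹ - 1) ^ (α - 1) = (1 - s) ^ (α - 1) * s ^ (-1 - α) * s ^ 2 := by
      have : s⁻¹ - 1 = (1 - s) * s⁻¹ := by field_simp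
      rw [this, Real.mul_rpow (by linarith) (by positivity), Real.inv_rpow hs0.le,
        ← Real.rpow_neg hs0.le, mul_assoc, ← Real.rpow_two, ← Real.rpow_add hs0]
      congr 2; ring
    have e3 : s ^ (-α - 1) = s ^ (-1 - α) := by congr 1; ring
    have e4 : s ^ (-α) = s ^ (-1 - α) * s := by
      rw [← Real.rpow_add_one hs0.ne']; congr 1; ring
    have e5 : s ^ (1 - α) = s ^ (-1 - α) * s * s := by
      rw [← Real.rpow_add_one hs0.ne', ← Real.rpow_add_one hs0.ne']; congr 1; ring
    simp only [id, φ]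
    rw [e1, e2, e3, e4, e5, ← hp, one_mul, hp]
    field_simp
    ring
  have hftc := intervalIntegral.integral_eq_sub_of_hasDerivAt_of_le hε1.le hcont hderiv
    ((intervalIntegrable_iff_integrableOn_Ioo_of_le hε1.le).2 hφi)
  rw [intervalIntegral.integral_of_le hε1.le, integral_Ioc_eq_integral_Ioo] at hftc
  have hsplit : ∫ s in Ioo ε 1, φ s = A α ε 1 -
      2 * (α - 1) / α * ∫ s in Ioo ε 1, (s ^ (1 - α) * (1 - s ^ 2) ^ (p - 1)) := by
    rw [integral_sub (intOn_full hα1 hε) (hi.const_mul _), integral_const_mul, A]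
  have hΦ1 : Φ 1 = - 2 ^ α / α := by
    simp only [Φ]
    norm_num
    rw [Real.zero_rpow hα0.ne', Real.zero_rpow hp0.ne']
    field_simp; ring
  have hΦε : Φ ε ≤ 0 := by
    have hinv : 1 < ε⁻¹ := (one_lt_inv₀ hε).2 hε1
    have hm1 : 1 + ε⁻¹ ∈ Ici (0:ℝ) := by rw [mem_Ici]; positivity
    have hm2 : ε⁻¹ - 1 ∈ Ici (0:ℝ) := by rw [mem_Ici]; linarith
    have hconv := (convexOn_rpow hα1.le).2 hm1 hm2 (by norm_num : (0:ℝ) ≤ 1/2)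
      (by norm_num : (0:ℝ) ≤ 1/2) (by norm_num)
    simp only [smul_eq_mul] at hconv
    have : 1 / 2 * (1 + ε⁻¹) + 1 / 2 * (ε⁻¹ - 1) = ε⁻¹ := by ring
    rw [this, Real.inv_rpow hε.le, ← Real.rpow_neg hε.le] at hconv
    have h2 : (1 - ε ^ 2) ^ p ≤ 1 := Real.rpow_le_one (by nlinarith) (by nlinarith) hp0.le
    have h3 : ε ^ (-α) * (1 - ε ^ 2) ^ p ≤ ε ^ (-α) := by
      have : 0 < ε ^ (-α) := Real.rpow_pos_of_pos hε _
      nlinarith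
    have : Φ ε = (1/α) * (2 * (ε ^ (-α) * (1 - ε ^ 2) ^ p) - ((1 + ε⁻¹) ^ α + (ε⁻¹ - 1) ^ α)) := by
      simp only [Φ]; ring
    rw [this]
    exact mul_nonpos_of_nonneg_of_nonpos (by positivity) (by linarith)
  rw [hsplit, hΦ1] at hftc
  have : A α ε 1 = 2 * (α - 1) / α * (∫ s in Ioo ε 1, (s ^ (1 - α) * (1 - s ^ 2) ^ (p - 1)))
    - 2 ^ α / α - Φ ε := by rw [neg_div] at hftc; linarith
  rw [this]
  have e : (2 * (α - 1) * (∫ s in Ioo ε 1, (s ^ (1 - α) * (1 - s ^ 2) ^ (p - 1))) - 2 ^ α) / α =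
    2 * (α - 1) / α * (∫ s in Ioo ε 1, (s ^ (1 - α) * (1 - s ^ 2) ^ (p - 1))) - 2 ^ α / α := by ring
  rw [e]; linarith

/-- Lower bound sequence for `A` converging to the sharp constant. -/
theorem A_lim {α : ℝ} (hα1 : 1 < α) (hα2 : α < 2) :
    ∃ a : ℕ → ℝ, (∀ k, a k ≤ A α (1 / ((k : ℝ) + 2)) 1) ∧
      Tendsto a atTop (𝓝 ((eulerBeta ((1 + α) / 2) ((2 - α) / 2) - 2 ^ α) / α)) := by
  obtain ⟨hi, hv⟩ := beta_sq hα1 hα2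
  refine ⟨fun k => (2 * (α - 1) * (∫ s in Ioo (1 / ((k : ℝ) + 2)) 1,
    s ^ (1 - α) * (1 - s ^ 2) ^ ((α - 1) / 2 - 1)) - 2 ^ α) / α, fun k => ?_, ?_⟩
  · refine A_lower hα1 hα2 (by positivity) ?_
    rw [div_lt_one (by positivity)]; linarith [(Nat.cast_nonneg k : (0:ℝ) ≤ k)]
  · rw [← hv]
    have hU : (⋃ k : ℕ, Ioo (1 / ((k : ℝ) + 2)) 1) = Ioo (0:ℝ) 1 := by
      ext x; simp only [mem_iUnion, mem_Ioo]; constructor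
      · rintro ⟨k, h1, h2⟩
        exact ⟨lt_trans (by positivity) h1, h2⟩
      · rintro ⟨h1, h2⟩
        obtain ⟨k, hk⟩ := exists_nat_one_div_lt h1
        refine ⟨k, lt_of_le_of_lt ?_ hk, h2⟩
        gcongr; norm_num
    have ht := tendsto_setIntegral_of_monotone (μ := volume)
      (f := fun s : ℝ => s ^ (1 - α) * (1 - s ^ 2) ^ ((α - 1) / 2 - 1))
      (s := fun k : ℕ => Ioo (1 / ((k : ℝ) + 2)) (1:ℝ)) (fun k => measurableSet_Ioo)
      (by
        intro i j hij
        refine Ioo_subset_Ioo_left ?_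
        have : (i:ℝ) ≤ j := by exact_mod_cast hij
        gcongr) (by rw [hU]; exact hi)
    rw [hU] at ht
    exact ((ht.const_mul _).sub_const _).div_const _

end

end FHSM

namespace FHSM

section

theorem chord {α p ε R t δ : ℝ} (hp : 2 * p = α - 1) (hR : 0 < R) (ht : |t| < 1)
    (hδ : δ = R ^ 2 * (1 - t ^ 2)) (hε : 0 < ε) :
    MeasurableSet {τ : ℝ | 0 < τ ∧ 0 < δ - 2 * (R * t) * τ - τ ^ 2 ∧
      δ * (δ - 2 * (R * t) * τ - τ ^ 2) < (1 - ε ^ 2) * (δ - R * t * τ) ^ 2} ∧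
    ∫ τ in {τ : ℝ | 0 < τ ∧ 0 < δ - 2 * (R * t) * τ - τ ^ 2 ∧
      δ * (δ - 2 * (R * t) * τ - τ ^ 2) < (1 - ε ^ 2) * (δ - R * t * τ) ^ 2},
      (δ ^ p - (δ - 2 * (R * t) * τ - τ ^ 2) ^ p) * τ ^ (-1 - α) =
    δ ^ (p - α) * R ^ α *
      ∫ s in Ioo ε 1, ((1 + t * s) ^ (α - 1) - (1 - s ^ 2) ^ p) * s ^ (-1 - α) := by
  have htt := abs_lt.1 ht
  have hδ0 : 0 < δ := by rw [hδ]; have : 0 < 1 - t ^ 2 := by nlinarith [htt.1, htt.2]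
                         positivity
  have hq : ∀ s ∈ Ioo ε 1, 0 < 1 + t * s := by
    intro s hs
    have : 0 < s := hε.trans hs.1
    nlinarith [hs.2, htt.1]
  set S := {τ : ℝ | 0 < τ ∧ 0 < δ - 2 * (R * t) * τ - τ ^ 2 ∧
      δ * (δ - 2 * (R * t) * τ - τ ^ 2) < (1 - ε ^ 2) * (δ - R * t * τ) ^ 2} with hS
  let T : ℝ → ℝ := fun s => δ / R * (s / (1 + t * s))
  have hc : ∀ s ∈ Ioo ε 1, δ - R * t * T s = δ / (1 + t * s) := by
    intro s hs
    have := (hq s hs).ne'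
    simp only [T]; field_simp; ring
  have hid : ∀ τ, (δ - R * t * τ) ^ 2 - δ * (δ - 2 * (R * t) * τ - τ ^ 2) = R ^ 2 * τ ^ 2 := by
    intro τ; rw [hδ]; ring
  have hw : ∀ s ∈ Ioo ε 1, δ - 2 * (R * t) * T s - (T s) ^ 2 = δ * (1 - s ^ 2) / (1 + t * s) ^ 2 := by
    intro s hs
    have hne := (hq s hs).ne'
    have h1 := hid (T s)
    rw [hc s hs] at h1
    have h2 : R ^ 2 * (T s) ^ 2 = δ ^ 2 * s ^ 2 / (1 + t * s) ^ 2 := by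
      simp only [T]; field_simp
    rw [h2] at h1
    have h3 : δ * (δ - 2 * (R * t) * T s - (T s) ^ 2) = δ * (δ * (1 - s ^ 2) / (1 + t * s) ^ 2) := by
      have : δ * (δ - 2 * (R * t) * T s - (T s) ^ 2) =
        (δ / (1 + t * s)) ^ 2 - δ ^ 2 * s ^ 2 / (1 + t * s) ^ 2 := by linarith
      rw [this]; field_simp
    exact mul_left_cancel₀ hδ0.ne' h3
  have himg : T '' Ioo ε 1 = S := by
    ext τ; constructor
    · rintro ⟨s, hs, rfl⟩
      have hs0 : 0 < s := hε.trans hs.1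
      have hq0 := hq s hs
      refine ⟨by simp only [T]; positivity, ?_, ?_⟩
      · rw [hw s hs]
        have : 0 < 1 - s ^ 2 := by nlinarith [hs.2]
        positivity
      · rw [hw s hs, hc s hs, div_pow, mul_div_assoc', mul_div_assoc']
        have : ε ^ 2 < s ^ 2 := by nlinarith [hs.1]
        apply div_lt_div_of_pos_right _ (by positivity)
        have : 0 < δ ^ 2 := by positivity
        nlinarith
    · rintro ⟨h0, h1, h2⟩
      have hcpos : 0 < δ - R * t * τ := by nlinarith
      have hi := hid τ
      set c := δ - R * t * τ with hcd
      have hs1 : R * τ < c := by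
        apply lt_of_pow_lt_pow_left₀ 2 hcpos.le; nlinarith
      have hs2 : ε * c < R * τ := by
        apply lt_of_pow_lt_pow_left₀ 2 (by positivity); nlinarith
      refine ⟨R * τ / c, ⟨by rwa [lt_div_iff₀ hcpos], by rwa [div_lt_one hcpos]⟩, ?_⟩
      have : 1 + t * (R * τ / c) = δ / c := by
        field_simp; rw [hcd]; ring
      simp only [T, this]
      field_simp
  have hder : ∀ s ∈ Ioo ε 1, HasDerivWithinAt T (δ / R * (1 / (1 + t * s) ^ 2)) (Ioo ε 1) s := by
    intro s hs
    have d1 := (hasDerivAt_id s).div (((hasDerivAt_id s).const_mul t).const_add 1) (hq s hs).ne'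
    have d := (d1.const_mul (δ / R)).hasDerivWithinAt (s := Ioo ε 1)
    refine d.congr_deriv ?_
    simp only [id]; congr 2; ring
  have hinj : InjOn T (Ioo ε 1) := by
    intro x hx y hy h
    have h1 := (hq x hx).ne'
    have h2 := (hq y hy).ne'
    simp only [T] at h
    have h := mul_left_cancel₀ (by positivity) h
    rw [div_eq_div_iff h1 h2] at h
    linarith
  refine ⟨?_, ?_⟩
  · rw [← himg]
    have hcont : ContinuousOn T (Ioo ε 1) := fun s hs => (hder s hs).continuousWithinAt
    exact measurableSet_Ioo.image_of_continuousOn_injOn hcont hinj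
  rw [← himg, integral_image_eq_integral_abs_deriv_smul measurableSet_Ioo hder hinj,
    ← integral_const_mul]
  refine setIntegral_congr_fun measurableSet_Ioo fun s hs => ?_
  have hs0 : 0 < s := hε.trans hs.1
  have hq0 := hq s hs
  have h1s : 0 < 1 - s ^ 2 := by nlinarith [hs.2]
  simp only [smul_eq_mul]
  rw [hw s hs]
  simp only [T]
  set q := 1 + t * s
  rw [abs_of_pos (by positivity), Real.div_rpow (by positivity) (by positivity),
    Real.mul_rpow hδ0.le h1s.le, Real.mul_rpow (by positivity) (by positivity),
    Real.div_rpow hs0.le hq0.le]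
  have e1 : (q ^ 2) ^ p = q ^ (α - 1) := by
    rw [← Real.rpow_two, ← Real.rpow_mul hq0.le, hp]
  have e2 : q ^ (-1 - α) = (q ^ (α - 1))⁻¹ * (q ^ 2)⁻¹ := by
    rw [← Real.rpow_neg hq0.le, ← Real.rpow_two, ← Real.rpow_neg hq0.le, ← Real.rpow_add hq0]
    congr 1; ring
  have e3 : (δ / R) ^ (-1 - α) = (δ / R)⁻¹ * (δ ^ (-α) * R ^ α) := by
    have : (-1 - α) = (-1) + (-α) := by ring
    rw [this, Real.rpow_add (by positivity), Real.rpow_neg_one, Real.div_rpow hδ0.le hR.le,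
      Real.rpow_neg hR.le, div_inv_eq_mul]
  have e4 : δ ^ (p - α) = δ ^ p * δ ^ (-α) := by rw [← Real.rpow_add hδ0]; rfl
  rw [e1, e2, e3, e4]
  have : 0 < q ^ (α - 1) := Real.rpow_pos_of_pos hq0 _
  field_simp

end

end FHSM

namespace FHSM

section

/-- The ground state weight. -/
noncomputable def wt {n : ℕ} (α : ℝ) (x : EuclideanSpace ℝ (Fin n)) : ℝ :=
  (1 - ‖x‖ ^ 2) ^ ((α - 1) / 2)

/-- The truncation set (points at Klein distance at least `artanh ε`). -/
def TS (n : ℕ) (ε : ℝ) : Set (EuclideanSpace ℝ (Fin n) × EuclideanSpace ℝ (Fin n)) :=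
  {z | (1 - ‖z.1‖ ^ 2) * (1 - ‖z.2‖ ^ 2) < (1 - ε ^ 2) * (1 - inner ℝ z.1 z.2) ^ 2}

/-- The truncated kernel. -/
noncomputable def ker (n : ℕ) (α ε : ℝ)
    (z : EuclideanSpace ℝ (Fin n) × EuclideanSpace ℝ (Fin n)) : ℝ :=
  (TS n ε).indicator (fun z => (‖z.1 - z.2‖ ^ ((n : ℝ) + α))⁻¹) z

variable {n : ℕ}

local notation "E" => EuclideanSpace ℝ (Fin n)

theorem one_sub_sq_pos {x : E} (hx : x ∈ ball (0 : E) 1) : 0 < 1 - ‖x‖ ^ 2 := by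
  have : ‖x‖ < 1 := by simpa using hx
  nlinarith [norm_nonneg x]

theorem wt_pos {α : ℝ} {x : E} (hx : x ∈ ball (0 : E) 1) : 0 < wt α x :=
  Real.rpow_pos_of_pos (one_sub_sq_pos hx) _

theorem wt_le_one {α : ℝ} (hα : 1 < α) {x : E} (hx : x ∈ ball (0 : E) 1) : wt α x ≤ 1 :=
  Real.rpow_le_one (one_sub_sq_pos hx).le (by nlinarith [norm_nonneg x]) (by linarith)

theorem wt_measurable (α : ℝ) : Measurable (wt (n := n) α) := by
  unfold wt; fun_prop

theorem TS_measurable (ε : ℝ) : MeasurableSet (TS n ε) := by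
  unfold TS
  exact measurableSet_lt (by fun_prop) (by fun_prop)

theorem ker_measurable (α ε : ℝ) : Measurable (ker n α ε) := by
  unfold ker
  exact Measurable.indicator (by fun_prop) (TS_measurable ε)

theorem ker_nonneg (α ε : ℝ) (z : E × E) : 0 ≤ ker n α ε z := by
  unfold ker
  exact indicator_nonneg (fun z _ => by positivity) z

theorem ker_symm (α ε : ℝ) (x y : E) : ker n α ε (x, y) = ker n α ε (y, x) := by
  classical
  unfold ker
  simp only [indicator_apply, TS, Set.mem_ofPred_eq, norm_sub_rev x y, real_inner_comm x y,
    mul_comm (1 - ‖x‖ ^ 2)]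

theorem TS_dist {ε : ℝ} (hε : 0 < ε) {x y : E} (hx : x ∈ ball (0 : E) 1)
    (hy : y ∈ ball (0 : E) 1) (h : (x, y) ∈ TS n ε) : ε * (1 - ‖x‖) ≤ ‖x - y‖ := by
  have hx1 : ‖x‖ < 1 := by simpa using hx
  have hy1 : ‖y‖ < 1 := by simpa using hy
  have h' : (1 - ‖x‖ ^ 2) * (1 - ‖y‖ ^ 2) < (1 - ε ^ 2) * (1 - inner ℝ x y) ^ 2 := h
  have hcs := abs_real_inner_le_norm x y
  have hcs2 : (inner ℝ x y) ^ 2 ≤ (‖x‖ * ‖y‖) ^ 2 := by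
    rw [← sq_abs]; gcongr
  have hn := norm_sub_sq_real x y
  have h1 : 1 - ‖x‖ ≤ 1 - inner ℝ x y := by
    have := (abs_le.1 hcs).2
    nlinarith [norm_nonneg x, norm_nonneg y]
  have h2 : ε * (1 - inner ℝ x y) ≤ ‖x - y‖ := by
    apply le_of_sq_le_sq _ (norm_nonneg _)
    nlinarith
  exact (mul_le_mul_of_nonneg_left h1 hε.le).trans h2

theorem ker_bound {α ε ρ : ℝ} (hα : 1 < α) (hε : 0 < ε) (hρ : ρ < 1) {x y : E} (hx : ‖x‖ ≤ ρ)
    (hy : y ∈ ball (0 : E) 1) : ker n α ε (x, y) ≤ ((ε * (1 - ρ)) ^ ((n : ℝ) + α))⁻¹ := by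
  have hpos : 0 < ε * (1 - ρ) := mul_pos hε (by linarith)
  have hx1 : x ∈ ball (0 : E) 1 := by simp; linarith
  unfold ker
  by_cases h : (x, y) ∈ TS n ε
  · rw [indicator_of_mem h]
    have h1 := TS_dist hε hx1 hy h
    have h2 : ε * (1 - ρ) ≤ ‖x - y‖ := le_trans (by gcongr) h1
    have := Real.rpow_pos_of_pos hpos ((n : ℝ) + α)
    gcongr
  · rw [indicator_of_notMem h]; positivity

theorem A_nonneg {α ε : ℝ} (hε : 0 < ε) : 0 ≤ A α ε 1 := by
  unfold A
  refine setIntegral_nonneg measurableSet_Ioo fun s hs => ?_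
  have hs0 : 0 < s := hε.trans hs.1
  have h1 : 0 < 1 - s := by linarith [hs.2]
  refine mul_nonneg ?_ (Real.rpow_nonneg hs0.le _)
  have e1 : ∀ y : ℝ, 0 < y → y ^ (α - 1) = (y ^ ((α - 1) / 2)) ^ 2 := by
    intro y hy; rw [← Real.rpow_two, ← Real.rpow_mul hy.le]; congr 1; ring
  have e2 : (1 - s ^ 2) = (1 + s) * (1 - s) := by ring
  rw [one_mul, e1 _ (by positivity), e1 _ h1, e2, Real.mul_rpow (by positivity) h1.le]
  nlinarith [sq_nonneg ((1 + s) ^ ((α - 1) / 2) - (1 - s) ^ ((α - 1) / 2))]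

theorem radial (hn : 1 ≤ n) {α ε : ℝ} (hε : 0 < ε) {x θ : E}
    (hx : x ∈ ball (0 : E) 1) (hθ : ‖θ‖ = 1) {R t : ℝ}
    (hR : R = Real.sqrt (1 - ‖x‖ ^ 2 + (inner ℝ x θ) ^ 2)) (ht : t = inner ℝ x θ / R) :
    ∫ τ in Ioi (0 : ℝ), τ ^ (n - 1) *
      (ball (0 : E) 1).indicator (fun y => (wt α x - wt α y) * ker n α ε (x, y)) (x + τ • θ) =
    (1 - ‖x‖ ^ 2) ^ ((α - 1) / 2 - α) * R ^ α *
      ∫ s in Ioo ε 1, ((1 + t * s) ^ (α - 1) - (1 - s ^ 2) ^ ((α - 1) / 2)) * s ^ (-1 - α) := by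
  classical
  have hδ0 := one_sub_sq_pos hx
  set h := inner ℝ x θ with hh
  have hR2 : R ^ 2 = 1 - ‖x‖ ^ 2 + h ^ 2 := by rw [hR, Real.sq_sqrt (by positivity)]
  have hR0 : 0 < R := by rw [hR]; exact Real.sqrt_pos.2 (by positivity)
  have hRt : R * t = h := by rw [ht]; field_simp
  have hδ : 1 - ‖x‖ ^ 2 = R ^ 2 * (1 - t ^ 2) := by
    have : R ^ 2 * (1 - t ^ 2) = R ^ 2 - (R * t) ^ 2 := by ring
    rw [this, hRt, hR2]; ring
  have ht1 : |t| < 1 := by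
    rw [← sq_lt_one_iff_abs_lt_one]
    have : 0 < R ^ 2 * (1 - t ^ 2) := hδ ▸ hδ0
    have := pos_of_mul_pos_right this (by positivity)
    linarith
  obtain ⟨hm, hc⟩ := chord (α := α) (p := (α - 1) / 2) (ε := ε) (by ring) hR0 ht1 hδ hε
  rw [← hc, ← integral_indicator hm, ← integral_indicator measurableSet_Ioi]
  refine integral_congr_ae (.of_forall fun τ => ?_)
  by_cases hτ : 0 < τ
  swap
  · rw [indicator_of_notMem (by simpa using hτ), indicator_of_notMem (fun hh => hτ hh.1)]
  rw [indicator_of_mem (by simpa using hτ)]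
  have hny : ‖x + τ • θ‖ ^ 2 = ‖x‖ ^ 2 + 2 * τ * h + τ ^ 2 := by
    rw [norm_add_sq_real, norm_smul, hθ, inner_smul_right]
    simp [abs_of_pos hτ]; ring
  have hw : 1 - ‖x + τ • θ‖ ^ 2 = 1 - ‖x‖ ^ 2 - 2 * (R * t) * τ - τ ^ 2 := by
    rw [hny, hRt]; ring
  have hin : 1 - inner ℝ x (x + τ • θ) = 1 - ‖x‖ ^ 2 - R * t * τ := by
    rw [inner_add_right, inner_smul_right, real_inner_self_eq_norm_sq, hRt]; ring
  have hB : x + τ • θ ∈ ball (0 : E) 1 ↔ 0 < 1 - ‖x‖ ^ 2 - 2 * (R * t) * τ - τ ^ 2 := by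
    rw [← hw, mem_ball_zero_iff, sub_pos, sq_lt_one_iff₀ (norm_nonneg _)]
  have hd : ‖x - (x + τ • θ)‖ = τ := by simp [norm_smul, hθ, abs_of_pos hτ]
  have hpow : τ ^ (n - 1) * (τ ^ ((n : ℝ) + α))⁻¹ = τ ^ (-1 - α) := by
    rw [← Real.rpow_neg hτ.le, ← Real.rpow_natCast, ← Real.rpow_add hτ]
    congr 1
    rw [Nat.cast_sub hn]; push_cast; ring
  by_cases hb : x + τ • θ ∈ ball (0 : E) 1
  swap
  · rw [indicator_of_notMem hb, indicator_of_notMem (fun hh => hb (hB.2 hh.2.1)), mul_zero]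
  rw [indicator_of_mem hb]
  by_cases hT : (x, x + τ • θ) ∈ TS n ε
  · have hT' := hT
    simp only [TS, Set.mem_ofPred_eq, hw, hin] at hT'
    rw [indicator_of_mem]
    swap
    · exact ⟨hτ, hB.1 hb, hT'⟩
    unfold ker
    rw [indicator_of_mem hT]
    simp only [hd, wt, hw]
    rw [← hpow]; ring
  · rw [indicator_of_notMem]
    · unfold ker; rw [indicator_of_notMem hT]; ring
    · intro hh
      apply hT
      simp only [TS, Set.mem_ofPred_eq, hw, hin]
      exact hh.2.2

theorem L_lower (hn : 2 ≤ n) {α ε : ℝ} (hα1 : 1 < α) (hα2 : α < 2) (hε : 0 < ε) (hε2 : ε ≤ 1 / 2)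
    {x : E} (hx : x ∈ ball (0 : E) 1) :
    (1 - ‖x‖ ^ 2) ^ ((α - 1) / 2 - α) *
      ((Real.pi ^ (((n : ℝ) - 1) / 2) *
        (Real.Gamma ((1 + α) / 2) / Real.Gamma ((n + α) / 2))) * A α ε 1 +
        (α - 1) * (2 - α) / 8 * ((volume : Measure E).toSphere.real univ) * (1 - ‖x‖ ^ 2)) ≤
    ∫ y in ball (0 : E) 1, (wt α x - wt α y) * ker n α ε (x, y) := by
  have hδ0 := one_sub_sq_pos hx
  have hx1 : ‖x‖ < 1 := by simpa using hx
  have hnt : Nontrivial E := by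
    have : Nonempty (Fin n) := ⟨⟨0, by omega⟩⟩
    infer_instance
  set δ := 1 - ‖x‖ ^ 2 with hδ
  let F : E → ℝ := (ball (0 : E) 1).indicator (fun y => (wt α x - wt α y) * ker n α ε (x, y))
  have hFm : Measurable F := by
    refine Measurable.indicator ?_ measurableSet_ball
    exact (measurable_const.sub (wt_measurable α)).mul
      ((ker_measurable α ε).comp (measurable_const.prodMk measurable_id))
  have hFint : Integrable F := by
    rw [integrable_indicator_iff measurableSet_ball]
    refine Measure.integrableOn_of_bounded (M := ((ε * (1 - ‖x‖)) ^ ((n : ℝ) + α))⁻¹)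
      measure_ball_lt_top.ne ?_ ?_
    · exact ((measurable_const.sub (wt_measurable α)).mul
        ((ker_measurable α ε).comp (measurable_const.prodMk measurable_id))).aestronglyMeasurable
    · refine (ae_restrict_iff' measurableSet_ball).2 (.of_forall fun y hy => ?_)
      have h1 := ker_bound (n := n) hα1 hε hx1 le_rfl hy
      have h2 := ker_nonneg α ε (x, y)
      have h3 : |wt α x - wt α y| ≤ 1 := by
        rw [abs_le]
        constructor <;> linarith [wt_pos (α := α) hx, wt_pos (α := α) hy, wt_le_one hα1 hx, wt_le_one hα1 hy]
      rw [Real.norm_eq_abs, abs_mul, abs_of_nonneg h2]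
      nlinarith [abs_nonneg (wt α x - wt α y)]
  have hf1 : Integrable (fun z => F (x + z)) := hFint.comp_add_left x
  have hf2 : Integrable (fun z => F (x + -z)) := hf1.comp_neg
  have hv1 : ∫ z, F (x + z) = ∫ y in ball (0 : E) 1, (wt α x - wt α y) * ker n α ε (x, y) := by
    rw [integral_add_left_eq_self F x, integral_indicator measurableSet_ball]
  have hv2 : ∫ z, F (x + -z) = ∫ y in ball (0 : E) 1, (wt α x - wt α y) * ker n α ε (x, y) := by
    rw [← hv1]; exact integral_neg_eq_self (fun z => F (x + z)) volume
  obtain ⟨hp1, hq1⟩ := polar volume _ hf1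
  obtain ⟨hp2, hq2⟩ := polar volume _ hf2
  rw [hv1] at hq1
  rw [hv2] at hq2
  have hsum := hp1.add hp2
  have hq : 2 * ∫ y in ball (0 : E) 1, (wt α x - wt α y) * ker n α ε (x, y) =
      ∫ θ : sphere (0 : E) 1,
        ((∫ τ in Ioi (0 : ℝ), τ ^ (Module.finrank ℝ E - 1) * F (x + τ • (θ : E))) +
        (∫ τ in Ioi (0 : ℝ), τ ^ (Module.finrank ℝ E - 1) * F (x + -(τ • (θ : E)))))
        ∂(volume : Measure E).toSphere := by
    rw [two_mul]
    nth_rewrite 1 [hq1]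
    rw [hq2]
    exact (integral_add hp1 hp2).symm
  -- a unit vector
  obtain ⟨e, he, hex⟩ : ∃ e : E, ‖e‖ = 1 ∧ ∃ c : ℝ, 0 ≤ c ∧ c < 1 ∧ x = c • e := by
    by_cases h0 : x = 0
    · obtain ⟨e, he⟩ := exists_norm_eq E (zero_le_one (α := ℝ))
      exact ⟨e, he, 0, le_rfl, one_pos, by simp [h0]⟩
    · have : ‖x‖ ≠ 0 := norm_ne_zero_iff.2 h0
      refine ⟨‖x‖⁻¹ • x, by simp [norm_smul, this], ‖x‖, norm_nonneg _, hx1, ?_⟩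
      rw [smul_smul, mul_inv_cancel₀ this, one_smul]
  have hCS := sphere_const n (by omega) α (by linarith) e he
  have hA := A_nonneg (α := α) hε
  have hlow : ∀ θ : sphere (0 : E) 1,
      δ ^ ((α - 1) / 2 - α) * (|inner ℝ e (θ : E)| ^ α * A α ε 1 + (α - 1) * (2 - α) / 4 * δ) ≤
      (∫ τ in Ioi (0 : ℝ), τ ^ (Module.finrank ℝ E - 1) * F (x + τ • (θ : E))) +
      (∫ τ in Ioi (0 : ℝ), τ ^ (Module.finrank ℝ E - 1) * F (x + -(τ • (θ : E)))) := by
    intro θ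
    have hθ : ‖(θ : E)‖ = 1 := by simp
    set R := Real.sqrt (1 - ‖x‖ ^ 2 + (inner ℝ x (θ : E)) ^ 2) with hR
    have r1 := radial (α := α) (by omega : 1 ≤ n) hε hx hθ hR rfl
    have r2 := radial (α := α) (θ := -(θ : E)) (by omega : 1 ≤ n) hε hx (by simp)
      (R := R) (by simp [hR]) rfl
    rw [inner_neg_right, neg_div] at r2
    simp only [finrank_euclideanSpace, Fintype.card_fin]
    simp only [smul_neg] at r2
    rw [show (∫ τ in Ioi (0 : ℝ), τ ^ (n - 1) * F (x + τ • (θ : E))) = _ from r1,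
      show (∫ τ in Ioi (0 : ℝ), τ ^ (n - 1) * F (x + -(τ • (θ : E)))) = _ from r2,
      ← mul_add, A_split hα1 hε, mul_assoc]
    have hR2 : R ^ 2 = δ + (inner ℝ x (θ : E)) ^ 2 := by rw [hR, Real.sq_sqrt (by positivity)]
    have hR0 : 0 < R := by rw [hR]; exact Real.sqrt_pos.2 (by positivity)
    have hR1 : R ≤ 1 := by
      have hcs := abs_real_inner_le_norm x (θ : E)
      rw [hθ, mul_one] at hcs
      have : (inner ℝ x (θ : E)) ^ 2 ≤ ‖x‖ ^ 2 := by rw [← sq_abs]; gcongr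
      have : R ^ 2 ≤ 1 := by rw [hR2, hδ]; linarith
      exact (sq_le_one_iff₀ hR0.le).1 this
    have ht2 : (inner ℝ x (θ : E) / R) ^ 2 = 1 - δ / R ^ 2 := by
      rw [div_pow]
      have : (inner ℝ x (θ : E)) ^ 2 = R ^ 2 - δ := by rw [hR2]; ring
      rw [this]; field_simp
    have ht1 : |inner ℝ x (θ : E) / R| ≤ 1 := by
      rw [← sq_le_one_iff_abs_le_one, ht2]
      have : 0 < δ / R ^ 2 := by positivity
      linarith
    have hs := A_slack hα1 hα2 hε hε2 ht1
    rw [ht2] at hs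
    have heR : |inner ℝ e (θ : E)| ≤ R := by
      apply abs_le_of_sq_le_sq _ hR0.le
      obtain ⟨c, hc0, hc1, hxc⟩ := hex
      have hxn : ‖x‖ = c := by rw [hxc, norm_smul, he]; simp [abs_of_nonneg hc0]
      rw [hR2, hδ, hxn]
      have : inner ℝ x (θ : E) = c * inner ℝ e (θ : E) := by rw [hxc, inner_smul_left]; simp
      rw [this]
      have hcs := abs_real_inner_le_norm e (θ : E)
      rw [hθ, he, mul_one, ← sq_le_one_iff_abs_le_one] at hcs
      nlinarith [mul_nonneg (by nlinarith : 0 ≤ 1 - c ^ 2) (sub_nonneg.2 hcs)]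
    have hpow : |inner ℝ e (θ : E)| ^ α ≤ R ^ α := by
      apply Real.rpow_le_rpow (abs_nonneg _) heR (by linarith)
    have hRα : δ ≤ R ^ α * (δ / R ^ 2) := by
      have h1 : R ^ (2:ℝ) ≤ R ^ α := Real.rpow_le_rpow_of_exponent_ge hR0 hR1 hα2.le
      rw [Real.rpow_two] at h1
      calc δ = R ^ 2 * (δ / R ^ 2) := by field_simp
        _ ≤ _ := by gcongr
    have hRα0 : 0 < R ^ α := Real.rpow_pos_of_pos hR0 _
    apply mul_le_mul_of_nonneg_left _ (Real.rpow_nonneg hδ0.le _)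
    have hc0 : 0 ≤ (α - 1) * (2 - α) / 4 := by
      have : 0 ≤ (α - 1) * (2 - α) := mul_nonneg (by linarith) (by linarith)
      positivity
    calc _ ≤ R ^ α * A α ε 1 + (α - 1) * (2 - α) / 4 * (R ^ α * (δ / R ^ 2)) := by gcongr
      _ = R ^ α * (A α ε 1 + (α - 1) * (2 - α) / 4 * (1 - (1 - δ / R ^ 2))) := by ring
      _ ≤ _ := by gcongr
  have hci : Integrable (fun θ : sphere (0 : E) 1 => |inner ℝ e (θ : E)| ^ α)
      (volume : Measure E).toSphere := by
    refine Continuous.integrable_of_hasCompactSupport ?_ (HasCompactSupport.of_compactSpace _)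
    refine Continuous.rpow_const (by fun_prop) fun _ => Or.inr (by linarith)
  have hmono := integral_mono (μ := (volume : Measure E).toSphere)
    (((hci.mul_const _).add (integrable_const _)).const_mul _) hsum hlow
  simp only [Pi.add_apply] at hmono
  rw [integral_const_mul, integral_add (hci.mul_const _) (integrable_const _),
    integral_mul_const, hCS, integral_const, smul_eq_mul] at hmono
  rw [← hq] at hmono
  linarith

end

end FHSM

namespace FHSM

section

variable {n : ℕ}

local notation "E" => EuclideanSpace ℝ (Fin n)

theorem wt_mul {α : ℝ} {x : E} (hx : x ∈ ball (0 : E) 1) (v : ℝ) :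
    wt α x * v ^ 2 * (1 - ‖x‖ ^ 2) ^ ((α - 1) / 2 - α) = (wt α x * v) ^ 2 * (1 - ‖x‖ ^ 2) ^ (-α) := by
  have h := one_sub_sq_pos hx
  rw [Real.rpow_sub h, Real.rpow_neg h.le]
  unfold wt
  ring

theorem wt_mul2 {α : ℝ} {x : E} (hx : x ∈ ball (0 : E) 1) :
    wt α x * (1 - ‖x‖ ^ 2) ^ ((α - 1) / 2 - α) * (1 - ‖x‖ ^ 2) = 1 := by
  have h := one_sub_sq_pos hx
  unfold wt
  nth_rewrite 3 [← Real.rpow_one (1 - ‖x‖ ^ 2)]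
  rw [← Real.rpow_add h, ← Real.rpow_add h]
  rw [show (α - 1) / 2 + ((α - 1) / 2 - α) + 1 = 0 by ring, Real.rpow_zero]

theorem gs_trunc (hn : 2 ≤ n) {α ε ρ M : ℝ} (hα1 : 1 < α) (hα2 : α < 2) (hε : 0 < ε)
    (hε2 : ε ≤ 1 / 2) (hρ0 : 0 ≤ ρ) (hρ : ρ < 1) {v : E → ℝ} (hv : Measurable v) (hM : ∀ x, |v x| ≤ M)
    (hsupp : ∀ x, ρ < ‖x‖ → v x = 0) :
    (1 / 2 : ℝ≥0∞) * (∫⁻ x in ball (0 : E) 1, ∫⁻ y in ball (0 : E) 1,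
        ENNReal.ofReal (ker n α ε (x, y) * (wt α x * wt α y * (v x - v y) ^ 2))) +
      ENNReal.ofReal ((Real.pi ^ (((n : ℝ) - 1) / 2) *
        (Real.Gamma ((1 + α) / 2) / Real.Gamma ((n + α) / 2))) * A α ε 1 *
        (∫ x in ball (0 : E) 1, (wt α x * v x) ^ 2 * (1 - ‖x‖ ^ 2) ^ (-α)) +
        (α - 1) * (2 - α) / 8 * ((volume : Measure E).toSphere.real univ) *
          ∫ x in ball (0 : E) 1, v x ^ 2) ≤
    (1 / 2 : ℝ≥0∞) * ∫⁻ x in ball (0 : E) 1, ∫⁻ y in ball (0 : E) 1,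
        ENNReal.ofReal ((wt α x * v x - wt α y * v y) ^ 2 / ‖x - y‖ ^ ((n : ℝ) + α)) := by
  set B : Set E := ball (0 : E) 1 with hB
  have hBm : MeasurableSet B := measurableSet_ball
  set μ : Measure E := volume.restrict B with hμ
  have : IsFiniteMeasure μ := ⟨by simp [hμ, hB, measure_ball_lt_top]⟩
  have hM0 : 0 ≤ M := (abs_nonneg _).trans (hM 0)
  have hwm := wt_measurable (n := n) α
  have hkm := ker_measurable (n := n) α ε
  have hae : ∀ᵐ z ∂(μ.prod μ), z.1 ∈ B ∧ z.2 ∈ B := by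
    rw [hμ, Measure.prod_restrict]
    exact ae_restrict_mem (hBm.prod hBm)
  have hae1 : ∀ᵐ x ∂μ, x ∈ B := ae_restrict_mem hBm
  set K : ℝ := ((ε * (1 - ρ)) ^ ((n : ℝ) + α))⁻¹ with hK
  have hK0 : 0 ≤ K := inv_nonneg.2 (Real.rpow_nonneg (mul_nonneg hε.le (by linarith)) _)
  have hk1 : ∀ x y : E, y ∈ B → (v x ≠ 0) → ker n α ε (x, y) ≤ K := by
    intro x y hy hx
    refine ker_bound hα1 hε hρ ?_ hy
    by_contra hh; exact hx (hsupp x (not_le.1 hh))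
  have hk2 : ∀ x y : E, x ∈ B → (v y ≠ 0) → ker n α ε (x, y) ≤ K := by
    intro x y hx hy
    rw [ker_symm]; exact hk1 y x hx hy
  let F1 : E × E → ℝ := fun z => ker n α ε z * (wt α z.1 * v z.1 - wt α z.2 * v z.2) ^ 2
  let F2 : E × E → ℝ := fun z => ker n α ε z * (wt α z.1 * wt α z.2 * (v z.1 - v z.2) ^ 2)
  let G : E × E → ℝ := fun z => ker n α ε z * ((wt α z.1 - wt α z.2) * (wt α z.1 * v z.1 ^ 2))
  have hF1m : Measurable F1 := by fun_prop
  have hF2m : Measurable F2 := by fun_prop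
  have hGm : Measurable G := by fun_prop
  have hw : ∀ x ∈ B, |wt α x| ≤ 1 := fun x hx => by
    rw [abs_of_pos (wt_pos hx)]; exact wt_le_one hα1 hx
  have hwv : ∀ x ∈ B, |wt α x * v x| ≤ M := fun x hx => by
    rw [abs_mul]
    calc _ ≤ 1 * M := by gcongr; exacts [hw x hx, hM x]
      _ = M := one_mul M
  have hF1i : Integrable F1 (μ.prod μ) := by
    refine Integrable.of_bound hF1m.aestronglyMeasurable (K * (2 * M) ^ 2) ?_
    filter_upwards [hae] with z hz
    simp only [F1]
    rw [Real.norm_eq_abs, abs_mul, abs_of_nonneg (ker_nonneg _ _ _), abs_pow]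
    have h1 : |wt α z.1 * v z.1 - wt α z.2 * v z.2| ≤ 2 * M := by
      refine (abs_sub _ _).trans ?_
      linarith [hwv _ hz.1, hwv _ hz.2]
    by_cases h : v z.1 = 0
    · by_cases h' : v z.2 = 0
      · simp [h, h']; positivity
      · gcongr; exact hk2 z.1 z.2 hz.1 h'
    · gcongr; exact hk1 z.1 z.2 hz.2 h
  have hF2i : Integrable F2 (μ.prod μ) := by
    refine Integrable.of_bound hF2m.aestronglyMeasurable (K * (1 * 1 * (2 * M) ^ 2)) ?_
    filter_upwards [hae] with z hz
    simp only [F2]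
    rw [Real.norm_eq_abs, abs_mul, abs_of_nonneg (ker_nonneg _ _ _), abs_mul, abs_mul, abs_pow]
    have h1 : |v z.1 - v z.2| ≤ 2 * M := by
      refine (abs_sub _ _).trans ?_
      linarith [hM z.1, hM z.2]
    have h2 := hw _ hz.1
    have h3 := hw _ hz.2
    by_cases h : v z.1 = 0
    · by_cases h' : v z.2 = 0
      · simp [h, h']; positivity
      · gcongr; exact hk2 z.1 z.2 hz.1 h'
    · gcongr; exact hk1 z.1 z.2 hz.2 h
  have hGi : Integrable G (μ.prod μ) := by
    refine Integrable.of_bound hGm.aestronglyMeasurable (K * (2 * (1 * M ^ 2))) ?_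
    filter_upwards [hae] with z hz
    simp only [G]
    rw [Real.norm_eq_abs, abs_mul, abs_of_nonneg (ker_nonneg _ _ _), abs_mul, abs_mul, abs_pow]
    have h2 := hw _ hz.1
    have h3 := hw _ hz.2
    have h1 : |wt α z.1 - wt α z.2| ≤ 2 := by
      refine (abs_sub _ _).trans ?_
      linarith
    have h4 := hM z.1
    by_cases h : v z.1 = 0
    · simp [h]; positivity
    · gcongr; exact hk1 z.1 z.2 hz.2 h
  have hGs : Integrable (fun z : E × E => G z.swap) (μ.prod μ) := hGi.swap
  have hident : ∀ z, F1 z = F2 z + (G z + G z.swap) := by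
    intro z
    simp only [F1, F2, G, Prod.fst_swap, Prod.snd_swap]
    rw [show ker n α ε z.swap = ker n α ε z from ker_symm α ε z.2 z.1]
    ring
  have hIntId : ∫ z, F1 z ∂(μ.prod μ) = ∫ z, F2 z ∂(μ.prod μ) + 2 * ∫ z, G z ∂(μ.prod μ) := by
    simp only [hident]
    rw [integral_add (g := fun z => G z + G z.swap) hF2i (hGi.add hGs), integral_add hGi hGs,
      integral_prod_swap G]
    ring
  have hGval : ∫ z, G z ∂(μ.prod μ) =
      ∫ x, wt α x * v x ^ 2 * (∫ y in B, (wt α x - wt α y) * ker n α ε (x, y)) ∂μ := by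
    rw [integral_prod G hGi]
    refine integral_congr_ae (.of_forall fun x => ?_)
    simp only [G]
    rw [← integral_const_mul]
    refine integral_congr_ae (.of_forall fun y => ?_)
    ring
  have hv2i : Integrable (fun x => v x ^ 2) μ := by
    refine Integrable.of_bound (by fun_prop) (M ^ 2) (.of_forall fun x => ?_)
    rw [Real.norm_eq_abs, abs_pow]
    have := hM x
    gcongr
  have hXi : Integrable (fun x => (wt α x * v x) ^ 2 * (1 - ‖x‖ ^ 2) ^ (-α)) μ := by
    refine Integrable.of_bound (by fun_prop) (M ^ 2 * (1 - ρ ^ 2) ^ (-α)) ?_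
    filter_upwards [hae1] with x hx
    by_cases h : v x = 0
    · simp only [h, mul_zero, ne_eq, OfNat.ofNat_ne_zero, not_false_eq_true, zero_pow, zero_mul,
        norm_zero]
      have : 0 ≤ 1 - ρ ^ 2 := by nlinarith
      positivity
    · have hxρ : ‖x‖ ≤ ρ := by
        by_contra hh; exact h (hsupp x (not_le.1 hh))
      have hd := one_sub_sq_pos hx
      have h1 : 0 < 1 - ρ ^ 2 := by nlinarith [norm_nonneg x]
      rw [Real.norm_eq_abs, abs_mul, abs_pow, abs_of_nonneg (Real.rpow_nonneg hd.le _)]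
      have h3 := hwv x hx
      have h4 : (1 - ‖x‖ ^ 2) ^ (-α) ≤ (1 - ρ ^ 2) ^ (-α) := by
        apply Real.rpow_le_rpow_of_nonpos h1 _ (by linarith)
        gcongr
      gcongr
  have hLi : Integrable (fun x => wt α x * v x ^ 2 *
      (∫ y in B, (wt α x - wt α y) * ker n α ε (x, y))) μ := by
    have := hGi.integral_prod_left
    refine this.congr (.of_forall fun x => ?_)
    simp only [G]
    rw [← integral_const_mul]
    refine integral_congr_ae (.of_forall fun y => ?_)
    ring
  set CA : ℝ := (Real.pi ^ (((n : ℝ) - 1) / 2) *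
        (Real.Gamma ((1 + α) / 2) / Real.Gamma ((n + α) / 2))) * A α ε 1 with hCA
  set c : ℝ := (α - 1) * (2 - α) / 8 * ((volume : Measure E).toSphere.real univ) with hc
  have hlow : CA * (∫ x, (wt α x * v x) ^ 2 * (1 - ‖x‖ ^ 2) ^ (-α) ∂μ) + c * ∫ x, v x ^ 2 ∂μ ≤
      ∫ z, G z ∂(μ.prod μ) := by
    rw [hGval, ← integral_const_mul, ← integral_const_mul, ← integral_add (hXi.const_mul _)
      (hv2i.const_mul _)]
    refine integral_mono_ae ((hXi.const_mul _).add (hv2i.const_mul _)) hLi ?_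
    filter_upwards [hae1] with x hx
    have h1 := L_lower hn hα1 hα2 hε hε2 hx
    have h2 : 0 ≤ wt α x * v x ^ 2 := mul_nonneg (wt_pos hx).le (sq_nonneg _)
    refine le_trans (le_of_eq ?_) (mul_le_mul_of_nonneg_left h1 h2)
    rw [← wt_mul hx, ← hCA, ← hc]
    have h3 := wt_mul2 (α := α) hx
    calc _ = CA * (wt α x * v x ^ 2 * (1 - ‖x‖ ^ 2) ^ ((α - 1) / 2 - α)) + c * v x ^ 2 *
          (wt α x * (1 - ‖x‖ ^ 2) ^ ((α - 1) / 2 - α) * (1 - ‖x‖ ^ 2)) := by rw [h3, mul_one]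
      _ = _ := by ring
  have hGnn : 0 ≤ ∫ z, G z ∂(μ.prod μ) := by
    refine le_trans ?_ hlow
    have h1 : 0 ≤ ∫ x, v x ^ 2 ∂μ := integral_nonneg fun x => sq_nonneg _
    have h2 : 0 ≤ ∫ x, (wt α x * v x) ^ 2 * (1 - ‖x‖ ^ 2) ^ (-α) ∂μ := by
      refine integral_nonneg_of_ae ?_
      filter_upwards [hae1] with x hx
      exact mul_nonneg (sq_nonneg _) (Real.rpow_nonneg (one_sub_sq_pos hx).le _)
    have h3 : 0 ≤ CA := by
      have g1 := Real.Gamma_pos_of_pos (by linarith : 0 < (1 + α) / 2)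
      have g2 := Real.Gamma_pos_of_pos (by positivity : 0 < ((n : ℝ) + α) / 2)
      have g3 := A_nonneg (α := α) hε
      have := Real.pi_pos
      positivity
    have h4 : 0 ≤ c := by
      have : 0 ≤ (α - 1) * (2 - α) := mul_nonneg (by linarith) (by linarith)
      positivity
    positivity
  have hF2nn : 0 ≤ᵐ[μ.prod μ] F2 := by
    filter_upwards [hae] with z hz
    exact mul_nonneg (ker_nonneg _ _ _)
      (mul_nonneg (mul_nonneg (wt_pos hz.1).le (wt_pos hz.2).le) (sq_nonneg _))
  have hF1nn : 0 ≤ᵐ[μ.prod μ] F1 := .of_forall fun z => mul_nonneg (ker_nonneg _ _ _) (sq_nonneg _)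
  have e1 : ∫⁻ x, ∫⁻ y, ENNReal.ofReal (F1 (x, y)) ∂μ ∂μ = ENNReal.ofReal (∫ z, F1 z ∂(μ.prod μ)) := by
    rw [ofReal_integral_eq_lintegral_ofReal hF1i hF1nn,
      lintegral_prod _ hF1m.ennreal_ofReal.aemeasurable]
  have e2 : ∫⁻ x, ∫⁻ y, ENNReal.ofReal (F2 (x, y)) ∂μ ∂μ = ENNReal.ofReal (∫ z, F2 z ∂(μ.prod μ)) := by
    rw [ofReal_integral_eq_lintegral_ofReal hF2i hF2nn,
      lintegral_prod _ hF2m.ennreal_ofReal.aemeasurable]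
  have hhalf : (1 / 2 : ℝ≥0∞) = ENNReal.ofReal (1 / 2) := by
    rw [ENNReal.ofReal_div_of_pos two_pos]; simp
  have hF2n : 0 ≤ ∫ z, F2 z ∂(μ.prod μ) := integral_nonneg_of_ae hF2nn
  calc _ ≤ (1 / 2 : ℝ≥0∞) * (∫⁻ x, ∫⁻ y, ENNReal.ofReal (F2 (x, y)) ∂μ ∂μ) +
        ENNReal.ofReal (∫ z, G z ∂(μ.prod μ)) := by
        gcongr
    _ ≤ (1 / 2 : ℝ≥0∞) * ∫⁻ x, ∫⁻ y, ENNReal.ofReal (F1 (x, y)) ∂μ ∂μ := by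
        rw [e1, e2, hhalf, ← ENNReal.ofReal_mul (by norm_num), ← ENNReal.ofReal_mul (by norm_num),
          hIntId]
        rw [← ENNReal.ofReal_add (by positivity) hGnn]
        apply ENNReal.ofReal_le_ofReal; linarith
    _ ≤ _ := by
        gcongr with x y
        simp only [F1]
        rw [mul_comm, div_eq_mul_inv]
        gcongr
        unfold ker
        exact indicator_le_self' (fun _ _ => by positivity) _

end

end FHSM

namespace FHSM

section

variable {n : ℕ}

local notation "E" => EuclideanSpace ℝ (Fin n)

theorem TS_mono {ε ε' : ℝ} (hε : 0 ≤ ε) (h : ε ≤ ε') : TS n ε' ⊆ TS n ε := by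
  intro z hz
  simp only [TS, Set.mem_ofPred_eq] at hz ⊢
  refine hz.trans_le ?_
  gcongr

theorem ker_mono {α ε ε' : ℝ} (hε : 0 ≤ ε) (h : ε ≤ ε') (z : E × E) :
    ker n α ε' z ≤ ker n α ε z := by
  unfold ker
  exact indicator_le_indicator_of_subset (TS_mono hε h) (fun _ => by positivity) z

theorem TS_gap {x y : E} (hx : x ∈ ball (0 : E) 1) (hxy : x ≠ y) :
    (1 - ‖x‖ ^ 2) * (1 - ‖y‖ ^ 2) < (1 - inner ℝ x y) ^ 2 := by
  have h1 := one_sub_sq_pos hx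
  have h2 : 0 < ‖x - y‖ ^ 2 := by
    have := norm_pos_iff.2 (sub_ne_zero.2 hxy); positivity
  rw [norm_sub_sq_real] at h2
  nlinarith [mul_pos h1 h2, sq_nonneg (‖x‖ ^ 2 - inner ℝ x y)]

theorem gs_full (hn : 2 ≤ n) {α ρ M : ℝ} (hα1 : 1 < α) (hα2 : α < 2)
    (hρ0 : 0 ≤ ρ) (hρ : ρ < 1) {v : E → ℝ} (hv : Measurable v) (hM : ∀ x, |v x| ≤ M)
    (hsupp : ∀ x, ρ < ‖x‖ → v x = 0) :
    (1 / 2 : ℝ≥0∞) * (∫⁻ x in ball (0 : E) 1, ∫⁻ y in ball (0 : E) 1,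
        ENNReal.ofReal (wt α x * wt α y * (v x - v y) ^ 2 / ‖x - y‖ ^ ((n : ℝ) + α))) +
      (ENNReal.ofReal ((Real.pi ^ (((n : ℝ) - 1) / 2) *
        (Real.Gamma ((1 + α) / 2) / Real.Gamma ((n + α) / 2))) *
        ((eulerBeta ((1 + α) / 2) ((2 - α) / 2) - 2 ^ α) / α) *
        (∫ x in ball (0 : E) 1, (wt α x * v x) ^ 2 * (1 - ‖x‖ ^ 2) ^ (-α))) +
        ENNReal.ofReal ((α - 1) * (2 - α) / 8 * ((volume : Measure E).toSphere.real univ) *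
          ∫ x in ball (0 : E) 1, v x ^ 2)) ≤
    (1 / 2 : ℝ≥0∞) * ∫⁻ x in ball (0 : E) 1, ∫⁻ y in ball (0 : E) 1,
        ENNReal.ofReal ((wt α x * v x - wt α y * v y) ^ 2 / ‖x - y‖ ^ ((n : ℝ) + α)) := by
  obtain ⟨a, ha, hlim⟩ := A_lim hα1 hα2
  have hwm := wt_measurable (n := n) α
  set B : Set E := ball (0 : E) 1 with hB
  have hBm : MeasurableSet B := measurableSet_ball
  set μ : Measure E := volume.restrict B with hμ
  have hae : ∀ᵐ z ∂(μ.prod μ), z.1 ∈ B ∧ z.2 ∈ B := by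
    rw [hμ, Measure.prod_restrict]
    exact ae_restrict_mem (hBm.prod hBm)
  have hae1 : ∀ᵐ x ∂μ, x ∈ B := ae_restrict_mem hBm
  let f : ℕ → E × E → ℝ≥0∞ := fun k z =>
    ENNReal.ofReal (ker n α (1 / ((k : ℝ) + 2)) z * (wt α z.1 * wt α z.2 * (v z.1 - v z.2) ^ 2))
  let g : E × E → ℝ≥0∞ := fun z =>
    ENNReal.ofReal (wt α z.1 * wt α z.2 * (v z.1 - v z.2) ^ 2 / ‖z.1 - z.2‖ ^ ((n : ℝ) + α))
  have hfm : ∀ k, Measurable (f k) := by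
    intro k
    have := ker_measurable (n := n) α (1 / ((k : ℝ) + 2))
    simp only [f]
    fun_prop
  have hgm : Measurable g := by fun_prop
  have hJlim : Tendsto (fun k => ∫⁻ z, f k z ∂(μ.prod μ)) atTop (𝓝 (∫⁻ z, g z ∂(μ.prod μ))) := by
    refine lintegral_tendsto_of_tendsto_of_monotone (fun k => (hfm k).aemeasurable) ?_ ?_
    · filter_upwards [hae] with z hz
      intro k l hkl
      simp only [f]
      have h1 := wt_pos (α := α) hz.1
      have h2 := wt_pos (α := α) hz.2
      apply ENNReal.ofReal_le_ofReal
      apply mul_le_mul_of_nonneg_right _ (by positivity)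
      apply ker_mono (by positivity)
      gcongr
    · filter_upwards [hae] with z hz
      obtain ⟨x, y⟩ := z
      by_cases hxy : x = y
      · subst hxy
        simp [f, g]
      · have hgap := TS_gap hz.1 hxy
        have ht : Tendsto (fun k : ℕ => (1 - (1 / ((k : ℝ) + 2)) ^ 2) * (1 - inner ℝ x y) ^ 2) atTop
            (𝓝 ((1 - 0 ^ 2) * (1 - inner ℝ x y) ^ 2)) := by
          refine Tendsto.mul_const _ (Tendsto.const_sub _ (Tendsto.pow ?_ 2))
          have := (tendsto_const_div_atTop_nhds_zero_nat (1:ℝ)).comp (tendsto_add_atTop_nat 2)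
          refine this.congr fun k => ?_
          simp
        have hev := ht.eventually_const_lt (u := (1 - ‖x‖ ^ 2) * (1 - ‖y‖ ^ 2)) (by simpa using hgap)
        refine tendsto_const_nhds.congr' ?_
        filter_upwards [hev] with k hk
        simp only [f, g]
        unfold ker
        rw [indicator_of_mem (show (x, y) ∈ TS n _ from hk)]
        congr 1
        simp only
        rw [div_eq_mul_inv, mul_comm]
  have hX : 0 ≤ ∫ x, (wt α x * v x) ^ 2 * (1 - ‖x‖ ^ 2) ^ (-α) ∂μ := by
    refine integral_nonneg_of_ae ?_
    filter_upwards [hae1] with x hx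
    exact mul_nonneg (sq_nonneg _) (Real.rpow_nonneg (one_sub_sq_pos hx).le _)
  have hY : 0 ≤ ∫ x, v x ^ 2 ∂μ := integral_nonneg fun x => sq_nonneg _
  set X := ∫ x, (wt α x * v x) ^ 2 * (1 - ‖x‖ ^ 2) ^ (-α) ∂μ
  set Y := ∫ x, v x ^ 2 ∂μ
  have hC : 0 ≤ (Real.pi ^ (((n : ℝ) - 1) / 2) *
        (Real.Gamma ((1 + α) / 2) / Real.Gamma ((n + α) / 2))) := by
    have g1 := Real.Gamma_pos_of_pos (by linarith : 0 < (1 + α) / 2)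
    have g2 := Real.Gamma_pos_of_pos (by positivity : 0 < ((n : ℝ) + α) / 2)
    have := Real.pi_pos
    positivity
  set C := (Real.pi ^ (((n : ℝ) - 1) / 2) *
        (Real.Gamma ((1 + α) / 2) / Real.Gamma ((n + α) / 2)))
  have hJ : ∫⁻ x, ∫⁻ y, ENNReal.ofReal (wt α x * wt α y * (v x - v y) ^ 2 / ‖x - y‖ ^ ((n : ℝ) + α)) ∂μ ∂μ
      = ∫⁻ z, g z ∂(μ.prod μ) := by
    rw [lintegral_prod _ hgm.aemeasurable]
  rw [hJ]
  have hT : Tendsto (fun k => (1 / 2 : ℝ≥0∞) * (∫⁻ z, f k z ∂(μ.prod μ)) +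
      (ENNReal.ofReal (C * a k * X) + ENNReal.ofReal ((α - 1) * (2 - α) / 8 *
        ((volume : Measure E).toSphere.real univ) * Y))) atTop (𝓝 ((1 / 2 : ℝ≥0∞) * (∫⁻ z, g z ∂(μ.prod μ)) +
      (ENNReal.ofReal (C * ((eulerBeta ((1 + α) / 2) ((2 - α) / 2) - 2 ^ α) / α) * X) +
        ENNReal.ofReal ((α - 1) * (2 - α) / 8 *
        ((volume : Measure E).toSphere.real univ) * Y)))) := by
    refine Tendsto.add (ENNReal.Tendsto.const_mul hJlim (Or.inr (by simp))) (Tendsto.add ?_ tendsto_const_nhds)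
    exact ENNReal.tendsto_ofReal ((hlim.const_mul C).mul_const X)
  refine le_of_tendsto hT (.of_forall fun k => ?_)
  have hk := gs_trunc hn (ε := 1 / ((k : ℝ) + 2)) hα1 hα2 (by positivity)
    (by gcongr; linarith [(Nat.cast_nonneg k : (0:ℝ) ≤ k)]) hρ0 hρ hv hM hsupp
  refine le_trans ?_ hk
  rw [ENNReal.ofReal_add]
  · have : ∫⁻ z, f k z ∂(μ.prod μ) = ∫⁻ x in B, ∫⁻ y in B, ENNReal.ofReal
        (ker n α (1 / ((k : ℝ) + 2)) (x, y) * (wt α x * wt α y * (v x - v y) ^ 2)) := by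
      rw [lintegral_prod _ (hfm k).aemeasurable]
    rw [this]
    gcongr
    exact ha k
  · have := A_nonneg (α := α) (ε := 1 / ((k : ℝ) + 2)) (by positivity)
    positivity
  · have : 0 ≤ (α - 1) * (2 - α) := mul_nonneg (by linarith) (by linarith)
    positivity

end

end FHSM

namespace FHSM

section

variable {n : ℕ}

local notation "E" => EuclideanSpace ℝ (Fin n)

theorem D_facts {α ρ : ℝ} (hα1 : 1 < α) (hα2 : α < 2) (hρ : 0 < ρ) (hρ1 : ρ ≤ 1) {x y : E}
    (hx : x ∈ ball (0 : E) 1) (hy : y ∈ ball ((1 - ρ) • x) (ρ / 2)) :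
    y ∈ ball (0 : E) 1 ∧ ‖x - y‖ ≤ 2 * ρ ∧ wt α x ≤ 2 * wt α y := by
  have ha : ‖x‖ < 1 := by simpa using hx
  have ha0 := norm_nonneg x
  have hy0 := norm_nonneg y
  have hd : ‖y - (1 - ρ) • x‖ < ρ / 2 := by simpa [dist_eq_norm] using hy
  have h1 : ‖y‖ ≤ ‖y - (1 - ρ) • x‖ + (1 - ρ) * ‖x‖ := by
    have := norm_add_le (y - (1 - ρ) • x) ((1 - ρ) • x)
    rwa [sub_add_cancel, norm_smul, Real.norm_of_nonneg (by linarith)] at this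
  have h2 : (1 - ‖x‖) / 2 ≤ 1 - ‖y‖ := by nlinarith
  have h3 : ‖x - y‖ ≤ ρ * ‖x‖ + ‖y - (1 - ρ) • x‖ := by
    have := norm_sub_le (ρ • x) (y - (1 - ρ) • x)
    rw [norm_smul, Real.norm_of_nonneg hρ.le] at this
    have e : x - y = ρ • x - (y - (1 - ρ) • x) := by rw [sub_smul, one_smul]; abel
    rw [e]; exact this
  have hyB : y ∈ ball (0 : E) 1 := by simp; linarith
  refine ⟨hyB, by nlinarith, ?_⟩
  have hδx := one_sub_sq_pos hx
  have h4 : 1 - ‖x‖ ^ 2 ≤ 4 * (1 - ‖y‖ ^ 2) := by nlinarith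
  have hδy := one_sub_sq_pos hyB
  unfold wt
  calc _ ≤ (4 * (1 - ‖y‖ ^ 2)) ^ ((α - 1) / 2) := by
        apply Real.rpow_le_rpow hδx.le h4 (by linarith)
    _ = 4 ^ ((α - 1) / 2) * (1 - ‖y‖ ^ 2) ^ ((α - 1) / 2) :=
        Real.mul_rpow (by norm_num) hδy.le
    _ ≤ 2 * (1 - ‖y‖ ^ 2) ^ ((α - 1) / 2) := by
        gcongr
        calc (4:ℝ) ^ ((α - 1) / 2) ≤ 4 ^ ((1:ℝ)/2) := by
              apply Real.rpow_le_rpow_of_exponent_le (by norm_num); linarith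
          _ = 2 := by
              rw [show (4:ℝ) = 2 ^ (2:ℝ) by norm_num, ← Real.rpow_mul (by norm_num)]; norm_num

theorem avg {α ρ : ℝ} (hα1 : 1 < α) (hα2 : α < 2) (hρ : 0 < ρ) (hρ1 : ρ ≤ 1) {x : E}
    (hx : x ∈ ball (0 : E) 1) {v h : E → ℝ}
    (hk : IntegrableOn (fun y => wt α x * wt α y * (v x - v y) ^ 2 / ‖x - y‖ ^ ((n : ℝ) + α))
      (ball (0 : E) 1)) (hh : IntegrableOn h (ball (0 : E) 1))
    (hle : ∀ y ∈ ball ((1 - ρ) • x) (ρ / 2), 2 * wt α x ^ 2 * v y ^ 2 ≤ h y) :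
    (wt α x * v x) ^ 2 * volume.real (ball ((1 - ρ) • x) (ρ / 2)) ≤
      4 * (2 * ρ) ^ ((n : ℝ) + α) *
        (∫ y in ball (0 : E) 1, wt α x * wt α y * (v x - v y) ^ 2 / ‖x - y‖ ^ ((n : ℝ) + α)) +
      ∫ y in ball ((1 - ρ) • x) (ρ / 2), h y := by
  set D := ball ((1 - ρ) • x) (ρ / 2) with hD
  have hDB : D ⊆ ball (0 : E) 1 := fun y hy => (D_facts hα1 hα2 hρ hρ1 hx hy).1
  have hwx := wt_pos (α := α) hx
  have h1 : ∫ y in D, (wt α x * v x) ^ 2 ≤ ∫ y in D, (4 * (2 * ρ) ^ ((n : ℝ) + α) *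
      (wt α x * wt α y * (v x - v y) ^ 2 / ‖x - y‖ ^ ((n : ℝ) + α)) + h y) := by
    refine setIntegral_mono_on (integrableOn_const measure_ball_lt_top.ne)
      (((hk.mono_set hDB).const_mul _).add (hh.mono_set hDB)) measurableSet_ball ?_
    intro y hy
    obtain ⟨hyB, hd, hw⟩ := D_facts hα1 hα2 hρ hρ1 hx hy
    have hwy := wt_pos (α := α) hyB
    have e1 : (wt α x * v x) ^ 2 ≤ 2 * wt α x ^ 2 * (v x - v y) ^ 2 + 2 * wt α x ^ 2 * v y ^ 2 := by
      have : v x ^ 2 ≤ 2 * (v x - v y) ^ 2 + 2 * v y ^ 2 := by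
        nlinarith [sq_nonneg (v x - 2 * v y)]
      nlinarith [sq_nonneg (wt α x)]
    have e2 : wt α x ^ 2 * (v x - v y) ^ 2 ≤ 2 * (wt α x * wt α y * (v x - v y) ^ 2) := by
      have : wt α x ^ 2 ≤ 2 * (wt α x * wt α y) := by nlinarith
      nlinarith [sq_nonneg (v x - v y)]
    have e3 : wt α x * wt α y * (v x - v y) ^ 2 ≤ (2 * ρ) ^ ((n : ℝ) + α) *
        (wt α x * wt α y * (v x - v y) ^ 2 / ‖x - y‖ ^ ((n : ℝ) + α)) := by
      by_cases hxy : x = y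
      · subst hxy; simp
      · have hp : 0 < ‖x - y‖ := norm_pos_iff.2 (sub_ne_zero.2 hxy)
        have hp' := Real.rpow_pos_of_pos hp ((n : ℝ) + α)
        rw [mul_div_assoc', le_div_iff₀ hp', mul_comm]
        gcongr
    have e4 := hle y hy
    linarith
  rw [setIntegral_const, smul_eq_mul, mul_comm, integral_add ((hk.mono_set hDB).const_mul _)
    (hh.mono_set hDB), integral_const_mul] at h1
  refine h1.trans ?_
  gcongr
  · refine (ae_restrict_iff' measurableSet_ball).2 (.of_forall fun y hy => ?_)
    have hwy := wt_pos (α := α) hy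
    positivity

theorem combine {α m C U g Y N : ℝ} (hα : 0 < α) (hm : α < m) (hC : 0 ≤ C) (hg : 0 ≤ g) (hY : 0 ≤ Y)
    (hN : 0 < N)
    (h1 : ∀ ρ : ℝ, 0 < ρ → ρ ≤ 1 → U ≤ C * (ρ ^ α * g + ρ ^ (-(m - α)) * N))
    (h2 : U ≤ C * (g + Y)) :
    U ≤ 2 * C * ((g + Y) ^ (1 - α / m) * N ^ (α / m)) := by
  have hm0 : 0 < m := hα.trans hm
  rcases (add_nonneg hg hY).eq_or_lt with hG | hG
  · rw [← hG, mul_zero] at h2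
    rw [← hG]
    refine h2.trans ?_
    have := Real.rpow_nonneg (le_refl (0:ℝ)) (1 - α / m)
    positivity
  set G := g + Y with hGd
  have hgG : g ≤ G := by linarith
  rcases le_total G N with hGN | hGN
  · calc U ≤ C * G := h2
      _ = C * (G ^ (1 - α / m) * G ^ (α / m)) := by
        rw [← Real.rpow_add hG]; simp
      _ ≤ C * (G ^ (1 - α / m) * N ^ (α / m)) := by gcongr
      _ ≤ _ := by
        have : 0 ≤ C * (G ^ (1 - α / m) * N ^ (α / m)) := by positivity
        linarith
  · have hq : 0 < N / G := by positivity
    have hq1 : N / G ≤ 1 := (div_le_one hG).2 hGN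
    have h := h1 ((N / G) ^ (1 / m)) (by positivity) (Real.rpow_le_one hq.le hq1 (by positivity))
    rw [← Real.rpow_mul hq.le, ← Real.rpow_mul hq.le, Real.div_rpow hN.le hG.le,
      Real.div_rpow hN.le hG.le] at h
    have e1 : N ^ (1 / m * α) / G ^ (1 / m * α) * G = G ^ (1 - α / m) * N ^ (α / m) := by
      rw [Real.rpow_sub hG, Real.rpow_one, show 1 / m * α = α / m by ring]; ring
    have e2 : N ^ (1 / m * -(m - α)) / G ^ (1 / m * -(m - α)) * N = G ^ (1 - α / m) * N ^ (α / m) := by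
      have : 1 / m * -(m - α) = -(1 - α / m) := by field_simp
      rw [this, Real.rpow_neg hN.le, Real.rpow_neg hG.le, Real.rpow_sub hN, Real.rpow_one]
      have := Real.rpow_pos_of_pos hN (α / m)
      field_simp
    calc U ≤ _ := h
      _ ≤ C * (N ^ (1 / m * α) / G ^ (1 / m * α) * G + G ^ (1 - α / m) * N ^ (α / m)) := by
        rw [e2]; gcongr
      _ = _ := by rw [e1]; ring

theorem holder_D {q : ℝ} (hq : 2 < q) {D : Set E} (hDm : MeasurableSet D) (hDB : D ⊆ ball (0 : E) 1)
    {u : E → ℝ} {M : ℝ} (hu : Measurable u) (hM : ∀ x ∈ ball (0 : E) 1, |u x| ≤ M) :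
    ∫ y in D, u y ^ 2 ≤ (∫ y in ball (0 : E) 1, |u y| ^ q) ^ (2 / q) * (volume.real D) ^ (1 - 2 / q) := by
  have hfin : volume D ≠ ∞ := ((measure_mono hDB).trans_lt measure_ball_lt_top).ne
  have : IsFiniteMeasure (volume.restrict D) := ⟨by simpa using hfin.lt_top⟩
  have hpq : (q / 2).HolderConjugate (1 - 2 / q)⁻¹ := by
    rw [Real.holderConjugate_iff]
    refine ⟨by linarith, ?_⟩
    rw [inv_inv, inv_div]; ring
  have hM0 : ∀ᵐ y ∂(volume.restrict D), ‖u y ^ 2‖ ≤ M ^ 2 := by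
    refine (ae_restrict_iff' hDm).2 (.of_forall fun y hy => ?_)
    rw [Real.norm_eq_abs, abs_pow]
    have := hM y (hDB hy)
    gcongr
  have h := integral_mul_le_Lp_mul_Lq_of_nonneg (μ := volume.restrict D) hpq (f := fun y => u y ^ 2)
    (g := fun _ => 1) (.of_forall fun y => sq_nonneg _) (.of_forall fun y => zero_le_one)
    (MemLp.of_bound (by fun_prop) (M ^ 2) hM0) (memLp_const 1)
  simp only [mul_one, Real.one_rpow, integral_const, smul_eq_mul, measureReal_restrict_apply_univ,
    one_div, inv_inv, inv_div] at h
  refine h.trans ?_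
  have e : ∀ y, (u y ^ 2) ^ (q / 2) = |u y| ^ q := by
    intro y
    rw [← sq_abs, ← Real.rpow_two, ← Real.rpow_mul (abs_nonneg _)]
    congr 1; ring
  simp only [e]
  have hmono : ∫ y in D, |u y| ^ q ≤ ∫ y in ball (0 : E) 1, |u y| ^ q := by
    refine setIntegral_mono_set ?_ (.of_forall fun y => by positivity) (.of_forall hDB)
    refine Measure.integrableOn_of_bounded (M := M ^ q) measure_ball_lt_top.ne
      (Measurable.aestronglyMeasurable (by fun_prop)) ?_
    refine (ae_restrict_iff' measurableSet_ball).2 (.of_forall fun y hy => ?_)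
    rw [Real.norm_of_nonneg (by positivity)]
    have := hM y hy
    gcongr
  gcongr

theorem pow_step {U C G I a b s : ℝ} (hU : 0 ≤ U) (hC : 0 < C) (hG : 0 ≤ G) (hI : 0 < I) (hs : 0 ≤ s)
    (hbs : b * s = 1) (h : U ≤ 2 * C * (G ^ b * (I ^ b) ^ a)) :
    U ^ s ≤ (2 * C) ^ s * (G * I ^ a) := by
  have h1 : 0 ≤ G ^ b := Real.rpow_nonneg hG _
  have h2 : 0 ≤ (I ^ b) ^ a := Real.rpow_nonneg (Real.rpow_nonneg hI.le _) _
  have h3 : (0:ℝ) ≤ 2 * C := by positivity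
  calc U ^ s ≤ (2 * C * (G ^ b * (I ^ b) ^ a)) ^ s := Real.rpow_le_rpow hU h hs
    _ = (2 * C) ^ s * (G ^ (b * s) * I ^ (b * s * a)) := by
      rw [Real.mul_rpow h3 (mul_nonneg h1 h2), Real.mul_rpow h1 h2,
        ← Real.rpow_mul hG, ← Real.rpow_mul hI.le, ← Real.rpow_mul hI.le]
      congr 3; ring
    _ = _ := by rw [hbs, Real.rpow_one, one_mul]

set_option maxHeartbeats 1000000 in
theorem ptw (hn : 2 ≤ n) {α : ℝ} (hα1 : 1 < α) (hα2 : α < 2) : ∃ C : ℝ, 0 < C ∧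
    ∀ (v : E → ℝ) (M : ℝ), Measurable v → (∀ x, |v x| ≤ M) → ∀ x ∈ ball (0 : E) 1,
    0 < (∫ y in ball (0 : E) 1, |wt α y * v y| ^ ((2 * n) / ((n : ℝ) - α))) →
    IntegrableOn (fun y => wt α x * wt α y * (v x - v y) ^ 2 / ‖x - y‖ ^ ((n : ℝ) + α))
      (ball (0 : E) 1) →
    |wt α x * v x| ^ ((2 * n) / ((n : ℝ) - α)) ≤ C *
      (∫ y in ball (0 : E) 1, |wt α y * v y| ^ ((2 * n) / ((n : ℝ) - α))) ^ (α / n) *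
      ((∫ y in ball (0 : E) 1, wt α x * wt α y * (v x - v y) ^ 2 / ‖x - y‖ ^ ((n : ℝ) + α)) +
        ∫ y in ball (0 : E) 1, v y ^ 2) := by
  have hm2 : (2:ℝ) ≤ n := by exact_mod_cast hn
  obtain ⟨m, hm⟩ : ∃ m : ℝ, m = n := ⟨n, rfl⟩
  rw [← hm] at hm2
  simp only [← hm]
  have hmα : 0 < m - α := by linarith
  have hnt : Nontrivial E := by
    have : Nonempty (Fin n) := ⟨⟨0, by omega⟩⟩
    infer_instance
  set V : ℝ := volume.real (ball (0 : E) 1) with hV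
  have hV0 : 0 < V := by
    rw [hV]; exact ENNReal.toReal_pos (measure_ball_pos _ _ one_pos).ne' measure_ball_lt_top.ne
  set W : ℝ := V / 2 ^ m with hW
  have hW0 : 0 < W := by positivity
  set C : ℝ := 4 * 2 ^ (m + α) / W + 8 * W ^ (α / m - 1) + 2 / W with hC
  have hC0 : 0 < C := by positivity
  set q : ℝ := (2 * m) / (m - α) with hq
  have hq2 : 2 < q := by rw [hq, lt_div_iff₀ hmα]; linarith
  have h2q : 2 / q = 1 - α / m := by rw [hq]; field_simp
  refine ⟨(2 * C) ^ (q / 2), by positivity, ?_⟩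
  intro v M hv hM x hx hI hk
  have hk' := hk
  rw [hm] at hk'
  have hwm := wt_measurable (n := n) α
  have hM0 : 0 ≤ M := (abs_nonneg _).trans (hM 0)
  have hvi : IntegrableOn (fun y => v y ^ 2) (ball (0 : E) 1) := by
    refine Measure.integrableOn_of_bounded (M := M ^ 2) measure_ball_lt_top.ne (by fun_prop) ?_
    refine .of_forall fun y => ?_
    rw [Real.norm_eq_abs, abs_pow]
    have := hM y
    gcongr
  have huM : ∀ y ∈ ball (0 : E) 1, |wt α y * v y| ≤ M := by
    intro y hy
    rw [abs_mul, abs_of_pos (wt_pos hy)]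
    calc _ ≤ 1 * M := by gcongr; exacts [wt_le_one hα1 hy, hM y]
      _ = M := one_mul M
  have hui : IntegrableOn (fun y => 8 * (wt α y * v y) ^ 2) (ball (0 : E) 1) := by
    refine Measure.integrableOn_of_bounded (M := 8 * M ^ 2) measure_ball_lt_top.ne (by fun_prop) ?_
    refine (ae_restrict_iff' measurableSet_ball).2 (.of_forall fun y hy => ?_)
    rw [Real.norm_eq_abs, abs_mul, abs_pow]
    have := huM y hy
    rw [show |(8:ℝ)| = 8 by norm_num]
    gcongr
  have hY0 : 0 ≤ ∫ y in ball (0 : E) 1, v y ^ 2 := integral_nonneg fun _ => sq_nonneg _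
  have hg0 : 0 ≤ ∫ y in ball (0 : E) 1, wt α x * wt α y * (v x - v y) ^ 2 / ‖x - y‖ ^ (m + α) := by
    refine setIntegral_nonneg measurableSet_ball fun y hy => ?_
    have h1 := wt_pos (α := α) hx
    have h2 := wt_pos (α := α) hy
    positivity
  have hDv : ∀ ρ : ℝ, 0 < ρ → volume.real (ball ((1 - ρ) • x) (ρ / 2)) = W * ρ ^ m := by
    intro ρ hρ
    rw [Measure.real, Measure.addHaar_ball volume _ (by positivity : 0 ≤ ρ / 2),
      ENNReal.toReal_mul, ENNReal.toReal_ofReal (by positivity), ← Measure.real]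
    rw [finrank_euclideanSpace, Fintype.card_fin, hW, ← hV, div_pow, hm, Real.rpow_natCast,
      Real.rpow_natCast]
    ring
  set g := ∫ y in ball (0 : E) 1, wt α x * wt α y * (v x - v y) ^ 2 / ‖x - y‖ ^ (m + α) with hg
  set Y := ∫ y in ball (0 : E) 1, v y ^ 2 with hYd
  set I := ∫ y in ball (0 : E) 1, |wt α y * v y| ^ q with hId
  have hN : 0 < I ^ (2 / q) := Real.rpow_pos_of_pos hI _
  have hcomb := combine (α := α) (m := m) (C := C) (U := (wt α x * v x) ^ 2) (g := g) (Y := Y)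
    (N := I ^ (2 / q)) (by linarith) (by linarith) hC0.le hg0 hY0 hN ?_ ?_
  · have e : |wt α x * v x| ^ q = ((wt α x * v x) ^ 2) ^ (q / 2) := by
      rw [← sq_abs, ← Real.rpow_two, ← Real.rpow_mul (abs_nonneg _)]
      congr 1; ring
    rw [e]
    rw [← h2q] at hcomb
    have := pow_step (sq_nonneg (wt α x * v x)) hC0 (add_nonneg hg0 hY0) hI (by positivity)
      (show 2 / q * (q / 2) = 1 by field_simp) hcomb
    refine this.trans (le_of_eq ?_)
    ring
  · intro ρ hρ hρ1
    have h := avg hα1 hα2 hρ hρ1 hx hk' hui ?_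
    · rw [integral_const_mul] at h
      have hH := holder_D hq2 measurableSet_ball
        (fun y hy => (D_facts hα1 hα2 hρ hρ1 hx hy).1 : ball ((1 - ρ) • x) (ρ / 2) ⊆ ball (0 : E) 1)
        (hwm.mul hv) huM
      have h' := h.trans (add_le_add_right (mul_le_mul_of_nonneg_left hH (by norm_num : (0:ℝ) ≤ 8)) _)
      simp only [Pi.mul_apply] at h'
      rw [hDv ρ hρ, ← hId, show 1 - 2 / q = α / m by rw [h2q]; ring, ← hm, ← hg] at h'
      have hWρ : 0 < W * ρ ^ m := by positivity
      rw [← le_div_iff₀ hWρ] at h'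
      refine h'.trans ?_
      have e1 : (4 * (2 * ρ) ^ (m + α) * g) / (W * ρ ^ m) = 4 * 2 ^ (m + α) / W * (ρ ^ α * g) := by
        rw [Real.mul_rpow (by norm_num) hρ.le, Real.rpow_add hρ]
        have := Real.rpow_pos_of_pos hρ m
        field_simp
      have e2 : (8 * (I ^ (2 / q) * (W * ρ ^ m) ^ (α / m))) / (W * ρ ^ m) =
          8 * W ^ (α / m - 1) * (ρ ^ (-(m - α)) * I ^ (2 / q)) := by
        have : (W * ρ ^ m) ^ (α / m) / (W * ρ ^ m) = W ^ (α / m - 1) * ρ ^ (-(m - α)) := by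
          have h3 : (W * ρ ^ m) ^ (α / m) / (W * ρ ^ m) = (W * ρ ^ m) ^ (α / m - 1) := by
            rw [Real.rpow_sub hWρ, Real.rpow_one]
          rw [h3, Real.mul_rpow hW0.le (by positivity), ← Real.rpow_mul hρ.le]
          congr 2
          field_simp
          ring
        calc _ = 8 * I ^ (2 / q) * ((W * ρ ^ m) ^ (α / m) / (W * ρ ^ m)) := by ring
          _ = _ := by rw [this]; ring
      rw [add_div, e1, e2, mul_add]
      have hp1 : 0 < ρ ^ α := by positivity
      have hp2 : 0 < ρ ^ (-(m - α)) := by positivity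
      have t1 : 0 < 4 * 2 ^ (m + α) / W := by positivity
      have t2 : 0 < 8 * W ^ (α / m - 1) := by positivity
      have t3 : 0 < 2 / W := by positivity
      gcongr <;> rw [hC] <;> linarith
    · intro y hy
      obtain ⟨hyB, hd, hw⟩ := D_facts hα1 hα2 hρ hρ1 hx hy
      have hwx := wt_pos (α := α) hx
      have : wt α x ^ 2 ≤ (2 * wt α y) ^ 2 := by gcongr
      nlinarith [sq_nonneg (v y)]
  · have h := avg hα1 hα2 one_pos le_rfl hx hk' (hvi.const_mul 2) ?_
    · rw [integral_const_mul, hDv 1 one_pos, Real.one_rpow, mul_one, mul_one, ← hm, ← hg] at h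
      have hD : ∫ y in ball (((1:ℝ) - 1) • x) (1 / 2), v y ^ 2 ≤ Y := by
        refine setIntegral_mono_set hvi (.of_forall fun y => sq_nonneg _) (.of_forall ?_)
        exact fun y hy => (D_facts hα1 hα2 one_pos le_rfl hx hy).1
      have h' := h.trans (add_le_add_right (mul_le_mul_of_nonneg_left hD (by norm_num : (0:ℝ) ≤ 2)) _)
      rw [← le_div_iff₀ hW0] at h'
      refine h'.trans ?_
      rw [add_div, mul_add]
      rw [show 4 * 2 ^ (m + α) * g / W = 4 * 2 ^ (m + α) / W * g by ring,
        show 2 * Y / W = 2 / W * Y by ring]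
      have t1 : 0 < 4 * 2 ^ (m + α) / W := by positivity
      have t2 : 0 < 8 * W ^ (α / m - 1) := by positivity
      have t3 : 0 < 2 / W := by positivity
      gcongr <;> rw [hC] <;> linarith
    · intro y hy
      have hwx := wt_pos (α := α) hx
      have : wt α x ^ 2 ≤ 1 := by
        have := wt_le_one hα1 hx
        nlinarith
      nlinarith [sq_nonneg (v y)]

theorem sobolev (hn : 2 ≤ n) {α : ℝ} (hα1 : 1 < α) (hα2 : α < 2) : ∃ C : ℝ, 0 < C ∧
    ∀ (v : E → ℝ) (M : ℝ), Measurable v → (∀ x, |v x| ≤ M) →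
    ENNReal.ofReal ((∫ y in ball (0 : E) 1, |wt α y * v y| ^ ((2 * n) / ((n : ℝ) - α))) ^
      (2 / ((2 * n) / ((n : ℝ) - α)))) ≤ ENNReal.ofReal C *
      ((∫⁻ x in ball (0 : E) 1, ∫⁻ y in ball (0 : E) 1,
        ENNReal.ofReal (wt α x * wt α y * (v x - v y) ^ 2 / ‖x - y‖ ^ ((n : ℝ) + α))) +
        ENNReal.ofReal (∫ y in ball (0 : E) 1, v y ^ 2)) := by
  obtain ⟨C, hC, hp⟩ := ptw (n := n) hn hα1 hα2
  have hm2 : (2:ℝ) ≤ n := by exact_mod_cast hn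
  set V : ℝ := volume.real (ball (0 : E) 1) with hV
  refine ⟨C * (1 + V), by positivity, ?_⟩
  intro v M hv hM
  have hwm := wt_measurable (n := n) α
  have hM0 : 0 ≤ M := (abs_nonneg _).trans (hM 0)
  set q : ℝ := (2 * n) / ((n : ℝ) - α) with hq
  have hmα : 0 < (n:ℝ) - α := by linarith
  have hq0 : 0 < q := by positivity
  have h2q : 2 / q = 1 - α / n := by rw [hq]; field_simp
  have hI0 : 0 ≤ ∫ y in ball (0 : E) 1, |wt α y * v y| ^ q := integral_nonneg fun _ => by positivity
  have huM : ∀ y ∈ ball (0 : E) 1, |wt α y * v y| ≤ M := by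
    intro y hy
    rw [abs_mul, abs_of_pos (wt_pos hy)]
    calc _ ≤ 1 * M := by gcongr; exacts [wt_le_one hα1 hy, hM y]
      _ = M := one_mul M
  have hIi : IntegrableOn (fun y => |wt α y * v y| ^ q) (ball (0 : E) 1) := by
    refine Measure.integrableOn_of_bounded (M := M ^ q) measure_ball_lt_top.ne
      (Measurable.aestronglyMeasurable (by fun_prop)) ?_
    refine (ae_restrict_iff' measurableSet_ball).2 (.of_forall fun y hy => ?_)
    rw [Real.norm_of_nonneg (by positivity)]
    have := huM y hy
    gcongr
  have hIl := ofReal_integral_eq_lintegral_ofReal hIi (.of_forall fun _ => by positivity)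
  rcases hI0.eq_or_lt with hI | hI
  · rw [← hI, Real.zero_rpow (by positivity)]; simp
  set I := ∫ y in ball (0 : E) 1, |wt α y * v y| ^ q with hId
  set Y := ∫ y in ball (0 : E) 1, v y ^ 2 with hYd
  have hY0 : 0 ≤ Y := integral_nonneg fun _ => sq_nonneg _
  set J : E → ℝ≥0∞ := fun x => ∫⁻ y in ball (0 : E) 1,
        ENNReal.ofReal (wt α x * wt α y * (v x - v y) ^ 2 / ‖x - y‖ ^ ((n : ℝ) + α)) with hJ
  have hpt : ∀ x ∈ ball (0 : E) 1, ENNReal.ofReal (|wt α x * v x| ^ q) ≤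
      ENNReal.ofReal (C * I ^ (α / n)) * (J x + ENNReal.ofReal Y) := by
    intro x hx
    by_cases hfin : J x = ∞
    · rw [hfin, top_add, ENNReal.mul_top]
      · exact le_top
      · rw [ne_eq, ENNReal.ofReal_eq_zero, not_le]; positivity
    have hnn : ∀ᵐ y ∂(volume.restrict (ball (0 : E) 1)),
        0 ≤ wt α x * wt α y * (v x - v y) ^ 2 / ‖x - y‖ ^ ((n : ℝ) + α) := by
      refine (ae_restrict_iff' measurableSet_ball).2 (.of_forall fun y hy => ?_)
      have h1 := wt_pos (α := α) hx
      have h2 := wt_pos (α := α) hy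
      positivity
    have hki : IntegrableOn (fun y => wt α x * wt α y * (v x - v y) ^ 2 / ‖x - y‖ ^ ((n : ℝ) + α))
        (ball (0 : E) 1) := by
      refine ⟨Measurable.aestronglyMeasurable (by fun_prop), ?_⟩
      rw [hasFiniteIntegral_iff_ofReal hnn]
      exact lt_top_iff_ne_top.2 hfin
    have hJx := ofReal_integral_eq_lintegral_ofReal hki hnn
    have h := hp v M hv hM x hx hI hki
    rw [show J x = _ from hJx.symm, ← ENNReal.ofReal_add (integral_nonneg_of_ae hnn) hY0,
      ← ENNReal.ofReal_mul (by positivity)]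
    exact ENNReal.ofReal_le_ofReal h
  have hmain : ENNReal.ofReal I ≤ ENNReal.ofReal (C * I ^ (α / n)) *
      ((∫⁻ x in ball (0 : E) 1, J x) + ENNReal.ofReal Y * ENNReal.ofReal V) := by
    rw [hIl]
    calc _ ≤ ∫⁻ x in ball (0 : E) 1, ENNReal.ofReal (C * I ^ (α / n)) * (J x + ENNReal.ofReal Y) :=
          setLIntegral_mono' measurableSet_ball hpt
      _ = _ := by
          rw [lintegral_const_mul' _ _ ENNReal.ofReal_ne_top, lintegral_add_right _ measurable_const,
            setLIntegral_const, hV, Measure.real, ENNReal.ofReal_toReal measure_ball_lt_top.ne]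
  set JJ := ∫⁻ x in ball (0 : E) 1, J x
  have e0 : I ^ (2 / q) = I ^ (-(α / n)) * I := by
    rw [h2q, Real.rpow_sub hI, Real.rpow_one, Real.rpow_neg hI.le]; ring
  have e1 : I ^ (-(α / n)) * (C * I ^ (α / n)) = C := by
    rw [Real.rpow_neg hI.le]
    have := Real.rpow_pos_of_pos hI (α / n)
    field_simp
  have hV0 : 0 ≤ V := by positivity
  rw [e0, ENNReal.ofReal_mul (by positivity)]
  calc _ ≤ ENNReal.ofReal (I ^ (-(α / n))) * (ENNReal.ofReal (C * I ^ (α / n)) *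
      (JJ + ENNReal.ofReal Y * ENNReal.ofReal V)) := by gcongr
    _ = ENNReal.ofReal C * (JJ + ENNReal.ofReal Y * ENNReal.ofReal V) := by
      rw [← mul_assoc, ← ENNReal.ofReal_mul (by positivity), e1]
    _ ≤ ENNReal.ofReal C * ((JJ + ENNReal.ofReal Y) * ENNReal.ofReal (1 + V)) := by
      rw [add_mul]
      gcongr
      · refine le_mul_of_one_le_right zero_le ?_
        rw [ENNReal.one_le_ofReal]; linarith
      · linarith
    _ = _ := by
      rw [ENNReal.ofReal_mul hC.le]; ring

end

end FHSM

namespace FHSM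

section

variable {n : ℕ}

local notation "E" => EuclideanSpace ℝ (Fin n)

theorem unit_ball (hn : 2 ≤ n) {α : ℝ} (hα1 : 1 < α) (hα2 : α < 2) :
    ∃ c : ℝ, 0 < c ∧ ∀ u : E → ℝ,
      Continuous u → HasCompactSupport u → tsupport u ⊆ ball 0 1 →
        ENNReal.ofReal ((2 : ℝ) ^ α * kappa n α *
          ∫ x in ball (0 : E) 1, (u x) ^ 2 * (1 - ‖x‖ ^ 2) ^ (-α)) +
        ENNReal.ofReal (c *
          (∫ x in ball (0 : E) 1,
            |u x| ^ ((2 * n) / ((n : ℝ) - α))) ^ (2 / ((2 * n) / ((n : ℝ) - α)))) ≤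
      energy n α (ball 0 1) u := by
  obtain ⟨C, hC, hsob⟩ := sobolev (n := n) hn hα1 hα2
  have hnt : Nontrivial E := by
    have : Nonempty (Fin n) := ⟨⟨0, by omega⟩⟩
    infer_instance
  set c1 : ℝ := (α - 1) * (2 - α) / 8 * ((volume : Measure E).toSphere.real univ) with hc1
  have hc10 : 0 < c1 := by
    have h1 : 0 < (α - 1) * (2 - α) := mul_pos (by linarith) (by linarith)
    have h2 : 0 < (volume : Measure E).toSphere.real univ := by
      rw [Measure.toSphere_real_apply_univ]
      have : 0 < volume.real (ball (0 : E) 1) :=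
        ENNReal.toReal_pos (measure_ball_pos _ _ one_pos).ne' measure_ball_lt_top.ne
      have h3 : 0 < Module.finrank ℝ E := Module.finrank_pos
      positivity
    positivity
  refine ⟨min (1 / 2) c1 / C, by positivity, ?_⟩
  intro u hu hcs hsupp
  obtain ⟨ρ, hρ, hsub⟩ := exists_pos_lt_subset_ball one_pos (isClosed_tsupport u) hsupp
  obtain ⟨U0, hU0⟩ := hcs.exists_bound_of_continuous hu
  have hU00 : 0 ≤ U0 := (norm_nonneg _).trans (hU0 0)
  set v : E → ℝ := fun x => u x / wt α x with hv
  have hwm := wt_measurable (n := n) α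
  have hum : Measurable u := hu.measurable
  have hvm : Measurable v := by fun_prop
  have hz : ∀ x, ρ < ‖x‖ → u x = 0 := by
    intro x hx
    by_contra h
    have := hsub (subset_tsupport u h)
    simp at this; linarith
  have hvz : ∀ x, ρ < ‖x‖ → v x = 0 := fun x hx => by simp [hv, hz x hx]
  have hρ1 : 0 < 1 - ρ ^ 2 := by nlinarith [hρ.1, hρ.2]
  have hvM : ∀ x, |v x| ≤ U0 / (1 - ρ ^ 2) ^ ((α - 1) / 2) := by
    intro x
    by_cases hx : ρ < ‖x‖
    · rw [hvz x hx, abs_zero]; positivity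
    · rw [not_lt] at hx
      have h1 : (1 - ρ ^ 2) ^ ((α - 1) / 2) ≤ wt α x := by
        unfold wt
        apply Real.rpow_le_rpow hρ1.le _ (by linarith)
        gcongr
      have h2 := Real.rpow_pos_of_pos hρ1 ((α - 1) / 2)
      simp only [hv]
      rw [abs_div, abs_of_pos (h2.trans_le h1)]
      gcongr
      exact hU0 x
  have hwv : ∀ x ∈ ball (0 : E) 1, wt α x * v x = u x := by
    intro x hx
    have := (wt_pos (α := α) hx).ne'
    simp only [hv]; field_simp
  have hG := gs_full hn hα1 hα2 hρ.1.le hρ.2 hvm hvM hvz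
  have hS := hsob v _ hvm hvM
  have e1 : ∫ x in ball (0 : E) 1, (wt α x * v x) ^ 2 * (1 - ‖x‖ ^ 2) ^ (-α) =
      ∫ x in ball (0 : E) 1, (u x) ^ 2 * (1 - ‖x‖ ^ 2) ^ (-α) :=
    setIntegral_congr_fun measurableSet_ball fun x hx => by simp only [hwv x hx]
  have e2 : ∫ x in ball (0 : E) 1, |wt α x * v x| ^ ((2 * n) / ((n : ℝ) - α)) =
      ∫ x in ball (0 : E) 1, |u x| ^ ((2 * n) / ((n : ℝ) - α)) :=
    setIntegral_congr_fun measurableSet_ball fun x hx => by simp only [hwv x hx]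
  have e3 : (1 / 2 : ℝ≥0∞) * (∫⁻ x in ball (0 : E) 1, ∫⁻ y in ball (0 : E) 1,
        ENNReal.ofReal ((wt α x * v x - wt α y * v y) ^ 2 / ‖x - y‖ ^ ((n : ℝ) + α))) =
      energy n α (ball 0 1) u := by
    unfold energy
    congr 1
    refine setLIntegral_congr_fun measurableSet_ball fun x hx => ?_
    refine setLIntegral_congr_fun measurableSet_ball fun y hy => ?_
    simp only [hwv x hx, hwv y hy]
  rw [e1, e3, ← hc1] at hG
  rw [e2] at hS
  have e4 : (2 : ℝ) ^ α * kappa n α = (Real.pi ^ (((n : ℝ) - 1) / 2) *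
        (Real.Gamma ((1 + α) / 2) / Real.Gamma ((n + α) / 2))) *
        ((eulerBeta ((1 + α) / 2) ((2 - α) / 2) - 2 ^ α) / α) := by
    unfold kappa
    have : (0:ℝ) < 2 ^ α := by positivity
    have : α ≠ 0 := by linarith
    field_simp
  rw [e4]
  refine le_trans ?_ hG
  rw [add_left_comm]
  refine add_le_add le_rfl ?_
  set J := ∫⁻ x in ball (0 : E) 1, ∫⁻ y in ball (0 : E) 1,
        ENNReal.ofReal (wt α x * wt α y * (v x - v y) ^ 2 / ‖x - y‖ ^ ((n : ℝ) + α))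
  set Y := ∫ x in ball (0 : E) 1, v x ^ 2
  have hhalf : ENNReal.ofReal (1 / 2) = (1 / 2 : ℝ≥0∞) := by
    rw [ENNReal.ofReal_div_of_pos two_pos]; simp
  rw [ENNReal.ofReal_mul (by positivity)]
  calc _ ≤ ENNReal.ofReal (min (1 / 2) c1 / C) * (ENNReal.ofReal C * (J + ENNReal.ofReal Y)) := by
        gcongr
    _ = ENNReal.ofReal (min (1 / 2) c1) * J + ENNReal.ofReal (min (1 / 2) c1) * ENNReal.ofReal Y := by
        rw [← mul_assoc, ← ENNReal.ofReal_mul (by positivity), div_mul_cancel₀ _ hC.ne', mul_add]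
    _ ≤ _ := by
        rw [← hhalf, ENNReal.ofReal_mul hc10.le]
        gcongr
        · exact min_le_left _ _
        · exact min_le_right _ _

theorem lint_scale {r : ℝ} (hr : 0 < r) (f : E → ℝ≥0∞) :
    ∫⁻ x in ball (0 : E) r, f x = ENNReal.ofReal (r ^ n) * ∫⁻ x in ball (0 : E) 1, f (r • x) := by
  have hme := (Homeomorph.smulOfNeZero r hr.ne' : E ≃ₜ E).measurableEmbedding
  have h1 := hme.lintegral_map (μ := (volume : Measure E)) ((ball (0 : E) r).indicator f)
  have h2 : Measure.map (⇑(Homeomorph.smulOfNeZero r hr.ne' : E ≃ₜ E)) (volume : Measure E) =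
      ENNReal.ofReal |(r ^ Module.finrank ℝ E)⁻¹| • volume := Measure.map_addHaar_smul volume hr.ne'
  rw [h2, lintegral_smul_measure, lintegral_indicator measurableSet_ball] at h1
  have h3 : ∀ x : E, (ball (0 : E) r).indicator f ((Homeomorph.smulOfNeZero r hr.ne' : E ≃ₜ E) x) =
      (ball (0 : E) 1).indicator (fun x => f (r • x)) x := by
    intro x
    have hiff : r • x ∈ ball (0 : E) r ↔ x ∈ ball (0 : E) 1 := by
      simp only [mem_ball_zero_iff, norm_smul, Real.norm_of_nonneg hr.le]
      exact ⟨fun h => by nlinarith, fun h => by nlinarith⟩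
    change (ball (0 : E) r).indicator f (r • x) = _
    by_cases h : x ∈ ball (0 : E) 1
    · rw [indicator_of_mem h, indicator_of_mem (hiff.2 h)]
    · rw [indicator_of_notMem h, indicator_of_notMem (fun hh => h (hiff.1 hh))]
  simp only [h3] at h1
  rw [lintegral_indicator measurableSet_ball] at h1
  rw [← h1, finrank_euclideanSpace, Fintype.card_fin, smul_eq_mul, ← mul_assoc, ← ENNReal.ofReal_mul (by positivity),
    abs_of_pos (by positivity), mul_inv_cancel₀ (by positivity)]
  simp

theorem energy_scale {r α : ℝ} (hr : 0 < r) (u : E → ℝ) :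
    energy n α (ball 0 r) u = ENNReal.ofReal (r ^ ((n : ℝ) - α)) *
      energy n α (ball 0 1) (fun x => u (r • x)) := by
  unfold energy
  rw [lint_scale hr]
  simp only [lint_scale hr]
  have h : ∀ x y : E, ENNReal.ofReal ((u (r • x) - u (r • y)) ^ 2 / ‖r • x - r • y‖ ^ ((n : ℝ) + α)) =
      ENNReal.ofReal (r ^ (-((n : ℝ) + α))) *
      ENNReal.ofReal ((u (r • x) - u (r • y)) ^ 2 / ‖x - y‖ ^ ((n : ℝ) + α)) := by
    intro x y
    rw [← ENNReal.ofReal_mul (by positivity), ← smul_sub, norm_smul, Real.norm_of_nonneg hr.le,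
      Real.mul_rpow hr.le (norm_nonneg _), Real.rpow_neg hr.le]
    congr 1
    rw [div_mul_eq_div_div, div_eq_mul_inv _ (r ^ _)]
    ring
  simp only [h]
  simp only [lintegral_const_mul' _ _ ENNReal.ofReal_ne_top]
  have e : r ^ ((n : ℝ) - α) = r ^ n * (r ^ n * r ^ (-((n : ℝ) + α))) := by
    rw [← Real.rpow_natCast, ← Real.rpow_add hr, ← Real.rpow_add hr]
    congr 1; ring
  rw [e, ENNReal.ofReal_mul (by positivity), ENNReal.ofReal_mul (by positivity)]
  ring

theorem int_scale {r : ℝ} (hr : 0 < r) (f : E → ℝ) :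
    ∫ x in ball (0 : E) r, f x = r ^ n * ∫ x in ball (0 : E) 1, f (r • x) := by
  have h := Measure.setIntegral_comp_smul_of_pos (volume : Measure E) f (ball (0 : E) 1) hr
  rw [smul_unitBall_of_pos hr, finrank_euclideanSpace, Fintype.card_fin, smul_eq_mul] at h
  rw [h, ← mul_assoc, mul_inv_cancel₀ (by positivity), one_mul]

end

end FHSM

theorem fractional_hardy_sobolev_mazya_ball (n : ℕ) (hn : 2 ≤ n) (α : ℝ)
    (hα1 : 1 < α) (hα2 : α < 2) :
    ∃ c : ℝ, 0 < c ∧ ∀ r : ℝ, 0 < r → ∀ u : EuclideanSpace ℝ (Fin n) → ℝ,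
      Continuous u → HasCompactSupport u → tsupport u ⊆ ball 0 r →
      energy n α (ball 0 r) u ≥
        ENNReal.ofReal ((2 : ℝ) ^ α * kappa n α *
          ∫ x in ball (0 : EuclideanSpace ℝ (Fin n)) r,
            (u x) ^ 2 * (r ^ α * (r ^ 2 - ‖x‖ ^ 2) ^ (-α))) +
        ENNReal.ofReal (c *
          (∫ x in ball (0 : EuclideanSpace ℝ (Fin n)) r,
            |u x| ^ ((2 * n) / ((n : ℝ) - α))) ^ (2 / ((2 * n) / ((n : ℝ) - α)))) := by
  obtain ⟨c, hc, hmain⟩ := FHSM.unit_ball hn hα1 hα2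
  refine ⟨c, hc, ?_⟩
  intro r hr u hu hcs hsupp
  have hm2 : (2:ℝ) ≤ n := by exact_mod_cast hn
  have hmα : 0 < (n:ℝ) - α := by linarith
  let h := (Homeomorph.smulOfNeZero r hr.ne' : EuclideanSpace ℝ (Fin n) ≃ₜ EuclideanSpace ℝ (Fin n))
  have hcs' : HasCompactSupport (fun x => u (r • x)) := hcs.comp_homeomorph h
  have hsupp' : tsupport (fun x => u (r • x)) ⊆ ball 0 1 := by
    have h1 : tsupport (fun x => u (r • x)) = h ⁻¹' tsupport u :=
      tsupport_comp_eq_preimage u h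
    rw [h1]
    intro x hx
    have h2 : r • x ∈ ball (0 : EuclideanSpace ℝ (Fin n)) r := hsupp hx
    simp only [mem_ball_zero_iff, norm_smul, Real.norm_of_nonneg hr.le] at h2 ⊢
    nlinarith
  have hM := hmain (fun x => u (r • x)) (by fun_prop) hcs' hsupp'
  rw [FHSM.energy_scale hr, ge_iff_le, FHSM.int_scale hr, FHSM.int_scale hr]
  have hp : 0 < r ^ ((n : ℝ) - α) := by positivity
  refine le_trans (le_of_eq ?_) (mul_le_mul_right hM (ENNReal.ofReal (r ^ ((n : ℝ) - α))))
  rw [mul_add, ← ENNReal.ofReal_mul hp.le, ← ENNReal.ofReal_mul hp.le]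
  congr 2
  · have e : ∫ x in ball (0 : EuclideanSpace ℝ (Fin n)) 1,
        u (r • x) ^ 2 * (r ^ α * (r ^ 2 - ‖r • x‖ ^ 2) ^ (-α)) =
        r ^ (-α) * ∫ x in ball (0 : EuclideanSpace ℝ (Fin n)) 1,
          u (r • x) ^ 2 * (1 - ‖x‖ ^ 2) ^ (-α) := by
      rw [← integral_const_mul]
      refine setIntegral_congr_fun measurableSet_ball fun x hx => ?_
      have hd := FHSM.one_sub_sq_pos hx
      have e1 : r ^ 2 - ‖r • x‖ ^ 2 = r ^ 2 * (1 - ‖x‖ ^ 2) := by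
        rw [norm_smul, Real.norm_of_nonneg hr.le]; ring
      have e2 : r ^ α * (r ^ 2) ^ (-α) = r ^ (-α) := by
        rw [← Real.rpow_two, ← Real.rpow_mul hr.le, ← Real.rpow_add hr]
        congr 1; ring
      simp only [e1]
      rw [Real.mul_rpow (by positivity) hd.le, ← e2]
      ring
    rw [e]
    have e3 : r ^ ((n : ℝ) - α) = r ^ n * r ^ (-α) := by
      rw [← Real.rpow_natCast, ← Real.rpow_add hr]; congr 1
    rw [e3]; ring
  · set I := ∫ x in ball (0 : EuclideanSpace ℝ (Fin n)) 1, |u (r • x)| ^ ((2 * n) / ((n : ℝ) - α))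
    have hI : 0 ≤ I := integral_nonneg fun _ => by positivity
    rw [Real.mul_rpow (by positivity) hI, ← Real.rpow_natCast, ← Real.rpow_mul hr.le]
    have e : (n : ℝ) * (2 / ((2 * n) / ((n : ℝ) - α))) = n - α := by field_simp
    rw [e]; ring
end

section
/- Let $1<\alpha<2$, $n\geq 2$ and let $\Pi=\mathbb{R}^{n-1}\times(0,\infty)$ be the upper half-space. There exists a constant $c=c(\alpha,n)>0$ such that for every continuous function $u$ with compact support in $\Pi$, $\mathcal{E}_{\Pi}(u) \geq \kappa_{n,\alpha}\int_{\Pi} u^2(x)\, x_n^{-\alpha}\,dx + c\left(\int_{\Pi}|u(x)|^{2^*}\,dx\right)^{2/2^*}$, where $x_n$ denotes the last coordinate of $x$ and $2^*=2n/(n-\alpha)$. -/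
open MeasureTheory Metric Set Filter
open scoped ENNReal Topology

/-! ### Slicing and the transversal integral -/

lemma slice_lintegral (m : ℕ) (i : Fin (m + 1)) (f : EuclideanSpace ℝ (Fin (m + 1)) → ℝ≥0∞)
    (hf : Measurable f) :
    ∫⁻ y, f y = ∫⁻ s : ℝ, ∫⁻ z : EuclideanSpace ℝ (Fin m),
      f (WithLp.toLp 2 (i.insertNth (α := fun _ => ℝ) s z.ofLp)) := by
  have h1 := EuclideanSpace.volume_preserving_symm_measurableEquiv_toLp (Fin (m + 1))
  have h2 := volume_preserving_piFinSuccAbove (fun _ : Fin (m + 1) => ℝ) i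
  have h3 := EuclideanSpace.volume_preserving_symm_measurableEquiv_toLp (Fin m)
  have hE : Measurable fun p : ℝ × (Fin m → ℝ) =>
      f (WithLp.toLp 2 (i.insertNth (α := fun _ => ℝ) p.1 p.2)) := by
    apply hf.comp
    apply (MeasurableEquiv.toLp 2 (Fin (m + 1) → ℝ)).measurable.comp
    exact (MeasurableEquiv.piFinSuccAbove (fun _ : Fin (m + 1) => ℝ) i).symm.measurable
  calc ∫⁻ y, f y = ∫⁻ p : ℝ × (Fin m → ℝ),
        f (WithLp.toLp 2 (i.insertNth (α := fun _ => ℝ) p.1 p.2)) := by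
        rw [← (h2.comp h1).lintegral_comp hE]
        congr 1
        ext y
        congr 1
        ext j
        exact (congrFun ((Fin.insertNthEquiv (fun _ => ℝ) i).apply_symm_apply y.ofLp) j).symm
    _ = ∫⁻ s : ℝ, ∫⁻ z : (Fin m → ℝ),
        f (WithLp.toLp 2 (i.insertNth (α := fun _ => ℝ) s z)) := by
        rw [Measure.volume_eq_prod, lintegral_prod _ hE.aemeasurable]
    _ = _ := by
        congr 1
        ext s
        exact (h3.lintegral_comp (f := fun z =>
          f (WithLp.toLp 2 (i.insertNth (α := fun _ => ℝ) s z)))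
          (hE.comp measurable_prodMk_left)).symm

lemma lintegral_gamma {s a : ℝ} (hs : 0 < s) (ha : 0 < a) :
    ∫⁻ τ in Ioi (0 : ℝ), ENNReal.ofReal (τ ^ (s - 1) * Real.exp (-(a * τ))) =
      ENNReal.ofReal (a ^ (-s)) * ENNReal.ofReal (Real.Gamma s) := by
  have h := Real.integral_rpow_mul_exp_neg_mul_Ioi hs ha
  have hpos : 0 < (1 / a) ^ s * Real.Gamma s := mul_pos (by positivity) (Real.Gamma_pos_of_pos hs)
  rw [← ENNReal.ofReal_mul (by positivity), ← ofReal_integral_eq_lintegral_ofReal, h]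
  · rw [one_div, Real.inv_rpow ha.le, Real.rpow_neg ha.le]
  · apply Integrable.of_integral_ne_zero
    rw [h]; exact hpos.ne'
  · filter_upwards [ae_restrict_mem measurableSet_Ioi] with t ht
    have : (0 : ℝ) < t := ht
    simp only [Pi.zero_apply]; positivity

lemma lintegral_gauss (m : ℕ) {τ : ℝ} (hτ : 0 < τ) :
    ∫⁻ z : EuclideanSpace ℝ (Fin m), ENNReal.ofReal (Real.exp (-τ * ‖z‖ ^ 2)) =
      ENNReal.ofReal ((Real.pi / τ) ^ ((m : ℝ) / 2)) := by
  have h := GaussianFourier.integral_rexp_neg_mul_sq_norm (V := EuclideanSpace ℝ (Fin m)) hτ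
  simp only [finrank_euclideanSpace, Fintype.card_fin] at h
  rw [← ofReal_integral_eq_lintegral_ofReal, h]
  · apply Integrable.of_integral_ne_zero
    rw [h]; positivity
  · filter_upwards with t
    simp only [Pi.zero_apply]; positivity

lemma lintegral_transversal (m : ℕ) {s t : ℝ} (hs : (m : ℝ) / 2 < s) (ht : 0 < t) :
    ∫⁻ z : EuclideanSpace ℝ (Fin m), ENNReal.ofReal ((t ^ 2 + ‖z‖ ^ 2) ^ (-s)) =
      ENNReal.ofReal (Real.pi ^ ((m : ℝ) / 2) * (Real.Gamma (s - m / 2) / Real.Gamma s) *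
        t ^ ((m : ℝ) - 2 * s)) := by
  have hm : (0 : ℝ) ≤ (m : ℝ) / 2 := by positivity
  have hs0 : 0 < s := lt_of_le_of_lt hm hs
  have hG := Real.Gamma_pos_of_pos hs0
  have key : (∫⁻ z : EuclideanSpace ℝ (Fin m), ENNReal.ofReal ((t ^ 2 + ‖z‖ ^ 2) ^ (-s))) *
      ENNReal.ofReal (Real.Gamma s) =
      ENNReal.ofReal (Real.pi ^ ((m : ℝ) / 2)) * (ENNReal.ofReal ((t ^ 2) ^ (-(s - m / 2))) *
        ENNReal.ofReal (Real.Gamma (s - m / 2))) := by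
    rw [← lintegral_mul_const' _ _ ENNReal.ofReal_ne_top]
    rw [← lintegral_gamma (by linarith) (by positivity)]
    calc _ = ∫⁻ z : EuclideanSpace ℝ (Fin m), ∫⁻ τ in Ioi (0 : ℝ),
          ENNReal.ofReal (τ ^ (s - 1) * Real.exp (-((t ^ 2 + ‖z‖ ^ 2) * τ))) := by
          congr 1; ext z
          rw [lintegral_gamma hs0 (by positivity)]
      _ = ∫⁻ τ in Ioi (0 : ℝ), ∫⁻ z : EuclideanSpace ℝ (Fin m),
          ENNReal.ofReal (τ ^ (s - 1) * Real.exp (-((t ^ 2 + ‖z‖ ^ 2) * τ))) := by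
          apply lintegral_lintegral_swap
          apply Measurable.aemeasurable
          unfold Function.uncurry
          fun_prop
      _ = _ := by
          rw [← lintegral_const_mul' _ _ ENNReal.ofReal_ne_top]
          apply setLIntegral_congr_fun measurableSet_Ioi
          intro τ hτ
          have hτ : 0 < τ := hτ
          have : ∀ z : EuclideanSpace ℝ (Fin m),
              ENNReal.ofReal (τ ^ (s - 1) * Real.exp (-((t ^ 2 + ‖z‖ ^ 2) * τ))) =
              ENNReal.ofReal (τ ^ (s - 1) * Real.exp (-(t ^ 2 * τ))) *
                ENNReal.ofReal (Real.exp (-τ * ‖z‖ ^ 2)) := by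
            intro z
            rw [← ENNReal.ofReal_mul (by positivity), mul_assoc, ← Real.exp_add]
            ring_nf
          simp only [this]
          rw [lintegral_const_mul' _ _ ENNReal.ofReal_ne_top, lintegral_gauss m hτ,
            ← ENNReal.ofReal_mul (by positivity), ← ENNReal.ofReal_mul (by positivity)]
          congr 1
          rw [Real.div_rpow Real.pi_pos.le hτ.le,
            show s - m / 2 - 1 = (s - 1) - m / 2 by ring, Real.rpow_sub hτ (s - 1) (m / 2)]
          ring
  have hG' : ENNReal.ofReal (Real.Gamma s) ≠ 0 := by simpa using hG
  rw [← ENNReal.mul_left_inj hG' ENNReal.ofReal_ne_top, key,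
    ← ENNReal.ofReal_mul (by positivity), ← ENNReal.ofReal_mul (by positivity),
    ← ENNReal.ofReal_mul']
  · congr 1
    have he : ((t : ℝ) ^ 2) ^ (-(s - m / 2)) = t ^ ((m : ℝ) - 2 * s) := by
      rw [← Real.rpow_natCast t 2, ← Real.rpow_mul ht.le]
      congr 1
      push_cast; ring
    rw [he]
    field_simp
  · exact hG.le

/-- The transversal constant. -/
noncomputable def tcst (m : ℕ) (α : ℝ) : ℝ :=
  Real.pi ^ ((m : ℝ) / 2) * (Real.Gamma ((1 + α) / 2) / Real.Gamma ((((m + 1 : ℕ) : ℝ) + α) / 2))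

lemma slice_kernel (m : ℕ) (i : Fin (m + 1)) {α : ℝ} (hα : 0 < α) (g : ℝ → ℝ≥0∞)
    (hg : Measurable g) (x : EuclideanSpace ℝ (Fin (m + 1))) :
    ∫⁻ y : EuclideanSpace ℝ (Fin (m + 1)),
      g (y i) * ENNReal.ofReal (‖x - y‖ ^ (-(((m + 1 : ℕ) : ℝ) + α))) =
    ENNReal.ofReal (tcst m α) * ∫⁻ s : ℝ, g s * ENNReal.ofReal (|x i - s| ^ (-1 - α)) := by
  rw [slice_lintegral m i _ (by fun_prop), ← lintegral_const_mul' _ _ ENNReal.ofReal_ne_top]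
  apply lintegral_congr_ae
  have hne : ∀ᵐ s : ℝ, s ≠ x i := by simp [ae_iff]
  filter_upwards [hne] with s hs
  have ht : 0 < |x i - s| := abs_pos.mpr (sub_ne_zero.mpr hs.symm)
  set p : ℝ := (((m + 1 : ℕ) : ℝ) + α) / 2 with hp
  set x' : EuclideanSpace ℝ (Fin m) := WithLp.toLp 2 fun j => x (i.succAbove j) with hx'
  have hnorm : ∀ z : EuclideanSpace ℝ (Fin m),
      ‖x - WithLp.toLp 2 (i.insertNth (α := fun _ => ℝ) s z.ofLp)‖ ^ (-(((m + 1 : ℕ) : ℝ) + α)) =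
      (|x i - s| ^ 2 + ‖z - x'‖ ^ 2) ^ (-p) := by
    intro z
    have : |x i - s| ^ 2 + ‖z - x'‖ ^ 2 =
        ‖x - WithLp.toLp 2 (i.insertNth (α := fun _ => ℝ) s z.ofLp)‖ ^ 2 := by
      rw [EuclideanSpace.norm_sq_eq, EuclideanSpace.norm_sq_eq, Fin.sum_univ_succAbove _ i]
      simp [hx', abs_sub_comm]
    rw [this, ← Real.rpow_natCast, ← Real.rpow_mul (norm_nonneg _)]
    congr 1
    rw [hp]; push_cast; ring
  simp only [hnorm]
  simp only [Fin.insertNth_apply_same]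
  rw [lintegral_const_mul _ (by fun_prop)]
  rw [lintegral_sub_right_eq_self (fun z => ENNReal.ofReal ((|x i - s| ^ 2 + ‖z‖ ^ 2) ^ (-p))) x']
  rw [lintegral_transversal m (by rw [hp]; push_cast; linarith) ht, mul_left_comm]
  congr 1
  have h1 : p - m / 2 = (1 + α) / 2 := by rw [hp]; push_cast; ring
  have h2 : (m : ℝ) - 2 * p = -1 - α := by rw [hp]; push_cast; ring
  rw [h1, h2, ENNReal.ofReal_mul]
  · rfl
  · have := Real.Gamma_pos_of_pos (s := (1 + α) / 2) (by linarith)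
    have := Real.Gamma_pos_of_pos (s := p) (by rw [hp]; positivity)
    positivity


/-! ### One-dimensional integrals -/

lemma scale_low {α β a l : ℝ} (hα : 0 < α) (ha : 0 < a) (hl1 : l < 1) :
    ∫⁻ s in Ioo 0 (l * a), ENNReal.ofReal (1 - (s / a) ^ β) * ENNReal.ofReal (|a - s| ^ (-1 - α)) =
    ENNReal.ofReal (a ^ (-α)) *
      ∫⁻ t in Ioo 0 l, ENNReal.ofReal ((1 - t ^ β) * (1 - t) ^ (-1 - α)) := by
  have him : (fun t : ℝ => t * a) '' Ioo 0 l = Ioo 0 (l * a) := by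
    rw [Set.image_mul_right_Ioo (h := ha)]; simp
  rw [← him, lintegral_image_eq_lintegral_abs_deriv_mul (f' := fun _ => a) measurableSet_Ioo
    (fun x _ => by simpa using ((hasDerivAt_id x).mul_const a).hasDerivWithinAt)
    (fun x _ y _ h => by simpa [ha.ne'] using h), ← lintegral_const_mul' _ _ ENNReal.ofReal_ne_top]
  apply setLIntegral_congr_fun measurableSet_Ioo
  rintro t ⟨ht0, ht1⟩
  have h1t : 0 < 1 - t := by linarith
  simp only
  rw [mul_div_cancel_right₀ _ ha.ne', show a - t * a = a * (1 - t) by ring, abs_of_pos ha,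
    abs_of_pos (by positivity), Real.mul_rpow ha.le h1t.le, mul_left_comm,
    ← ENNReal.ofReal_mul ha.le, ← ENNReal.ofReal_mul' (by positivity),
    ← ENNReal.ofReal_mul (by positivity)]
  congr 1
  have : a * a ^ (-1 - α) = a ^ (-α) := by
    rw [← Real.rpow_one_add' ha.le (by intro h; linarith)]; ring_nf
  rw [← this]; ring

lemma scale_high {α β a l : ℝ} (hβ : β = (α - 1) / 2) (hβ0 : 0 < β)
    (ha : 0 < a) (hl : 0 < l) (hl1 : l < 1) :
    ∫⁻ s in Ioi (a / l), ENNReal.ofReal ((s / a) ^ β - 1) * ENNReal.ofReal (|a - s| ^ (-1 - α)) =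
    ENNReal.ofReal (a ^ (-α)) *
      ∫⁻ t in Ioo 0 l, ENNReal.ofReal ((1 - t ^ β) * t ^ β * (1 - t) ^ (-1 - α)) := by
  have him : (fun t : ℝ => a / t) '' Ioo 0 l = Ioi (a / l) := by
    ext s
    constructor
    · rintro ⟨t, ⟨h0, h1⟩, rfl⟩
      exact div_lt_div_of_pos_left ha h0 h1
    · intro hs
      have hs : a / l < s := hs
      have hs0 : 0 < s := lt_trans (by positivity) hs
      refine ⟨a / s, ⟨by positivity, ?_⟩, ?_⟩
      · rw [div_lt_iff₀ hs0]; rw [div_lt_iff₀ hl] at hs; linarith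
      · simp only; field_simp
  rw [← him, lintegral_image_eq_lintegral_abs_deriv_mul (f' := fun t => -a / t ^ 2)
    measurableSet_Ioo
    (fun x hx => by
      have := (hasDerivAt_inv hx.1.ne').const_mul a
      refine (this.congr_deriv ?_).hasDerivWithinAt
      ring)
    (fun x hx y hy h => by
      have h0 := hx.1
      have h1 := hy.1
      have h : a / x = a / y := h
      field_simp at h
      exact h.symm), ← lintegral_const_mul' _ _ ENNReal.ofReal_ne_top]
  apply setLIntegral_congr_fun measurableSet_Ioo
  rintro t ⟨ht0, ht1⟩
  have h1t : 0 < 1 - t := by linarith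
  simp only
  rw [show a / t / a = t⁻¹ by field_simp, show |-a / t ^ 2| = a * t ^ (-2 : ℝ) by
      rw [abs_div, abs_neg, abs_of_pos ha, abs_of_pos (by positivity), Real.rpow_neg ht0.le]
      norm_cast,
    show |a - a / t| = a * ((1 - t) * t⁻¹) by
      rw [show a - a / t = -(a * ((1 - t) * t⁻¹)) by field_simp; ring, abs_neg,
        abs_of_pos (by positivity)],
    Real.mul_rpow ha.le (by positivity), Real.mul_rpow h1t.le (by positivity), mul_left_comm,
    ← ENNReal.ofReal_mul (by positivity), ← ENNReal.ofReal_mul' (by positivity),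
    ← ENNReal.ofReal_mul (by positivity)]
  congr 1
  have h1 : a * a ^ (-1 - α) = a ^ (-α) := by
    rw [← Real.rpow_one_add' ha.le (by intro h; linarith)]; ring_nf
  have h2 : t⁻¹ ^ β * t ^ β = 1 := by
    rw [← Real.mul_rpow (by positivity) ht0.le, inv_mul_cancel₀ ht0.ne', Real.one_rpow]
  have h3 : t ^ (-2 : ℝ) * t⁻¹ ^ (-1 - α) = t ^ β * t ^ β := by
    rw [Real.inv_rpow ht0.le, ← Real.rpow_neg ht0.le, ← Real.rpow_add ht0, ← Real.rpow_add ht0]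
    congr 1; rw [hβ]; ring
  calc _ = (t⁻¹ ^ β - 1) * (a * a ^ (-1 - α)) * (t ^ (-2 : ℝ) * t⁻¹ ^ (-1 - α)) *
        (1 - t) ^ (-1 - α) := by ring
    _ = (t⁻¹ ^ β * t ^ β - t ^ β) * t ^ β * a ^ (-α) * (1 - t) ^ (-1 - α) := by
        rw [h1, h3]; ring
    _ = _ := by rw [h2]; ring

/-- Truncated one-dimensional constants. -/
noncomputable def qlow (α β l : ℝ) : ℝ≥0∞ :=
  ∫⁻ t in Ioo 0 l, ENNReal.ofReal ((1 - t ^ β) * (1 - t) ^ (-1 - α))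

noncomputable def qhigh (α β l : ℝ) : ℝ≥0∞ :=
  ∫⁻ t in Ioo 0 l, ENNReal.ofReal ((1 - t ^ β) * t ^ β * (1 - t) ^ (-1 - α))

noncomputable def qdiff (α β l : ℝ) : ℝ≥0∞ :=
  ∫⁻ t in Ioo 0 l, ENNReal.ofReal ((1 - t ^ β) ^ 2 * (1 - t) ^ (-1 - α))

lemma qlow_eq {α β l : ℝ} (hβ0 : 0 < β) (hl1 : l ≤ 1) :
    qlow α β l = qhigh α β l + qdiff α β l := by
  unfold qlow qhigh qdiff
  rw [← lintegral_add_left (by fun_prop)]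
  apply setLIntegral_congr_fun measurableSet_Ioo
  rintro t ⟨ht0, ht1⟩
  have h1t : 0 < 1 - t := by linarith
  have : t ^ β ≤ 1 := Real.rpow_le_one ht0.le (by linarith) hβ0.le
  have h2 : 0 ≤ 1 - t ^ β := by linarith
  simp only
  rw [← ENNReal.ofReal_add (by positivity) (by positivity)]
  congr 1; ring

lemma qhigh_ne_top {α β l : ℝ} (hα : 0 < α) (hβ0 : 0 < β) (hl1 : l < 1) :
    qhigh α β l ≠ ∞ := by
  unfold qhigh
  apply ne_of_lt
  calc _ ≤ ∫⁻ t in Ioo 0 l, ENNReal.ofReal ((1 - l) ^ (-1 - α)) := by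
        apply setLIntegral_mono measurable_const
        rintro t ⟨ht0, ht1⟩
        have h1t : 0 < 1 - t := by linarith
        have h0 : 0 < t ^ β := by positivity
        have h1 : t ^ β ≤ 1 := Real.rpow_le_one ht0.le (by linarith) hβ0.le
        apply ENNReal.ofReal_le_ofReal
        have h3 : (1 - t) ^ (-1 - α) ≤ (1 - l) ^ (-1 - α) :=
          Real.rpow_le_rpow_of_nonpos (by linarith) (by linarith) (by linarith)
        calc _ ≤ 1 * (1 - t) ^ (-1 - α) := by
              apply mul_le_mul_of_nonneg_right _ (by positivity)
              nlinarith
          _ ≤ _ := by linarith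
    _ < ∞ := by
        rw [lintegral_const]
        apply ENNReal.mul_lt_top ENNReal.ofReal_lt_top
        simp

lemma beta_integral {a b : ℝ} (ha : 0 < a) (hb : 0 < b) :
    IntervalIntegrable (fun t : ℝ => t ^ (a - 1) * (1 - t) ^ (b - 1)) volume 0 1 ∧
    ∫ t in (0 : ℝ)..1, t ^ (a - 1) * (1 - t) ^ (b - 1) =
      Real.Gamma a * Real.Gamma b / Real.Gamma (a + b) := by
  have hpos : 0 < ProbabilityTheory.beta a b := ProbabilityTheory.beta_pos ha hb
  have h : ∫ t in (0 : ℝ)..1, t ^ (a - 1) * (1 - t) ^ (b - 1) = ProbabilityTheory.beta a b := by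
    rw [ProbabilityTheory.beta_eq_betaIntegralReal a b ha hb, Complex.betaIntegral]
    have : ∫ t in (0 : ℝ)..1, (t : ℂ) ^ ((a : ℂ) - 1) * (1 - (t : ℂ)) ^ ((b : ℂ) - 1) =
        ∫ t in (0 : ℝ)..1, ((t ^ (a - 1) * (1 - t) ^ (b - 1) : ℝ) : ℂ) := by
      apply intervalIntegral.integral_congr
      intro t ht
      rw [uIcc_of_le zero_le_one] at ht
      simp only
      rw [Complex.ofReal_mul, Complex.ofReal_cpow ht.1, Complex.ofReal_cpow (by linarith [ht.2])]
      push_cast; rfl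
    rw [this, intervalIntegral.integral_ofReal, Complex.ofReal_re]
  exact ⟨intervalIntegral.intervalIntegrable_of_integral_ne_zero (by rw [h]; exact hpos.ne'), h⟩

lemma one_sub_rpow_le {β t : ℝ} (hβ1 : β ≤ 1) (ht0 : 0 < t) (ht1 : t < 1) :
    1 - t ^ β ≤ 1 - t := by
  have := Real.rpow_le_rpow_of_exponent_ge ht0 ht1.le hβ1
  rw [Real.rpow_one] at this; linarith

lemma hardy_primitive_deriv {α β t : ℝ} (hβ : β = (α - 1) / 2) (hα : 0 < α)
    (ht0 : 0 < t) (ht1 : t < 1) :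
    HasDerivAt (fun t : ℝ => (1 - t ^ β) * (1 - t ^ (β + 1)) * (1 - t) ^ (-α) / α)
      ((1 - t ^ β) ^ 2 * (1 - t) ^ (-1 - α) - (β / α) * (t ^ (β - 1) * (1 - t) ^ (1 - α))) t := by
  have h1t : 0 < 1 - t := by linarith
  have d1 : HasDerivAt (fun t : ℝ => t ^ β) (β * t ^ (β - 1)) t :=
    Real.hasDerivAt_rpow_const (Or.inl ht0.ne')
  have d2 : HasDerivAt (fun t : ℝ => t ^ (β + 1)) ((β + 1) * t ^ β) t := by
    have := Real.hasDerivAt_rpow_const (x := t) (p := β + 1) (Or.inl ht0.ne')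
    simpa using this
  have d3 : HasDerivAt (fun t : ℝ => (1 - t) ^ (-α)) (-1 * (-α) * (1 - t) ^ (-α - 1)) t :=
    ((hasDerivAt_id t).const_sub 1).rpow_const (Or.inl h1t.ne')
  have := (((d1.const_sub 1).mul (d2.const_sub 1)).mul d3).div_const α
  refine this.congr_deriv ?_
  simp only [Pi.mul_apply]
  have e1 : (1 - t) ^ (-α) = (1 - t) ^ (-1 - α) * (1 - t) := by
    rw [← Real.rpow_add_one h1t.ne']; ring_nf
  have e2 : (1 - t) ^ (1 - α) = (1 - t) ^ (-1 - α) * (1 - t) * (1 - t) := by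
    rw [← Real.rpow_add_one h1t.ne', ← Real.rpow_add_one h1t.ne']; ring_nf
  have e3 : t ^ β = t ^ (β - 1) * t := by
    rw [← Real.rpow_add_one ht0.ne']; ring_nf
  have e4 : t ^ (β + 1) = t ^ (β - 1) * t * t := by
    rw [Real.rpow_add_one ht0.ne', e3]
  rw [show -α - 1 = -1 - α by ring, e1, e2, e4, e3]
  have hα' : α = 2 * β + 1 := by rw [hβ]; ring
  generalize (1 - t) ^ (-1 - α) = A
  generalize t ^ (β - 1) = B
  field_simp
  rw [hα']
  ring

lemma qdiff_one {α β : ℝ} (hβ : β = (α - 1) / 2) (hα1 : 1 < α) (hα2 : α < 2) :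
    qdiff α β 1 = ENNReal.ofReal
      ((eulerBeta ((1 + α) / 2) ((2 - α) / 2) - 2 ^ α) / (α * 2 ^ α)) := by
  have hβ0 : 0 < β := by rw [hβ]; linarith
  have hβ1 : β < 1 := by rw [hβ]; linarith
  obtain ⟨hBi, hB⟩ := beta_integral hβ0 (show 0 < 2 - α by linarith)
  rw [show 2 - α - 1 = 1 - α by ring] at hBi hB
  have hdom : IntervalIntegrable (fun t : ℝ => (1 - t) ^ (1 - α)) volume 0 1 := by
    have := (beta_integral one_pos (show 0 < 2 - α by linarith)).1
    simpa [show 2 - α - 1 = 1 - α by ring] using this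
  have hf : IntervalIntegrable (fun t : ℝ => (1 - t ^ β) ^ 2 * (1 - t) ^ (-1 - α)) volume 0 1 := by
    rw [intervalIntegrable_iff_integrableOn_Ioo_of_le zero_le_one] at hdom ⊢
    refine Integrable.mono' hdom (by fun_prop) ?_
    filter_upwards [ae_restrict_mem measurableSet_Ioo] with t ht
    have h1t : 0 < 1 - t := by linarith [ht.2]
    have h0 : t ^ β ≤ 1 := Real.rpow_le_one ht.1.le ht.2.le hβ0.le
    rw [Real.norm_of_nonneg (by positivity)]
    have := one_sub_rpow_le hβ1.le ht.1 ht.2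
    calc _ ≤ (1 - t) ^ 2 * (1 - t) ^ (-1 - α) := by
          gcongr
      _ = _ := by
          rw [← Real.rpow_natCast, ← Real.rpow_add h1t]
          congr 1; push_cast; ring
  have hFTC := intervalIntegral.integral_eq_sub_of_hasDerivAt_of_tendsto
    (f := fun t : ℝ => (1 - t ^ β) * (1 - t ^ (β + 1)) * (1 - t) ^ (-α) / α)
    (f' := fun t => (1 - t ^ β) ^ 2 * (1 - t) ^ (-1 - α) -
      (β / α) * (t ^ (β - 1) * (1 - t) ^ (1 - α)))
    (fa := 1 / α) (fb := 0) (zero_lt_one' ℝ)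
    (fun t ht => hardy_primitive_deriv hβ (by linarith) ht.1 ht.2)
    (hf.sub (hBi.const_mul _)) ?_ ?_
  · rw [intervalIntegral.integral_sub hf (hBi.const_mul _), intervalIntegral.integral_const_mul,
      hB] at hFTC
    unfold qdiff
    rw [intervalIntegral.integral_of_le zero_le_one, integral_Ioc_eq_integral_Ioo] at hFTC
    rw [← ofReal_integral_eq_lintegral_ofReal]
    · congr 1
      rw [sub_eq_iff_eq_add] at hFTC
      rw [hFTC]
      have hG1 : β * Real.Gamma β = Real.Gamma ((1 + α) / 2) := by
        rw [← Real.Gamma_add_one hβ0.ne', hβ]; congr 1; ring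
      have hdup := Real.Gamma_mul_Gamma_add_half ((2 - α) / 2)
      rw [show (2 - α) / 2 + 1 / 2 = β + (2 - α) by rw [hβ]; ring,
        show 2 * ((2 - α) / 2) = 2 - α by ring] at hdup
      have hG3 : Real.Gamma ((1 + α) / 2 + (2 - α) / 2) = √Real.pi / 2 := by
        rw [show (1 + α) / 2 + (2 - α) / 2 = 1 / 2 + 1 by ring, Real.Gamma_add_one (by norm_num),
          Real.Gamma_one_half_eq]; ring
      have hpi : 0 < √Real.pi := Real.sqrt_pos.mpr Real.pi_pos
      have hg : 0 < Real.Gamma (β + (2 - α)) := Real.Gamma_pos_of_pos (by linarith)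
      have h2 : (2 : ℝ) ^ (1 - (2 - α)) = 2 ^ α / 2 := by
        rw [show 1 - (2 - α) = α - 1 by ring, Real.rpow_sub_one (by norm_num)]
      have h2p : (0 : ℝ) < 2 ^ α := by positivity
      rw [h2] at hdup
      unfold eulerBeta
      rw [hG3, ← hG1]
      field_simp
      linear_combination (-2 * β * Real.Gamma β) * hdup
    · rw [← IntegrableOn, ← intervalIntegrable_iff_integrableOn_Ioo_of_le zero_le_one]
      exact hf
    · filter_upwards [ae_restrict_mem measurableSet_Ioo] with t ht
      have h1t : 0 < 1 - t := by linarith [ht.2]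
      simp only [Pi.zero_apply]; positivity
  · have hc : ContinuousAt (fun t : ℝ =>
        (1 - t ^ β) * (1 - t ^ (β + 1)) * (1 - t) ^ (-α) / α) 0 := by
      have h1 : ContinuousAt (fun t : ℝ => t ^ β) 0 :=
        Real.continuousAt_rpow_const _ _ (Or.inr hβ0.le)
      have h2 : ContinuousAt (fun t : ℝ => t ^ (β + 1)) 0 :=
        Real.continuousAt_rpow_const _ _ (Or.inr (by linarith))
      have h3 : ContinuousAt (fun t : ℝ => (1 - t) ^ (-α)) 0 :=
        ContinuousAt.rpow_const (by fun_prop) (Or.inl (by norm_num))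
      fun_prop
    have := hc.tendsto.mono_left (nhdsWithin_le_nhds (s := Ioi 0))
    simpa [Real.zero_rpow hβ0.ne', Real.zero_rpow (show β + 1 ≠ 0 by linarith)] using this
  · have hlim : Tendsto (fun t : ℝ => 2 * (1 - t) ^ (2 - α) / α) (𝓝[<] 1) (𝓝 0) := by
      have hc : ContinuousAt (fun t : ℝ => 2 * (1 - t) ^ (2 - α) / α) 1 := by
        have h3 : ContinuousAt (fun t : ℝ => (1 - t) ^ (2 - α)) 1 :=
          ContinuousAt.rpow_const (by fun_prop) (Or.inr (by linarith))
        fun_prop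
      have := hc.tendsto.mono_left (nhdsWithin_le_nhds (s := Iio 1))
      simpa [Real.zero_rpow (show 2 - α ≠ 0 by linarith)] using this
    have hmem : Ioo (0 : ℝ) 1 ∈ 𝓝[<] (1 : ℝ) := Ioo_mem_nhdsLT zero_lt_one
    refine tendsto_of_tendsto_of_tendsto_of_le_of_le' tendsto_const_nhds hlim ?_ ?_
    · filter_upwards [hmem] with t ht
      have h1t : 0 < 1 - t := by linarith [ht.2]
      have h0 : t ^ β ≤ 1 := Real.rpow_le_one ht.1.le ht.2.le hβ0.le
      have h1 : t ^ (β + 1) ≤ 1 := Real.rpow_le_one ht.1.le ht.2.le (by linarith)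
      have h0' : 0 ≤ 1 - t ^ β := by linarith
      have h1' : 0 ≤ 1 - t ^ (β + 1) := by linarith
      positivity
    · filter_upwards [hmem] with t ht
      have h1t : 0 < 1 - t := by linarith [ht.2]
      have h0 := one_sub_rpow_le hβ1.le ht.1 ht.2
      have ht0 : 0 < t := ht.1
      have hz : t ^ β ≤ 1 := Real.rpow_le_one ht.1.le ht.2.le hβ0.le
      have h1 : 1 - t ^ (β + 1) ≤ 2 * (1 - t) := by
        rw [Real.rpow_add_one ht0.ne']
        nlinarith
      have h1' : 0 ≤ 1 - t ^ (β + 1) := by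
        have := Real.rpow_le_one ht.1.le ht.2.le (show 0 ≤ β + 1 by linarith)
        linarith
      have e : (1 - t) ^ (2 - α) = (1 - t) * (1 - t) * (1 - t) ^ (-α) := by
        rw [show 2 - α = 1 + (1 + -α) by ring, Real.rpow_add h1t, Real.rpow_add h1t,
          Real.rpow_one]; ring
      rw [e]
      apply div_le_div_of_nonneg_right _ (by linarith)
      calc _ ≤ (1 - t) * (2 * (1 - t)) * (1 - t) ^ (-α) := by gcongr
        _ = _ := by ring


lemma pos_of_mul_pos_of_pos {l s : ℝ} (hl : 0 < l) (h : 0 < l * s) : 0 < s :=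
  (mul_pos_iff_of_pos_left hl).mp h


/-! ### Ground state representation -/

/-- Pairs of points of the half-space whose heights have ratio less than `l`. -/
def lowPairs (m : ℕ) (i : Fin (m + 1)) (l : ℝ) :
    Set (EuclideanSpace ℝ (Fin (m + 1)) × EuclideanSpace ℝ (Fin (m + 1))) :=
  {p | 0 < p.1 i ∧ p.1 i < l * p.2 i}

lemma measurableSet_lowPairs (m : ℕ) (i : Fin (m + 1)) (l : ℝ) :
    MeasurableSet (lowPairs m i l) := by
  have h1 : MeasurableSet {p : EuclideanSpace ℝ (Fin (m + 1)) × EuclideanSpace ℝ (Fin (m + 1)) |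
      0 < p.1 i} := measurableSet_lt measurable_const (by fun_prop)
  have h2 : MeasurableSet {p : EuclideanSpace ℝ (Fin (m + 1)) × EuclideanSpace ℝ (Fin (m + 1)) |
      p.1 i < l * p.2 i} := measurableSet_lt (by fun_prop) (by fun_prop)
  exact h1.inter h2

/-- The integrand of the energy. -/
noncomputable def eDens (m : ℕ) (α : ℝ) (u : EuclideanSpace ℝ (Fin (m + 1)) → ℝ)
    (p : EuclideanSpace ℝ (Fin (m + 1)) × EuclideanSpace ℝ (Fin (m + 1))) : ℝ≥0∞ :=
  ENNReal.ofReal ((u p.1 - u p.2) ^ 2 / ‖p.1 - p.2‖ ^ (((m + 1 : ℕ) : ℝ) + α))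

/-- The integrand of the ground state form. -/
noncomputable def jDens (m : ℕ) (i : Fin (m + 1)) (α β : ℝ)
    (u : EuclideanSpace ℝ (Fin (m + 1)) → ℝ)
    (p : EuclideanSpace ℝ (Fin (m + 1)) × EuclideanSpace ℝ (Fin (m + 1))) : ℝ≥0∞ :=
  ENNReal.ofReal ((p.1 i) ^ β * (p.2 i) ^ β * (u p.1 / (p.1 i) ^ β - u p.2 / (p.2 i) ^ β) ^ 2 *
    ‖p.1 - p.2‖ ^ (-(((m + 1 : ℕ) : ℝ) + α)))

lemma energy_ge (m : ℕ) (i : Fin (m + 1)) (α : ℝ) (u : EuclideanSpace ℝ (Fin (m + 1)) → ℝ)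
    (hu : Continuous u) {l : ℝ} (hl0 : 0 < l) (hl1 : l ≤ 1) :
    ∫⁻ p in lowPairs m i l, eDens m α u p ≤ energy (m + 1) α {x | 0 < x i} u := by
  have hm : Measurable (eDens m α u) := by unfold eDens; fun_prop
  set D : Set (EuclideanSpace ℝ (Fin (m + 1))) := {x | 0 < x i} with hD
  have hE : energy (m + 1) α D u = (1 / 2 : ℝ≥0∞) * ∫⁻ p in D ×ˢ D, eDens m α u p := by
    unfold energy
    rw [Measure.volume_eq_prod, ← Measure.prod_restrict, lintegral_prod _ hm.aemeasurable]
    rfl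
  have hswap : ∫⁻ p in Prod.swap ⁻¹' lowPairs m i l, eDens m α u p =
      ∫⁻ p in lowPairs m i l, eDens m α u p := by
    have hsw : MeasurePreserving
      (Prod.swap : EuclideanSpace ℝ (Fin (m + 1)) × EuclideanSpace ℝ (Fin (m + 1)) → _)
      volume volume := Measure.measurePreserving_swap
    rw [← hsw.setLIntegral_comp_preimage (measurableSet_lowPairs m i l) hm]
    congr 1
    ext p
    simp only [eDens, Prod.fst_swap, Prod.snd_swap]
    rw [norm_sub_rev, ← neg_sub (u p.2), neg_sq]
  have hdisj : Disjoint (lowPairs m i l) (Prod.swap ⁻¹' lowPairs m i l) := by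
    rw [Set.disjoint_left]
    rintro p ⟨h1, h2⟩ ⟨h3, h4⟩
    simp only [Prod.fst_swap, Prod.snd_swap] at h3 h4
    nlinarith
  have hsub : lowPairs m i l ∪ (Prod.swap ⁻¹' lowPairs m i l) ⊆ D ×ˢ D := by
    rintro p (⟨h1, h2⟩ | ⟨h3, h4⟩)
    · exact ⟨h1, (pos_of_mul_pos_of_pos hl0 (h1.trans h2))⟩
    · exact ⟨(pos_of_mul_pos_of_pos hl0 (h3.trans h4)), h3⟩
  rw [hE]
  calc _ = (1 / 2 : ℝ≥0∞) * ((∫⁻ p in lowPairs m i l, eDens m α u p) +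
        ∫⁻ p in lowPairs m i l, eDens m α u p) := by
        rw [← two_mul, ← mul_assoc, one_div, ENNReal.inv_mul_cancel (by simp) (by simp), one_mul]
    _ = (1 / 2 : ℝ≥0∞) * ∫⁻ p in lowPairs m i l ∪ (Prod.swap ⁻¹' lowPairs m i l),
        eDens m α u p := by
        rw [lintegral_union (measurable_swap (measurableSet_lowPairs m i l)) hdisj, hswap]
    _ ≤ _ := by gcongr

lemma ground_pointwise (m : ℕ) (i : Fin (m + 1)) {α β l : ℝ}
    (hβ0 : 0 < β) (hl0 : 0 < l) (hl1 : l ≤ 1) (u : EuclideanSpace ℝ (Fin (m + 1)) → ℝ)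
    {p : EuclideanSpace ℝ (Fin (m + 1)) × EuclideanSpace ℝ (Fin (m + 1))}
    (hp : p ∈ lowPairs m i l) :
    eDens m α u p + ENNReal.ofReal ((u p.1) ^ 2) * (ENNReal.ofReal ((p.2 i / p.1 i) ^ β - 1) *
      ENNReal.ofReal (‖p.1 - p.2‖ ^ (-(((m + 1 : ℕ) : ℝ) + α)))) =
    jDens m i α β u p + ENNReal.ofReal ((u p.2) ^ 2) * (ENNReal.ofReal (1 - (p.1 i / p.2 i) ^ β) *
      ENNReal.ofReal (‖p.1 - p.2‖ ^ (-(((m + 1 : ℕ) : ℝ) + α)))) := by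
  obtain ⟨h1, h2⟩ := hp
  have h3 : 0 < p.2 i := (pos_of_mul_pos_of_pos hl0 (h1.trans h2))
  have h4 : p.1 i ≤ p.2 i := by nlinarith
  unfold eDens jDens
  have ha : 0 < (p.1 i) ^ β := by positivity
  have hb : 0 < (p.2 i) ^ β := by positivity
  have hab : (p.1 i) ^ β ≤ (p.2 i) ^ β := Real.rpow_le_rpow h1.le h4 hβ0.le
  rw [Real.div_rpow h3.le h1.le, Real.div_rpow h1.le h3.le, div_eq_mul_inv,
    ← Real.rpow_neg (norm_nonneg _)]
  generalize (p.1 i) ^ β = a at *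
  generalize (p.2 i) ^ β = b at *
  have hk : 0 ≤ ‖p.1 - p.2‖ ^ (-(((m + 1 : ℕ) : ℝ) + α)) := by positivity
  generalize ‖p.1 - p.2‖ ^ (-(((m + 1 : ℕ) : ℝ) + α)) = k at *
  have hA : 0 ≤ b / a - 1 := by rw [sub_nonneg, one_le_div ha]; exact hab
  have hB : 0 ≤ 1 - a / b := by rw [sub_nonneg, div_le_one hb]; exact hab
  rw [← ENNReal.ofReal_mul hA, ← ENNReal.ofReal_mul hB, ← ENNReal.ofReal_mul (by positivity),
    ← ENNReal.ofReal_mul (by positivity), ← ENNReal.ofReal_add (by positivity) (by positivity),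
    ← ENNReal.ofReal_add (by positivity) (by positivity)]
  congr 1
  field_simp
  ring

/-- The Hardy integral. -/
noncomputable def hardyInt (m : ℕ) (i : Fin (m + 1)) (α : ℝ)
    (u : EuclideanSpace ℝ (Fin (m + 1)) → ℝ) : ℝ≥0∞ :=
  ∫⁻ x in {x : EuclideanSpace ℝ (Fin (m + 1)) | 0 < x i},
    ENNReal.ofReal ((u x) ^ 2) * ENNReal.ofReal ((x i) ^ (-α))

lemma measurableSet_half (m : ℕ) (i : Fin (m + 1)) :
    MeasurableSet {x : EuclideanSpace ℝ (Fin (m + 1)) | 0 < x i} :=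
  measurableSet_lt measurable_const (by fun_prop)

lemma high_term (m : ℕ) (i : Fin (m + 1)) {α β l : ℝ} (hβ : β = (α - 1) / 2)
    (hβ0 : 0 < β) (hl0 : 0 < l) (hl1 : l < 1) (u : EuclideanSpace ℝ (Fin (m + 1)) → ℝ)
    (hu : Continuous u) :
    ∫⁻ p in lowPairs m i l, ENNReal.ofReal ((u p.1) ^ 2) *
      (ENNReal.ofReal ((p.2 i / p.1 i) ^ β - 1) *
      ENNReal.ofReal (‖p.1 - p.2‖ ^ (-(((m + 1 : ℕ) : ℝ) + α)))) =
    hardyInt m i α u * (ENNReal.ofReal (tcst m α) * qhigh α β l) := by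
  have hα0 : 0 < α := by linarith
  rw [← lintegral_indicator (measurableSet_lowPairs m i l), Measure.volume_eq_prod,
    lintegral_prod _ (Measurable.aemeasurable
      (Measurable.indicator (by fun_prop) (measurableSet_lowPairs m i l)))]
  unfold hardyInt
  rw [← lintegral_mul_const _ (by fun_prop), ← lintegral_indicator (measurableSet_half m i)]
  congr 1
  ext x
  by_cases hx : 0 < x i
  · rw [Set.indicator_of_mem (show x ∈ {x : EuclideanSpace ℝ (Fin (m + 1)) | 0 < x i} from hx)]
    set g : ℝ → ℝ≥0∞ := (Ioi (x i / l)).indicator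
      (fun s => ENNReal.ofReal ((s / x i) ^ β - 1)) with hg
    have hgm : Measurable g := Measurable.indicator (by fun_prop) measurableSet_Ioi
    calc _ = ∫⁻ y : EuclideanSpace ℝ (Fin (m + 1)), ENNReal.ofReal ((u x) ^ 2) * (g (y i) *
          ENNReal.ofReal (‖x - y‖ ^ (-(((m + 1 : ℕ) : ℝ) + α)))) := by
          congr 1
          ext y
          by_cases hy : x i < l * y i
          · have hy' : y i ∈ Ioi (x i / l) := by
              rw [mem_Ioi, div_lt_iff₀ hl0]; linarith
            rw [Set.indicator_of_mem (show (x, y) ∈ lowPairs m i l from ⟨hx, hy⟩), hg,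
              Set.indicator_of_mem hy']
          · have hy' : y i ∉ Ioi (x i / l) := by
              rw [mem_Ioi, div_lt_iff₀ hl0]; linarith
            rw [Set.indicator_of_notMem (fun h : (x, y) ∈ lowPairs m i l => hy h.2), hg,
              Set.indicator_of_notMem hy']
            simp
      _ = _ := by
          rw [lintegral_const_mul' _ _ ENNReal.ofReal_ne_top, slice_kernel m i hα0 g hgm]
          have : ∫⁻ s : ℝ, g s * ENNReal.ofReal (|x i - s| ^ (-1 - α)) =
              ∫⁻ s in Ioi (x i / l), ENNReal.ofReal ((s / x i) ^ β - 1) *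
                ENNReal.ofReal (|x i - s| ^ (-1 - α)) := by
            rw [← lintegral_indicator measurableSet_Ioi]
            congr 1
            ext s
            simp only [hg, Set.indicator_apply]
            split_ifs <;> simp
          rw [this, scale_high hβ hβ0 hx hl0 hl1, ← qhigh]
          ring
  · rw [Set.indicator_of_notMem (show x ∉ {x : EuclideanSpace ℝ (Fin (m + 1)) | 0 < x i} from hx)]
    refine lintegral_eq_zero_of_ae_eq_zero ?_
    filter_upwards with y
    exact Set.indicator_of_notMem (fun h : (x, y) ∈ lowPairs m i l => hx h.1) _

lemma low_term (m : ℕ) (i : Fin (m + 1)) {α β l : ℝ} (hα0 : 0 < α)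
    (hl0 : 0 < l) (hl1 : l < 1) (u : EuclideanSpace ℝ (Fin (m + 1)) → ℝ)
    (hu : Continuous u) :
    ∫⁻ p in lowPairs m i l, ENNReal.ofReal ((u p.2) ^ 2) *
      (ENNReal.ofReal (1 - (p.1 i / p.2 i) ^ β) *
      ENNReal.ofReal (‖p.1 - p.2‖ ^ (-(((m + 1 : ℕ) : ℝ) + α)))) =
    hardyInt m i α u * (ENNReal.ofReal (tcst m α) * qlow α β l) := by
  rw [← lintegral_indicator (measurableSet_lowPairs m i l), Measure.volume_eq_prod,
    lintegral_prod_symm _ (Measurable.aemeasurable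
      (Measurable.indicator (by fun_prop) (measurableSet_lowPairs m i l)))]
  unfold hardyInt
  rw [← lintegral_mul_const _ (by fun_prop), ← lintegral_indicator (measurableSet_half m i)]
  congr 1
  ext y
  by_cases hy : 0 < y i
  · rw [Set.indicator_of_mem (show y ∈ {x : EuclideanSpace ℝ (Fin (m + 1)) | 0 < x i} from hy)]
    set g : ℝ → ℝ≥0∞ := (Ioo 0 (l * y i)).indicator
      (fun s => ENNReal.ofReal (1 - (s / y i) ^ β)) with hg
    have hgm : Measurable g := Measurable.indicator (by fun_prop) measurableSet_Ioo
    calc _ = ∫⁻ x : EuclideanSpace ℝ (Fin (m + 1)), ENNReal.ofReal ((u y) ^ 2) * (g (x i) *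
          ENNReal.ofReal (‖y - x‖ ^ (-(((m + 1 : ℕ) : ℝ) + α)))) := by
          congr 1
          ext x
          by_cases hx : x i ∈ Ioo 0 (l * y i)
          · rw [Set.indicator_of_mem (show (x, y) ∈ lowPairs m i l from hx), hg,
              Set.indicator_of_mem hx, norm_sub_rev]
          · rw [Set.indicator_of_notMem (fun h : (x, y) ∈ lowPairs m i l => hx h), hg,
              Set.indicator_of_notMem hx]
            simp
      _ = _ := by
          rw [lintegral_const_mul' _ _ ENNReal.ofReal_ne_top, slice_kernel m i hα0 g hgm]
          have : ∫⁻ s : ℝ, g s * ENNReal.ofReal (|y i - s| ^ (-1 - α)) =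
              ∫⁻ s in Ioo 0 (l * y i), ENNReal.ofReal (1 - (s / y i) ^ β) *
                ENNReal.ofReal (|y i - s| ^ (-1 - α)) := by
            rw [← lintegral_indicator measurableSet_Ioo]
            congr 1
            ext s
            simp only [hg, Set.indicator_apply]
            split_ifs <;> simp
          rw [this, scale_low hα0 hy hl1, ← qlow]
          ring
  · rw [Set.indicator_of_notMem (show y ∉ {x : EuclideanSpace ℝ (Fin (m + 1)) | 0 < x i} from hy)]
    refine lintegral_eq_zero_of_ae_eq_zero ?_
    filter_upwards with x
    exact Set.indicator_of_notMem (fun h : (x, y) ∈ lowPairs m i l =>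
      hy ((pos_of_mul_pos_of_pos hl0 (h.1.trans h.2)))) _

lemma ground_trunc (m : ℕ) (i : Fin (m + 1)) {α β l : ℝ} (hβ : β = (α - 1) / 2)
    (hβ0 : 0 < β) (hl0 : 0 < l) (hl1 : l < 1) (u : EuclideanSpace ℝ (Fin (m + 1)) → ℝ)
    (hu : Continuous u) (hfin : hardyInt m i α u ≠ ∞) :
    (∫⁻ p in lowPairs m i l, jDens m i α β u p) +
      hardyInt m i α u * (ENNReal.ofReal (tcst m α) * qdiff α β l) ≤
    energy (m + 1) α {x | 0 < x i} u := by
  have hα0 : 0 < α := by linarith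
  refine le_trans ?_ (energy_ge m i α u hu hl0 hl1.le)
  have hme : Measurable (eDens m α u) := by unfold eDens; fun_prop
  have hmj : Measurable (jDens m i α β u) := by unfold jDens; fun_prop
  have h := setLIntegral_congr_fun (μ := volume) (measurableSet_lowPairs m i l)
    (fun p hp => ground_pointwise m i (α := α) (β := β) hβ0 hl0 hl1.le u hp)
  rw [lintegral_add_left hme, lintegral_add_left hmj, high_term m i hβ hβ0 hl0 hl1 u hu,
    low_term m i hα0 hl0 hl1 u hu, qlow_eq hβ0 hl1.le, mul_add, mul_add,
    add_comm (hardyInt m i α u * (ENNReal.ofReal (tcst m α) * qhigh α β l)), ← add_assoc] at h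
  exact ((ENNReal.add_left_inj (ENNReal.mul_ne_top hfin (ENNReal.mul_ne_top
    ENNReal.ofReal_ne_top (qhigh_ne_top hα0 hβ0 hl1)))).mp h).ge

lemma ground_state (m : ℕ) (i : Fin (m + 1)) {α β : ℝ} (hβ : β = (α - 1) / 2)
    (hβ0 : 0 < β) (u : EuclideanSpace ℝ (Fin (m + 1)) → ℝ)
    (hu : Continuous u) (hfin : hardyInt m i α u ≠ ∞) :
    (∫⁻ p in lowPairs m i 1, jDens m i α β u p) +
      hardyInt m i α u * (ENNReal.ofReal (tcst m α) * qdiff α β 1) ≤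
    energy (m + 1) α {x | 0 < x i} u := by
  obtain ⟨l, hlmono, hl, hltend⟩ := exists_seq_strictMono_tendsto' (zero_lt_one' ℝ)
  have mono1 : Monotone fun k => lowPairs m i (l k) := by
    rintro a b hab p ⟨h1, h2⟩
    have h3 : 0 < p.2 i := (pos_of_mul_pos_of_pos (hl a).1 (h1.trans h2))
    have := hlmono.monotone hab
    exact ⟨h1, by nlinarith⟩
  have mono2 : Monotone fun k => Ioo 0 (l k) := by
    intro a b hab
    exact Ioo_subset_Ioo_right (hlmono.monotone hab)
  have un1 : ⋃ k, lowPairs m i (l k) = lowPairs m i 1 := by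
    ext p
    simp only [mem_iUnion]
    constructor
    · rintro ⟨k, h1, h2⟩
      have h3 : 0 < p.2 i := (pos_of_mul_pos_of_pos (hl k).1 (h1.trans h2))
      have := (hl k).2
      exact ⟨h1, by nlinarith⟩
    · rintro ⟨h1, h2⟩
      have : ∀ᶠ k in atTop, p.1 i < l k * p.2 i :=
        (hltend.mul_const (p.2 i)).eventually (lt_mem_nhds h2)
      obtain ⟨k, hk⟩ := this.exists
      exact ⟨k, h1, hk⟩
  have un2 : ⋃ k, Ioo 0 (l k) = Ioo 0 1 := by
    ext t
    simp only [mem_iUnion]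
    constructor
    · rintro ⟨k, h1, h2⟩
      exact ⟨h1, h2.trans (hl k).2⟩
    · rintro ⟨h1, h2⟩
      obtain ⟨k, hk⟩ := (hltend.eventually (lt_mem_nhds h2)).exists
      exact ⟨k, h1, hk⟩
  have t1 : Tendsto (fun k => ∫⁻ p in lowPairs m i (l k), jDens m i α β u p) atTop
      (𝓝 (∫⁻ p in lowPairs m i 1, jDens m i α β u p)) := by
    rw [← un1, setLIntegral_iUnion_of_directed _ mono1.directed_le]
    exact tendsto_atTop_iSup fun a b hab => lintegral_mono_set (mono1 hab)
  have t2 : Tendsto (fun k => qdiff α β (l k)) atTop (𝓝 (qdiff α β 1)) := by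
    unfold qdiff
    rw [← un2, setLIntegral_iUnion_of_directed _ mono2.directed_le]
    exact tendsto_atTop_iSup fun a b hab => lintegral_mono_set (mono2 hab)
  have t3 := t1.add (ENNReal.Tendsto.const_mul (ENNReal.Tendsto.const_mul t2
    (Or.inr (ENNReal.ofReal_ne_top (r := tcst m α)))) (Or.inr hfin))
  exact le_of_tendsto' t3 fun k => ground_trunc m i hβ hβ0 (hl k).1 (hl k).2 u hu hfin


/-! ### The weighted Sobolev inequality -/

lemma jDens_ge (m : ℕ) (i : Fin (m + 1)) {α β R : ℝ} (hα0 : 0 < α) (hβ0 : 0 < β)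
    (u : EuclideanSpace ℝ (Fin (m + 1)) → ℝ) {x y : EuclideanSpace ℝ (Fin (m + 1))}
    (hx : 0 < x i) (hxy : x i < y i) (hR : ‖x - y‖ ≤ R) (huy : |u y| ≤ |u x| / 2) :
    ENNReal.ofReal (|u x| ^ 2 / 4 * R ^ (-(((m + 1 : ℕ) : ℝ) + α))) ≤ jDens m i α β u (x, y) := by
  unfold jDens
  apply ENNReal.ofReal_le_ofReal
  have hy : 0 < y i := hx.trans hxy
  have ha : 0 < (x i) ^ β := by positivity
  have hb : 0 < (y i) ^ β := by positivity
  have hab : (x i) ^ β ≤ (y i) ^ β := Real.rpow_le_rpow hx.le hxy.le hβ0.le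
  have hne : 0 < ‖x - y‖ := by
    rw [norm_pos_iff, sub_ne_zero]
    rintro rfl
    exact lt_irrefl _ hxy
  have hk : R ^ (-(((m + 1 : ℕ) : ℝ) + α)) ≤ ‖x - y‖ ^ (-(((m + 1 : ℕ) : ℝ) + α)) :=
    Real.rpow_le_rpow_of_nonpos hne hR (by
      have : (0 : ℝ) ≤ ((m + 1 : ℕ) : ℝ) := by positivity
      linarith)
  have hR0 : 0 < R := hne.trans_le hR
  simp only
  generalize (x i) ^ β = a at *
  generalize (y i) ^ β = b at *
  refine mul_le_mul ?_ hk (by positivity) (by positivity)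
  generalize u x = s at *
  generalize u y = t at *
  have e : a * b * (s / a - t / b) ^ 2 = (s * b - t * a) ^ 2 / (a * b) := by
    field_simp
  rw [e, le_div_iff₀ (by positivity)]
  have h1 : |s| * b / 2 ≤ |s * b - t * a| := by
    have h2 := abs_sub_abs_le_abs_sub (s * b) (t * a)
    rw [abs_mul, abs_mul, abs_of_pos ha, abs_of_pos hb] at h2
    have h3 : |t| * a ≤ |s| / 2 * b := mul_le_mul huy hab ha.le (by positivity)
    linarith
  have h4 : (|s| * b / 2) ^ 2 ≤ (s * b - t * a) ^ 2 := by
    rw [← sq_abs (s * b - t * a)]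
    exact pow_le_pow_left₀ (by positivity) h1 2
  have h5 : |s| ^ 2 / 4 * (a * b) ≤ |s| ^ 2 / 4 * (b * b) := by gcongr
  linarith

lemma exponent_calc {n α ω A U q : ℝ} (hn : 0 < n) (hnα : α < n) (hω : 0 < ω)
    (hA : 0 < A) (hU : 0 < U) (hq : q = 2 * n / (n - α)) :
    U ^ 2 / 4 * (2 * (2 * A * (2 / U) ^ q / ω) ^ (1 / n)) ^ (-(n + α)) *
      (2 * A * (2 / U) ^ q / 2) =
    (1 / 8 * 2 ^ (-(n + α)) * ω ^ ((n + α) / n) * 2 ^ (-(α / n)) * 2 ^ (-(q * α / n))) *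
      A ^ (-(α / n)) * U ^ q := by
  have hnα' : 0 < n - α := by linarith
  set s := 2 * A * (2 / U) ^ q with hs
  have hs0 : 0 < s := by positivity
  have e1 : (2 * (s / ω) ^ (1 / n)) ^ (-(n + α)) * s =
      2 ^ (-(n + α)) * ω ^ ((n + α) / n) * s ^ (-(α / n)) := by
    rw [Real.mul_rpow (by positivity) (by positivity), ← Real.rpow_mul (by positivity),
      show 1 / n * -(n + α) = -((n + α) / n) by ring, Real.div_rpow hs0.le hω.le,
      Real.rpow_neg hω.le, div_inv_eq_mul,
      show -(α / n) = -((n + α) / n) + 1 by field_simp; ring, Real.rpow_add_one hs0.ne']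
    ring
  have e2 : s ^ (-(α / n)) =
      2 ^ (-(α / n)) * A ^ (-(α / n)) * (2 ^ (-(q * α / n)) * U ^ (q * α / n)) := by
    rw [hs, Real.mul_rpow (by positivity) (by positivity), Real.mul_rpow (by positivity) hA.le,
      ← Real.rpow_mul (by positivity), Real.div_rpow (by positivity) hU.le,
      show q * -(α / n) = -(q * α / n) by ring, Real.rpow_neg hU.le, div_inv_eq_mul]
  have e3 : U ^ q = U ^ 2 * U ^ (q * α / n) := by
    rw [← Real.rpow_natCast U 2, ← Real.rpow_add hU]
    congr 1
    rw [hq]; push_cast; field_simp; ring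
  calc _ = 1 / 8 * U ^ 2 * ((2 * (s / ω) ^ (1 / n)) ^ (-(n + α)) * s) := by ring
    _ = _ := by rw [e1, e2, e3]; ring

lemma sobolev_pointwise (m : ℕ) (i : Fin (m + 1)) {α β q A ω : ℝ} (hα0 : 0 < α) (hβ0 : 0 < β)
    (hnα : α < ((m + 1 : ℕ) : ℝ))
    (hq : q = 2 * ((m + 1 : ℕ) : ℝ) / (((m + 1 : ℕ) : ℝ) - α)) (hω0 : 0 < ω)
    (hω : volume (ball (0 : EuclideanSpace ℝ (Fin (m + 1))) 1) = ENNReal.ofReal ω)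
    (u : EuclideanSpace ℝ (Fin (m + 1)) → ℝ) (hu : Continuous u) (hA : 0 < A)
    (hI : ∫⁻ x in {x : EuclideanSpace ℝ (Fin (m + 1)) | 0 < x i}, ENNReal.ofReal (|u x| ^ q) =
      ENNReal.ofReal A)
    {x : EuclideanSpace ℝ (Fin (m + 1))} (hx : 0 < x i) (hux : u x ≠ 0) :
    ENNReal.ofReal (|u x| ^ 2 / 4 *
      (2 * (2 * A * (2 / |u x|) ^ q / ω) ^ (1 / ((m + 1 : ℕ) : ℝ))) ^ (-(((m + 1 : ℕ) : ℝ) + α)) *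
      (2 * A * (2 / |u x|) ^ q / 2)) ≤
    ∫⁻ y, (lowPairs m i 1).indicator (jDens m i α β u) (x, y) := by
  have hn0 : (0 : ℝ) < ((m + 1 : ℕ) : ℝ) := by positivity
  have hq0 : 0 < q := by
    rw [hq]; have : 0 < ((m + 1 : ℕ) : ℝ) - α := by linarith
    positivity
  have hU : 0 < |u x| := abs_pos.mpr hux
  set U := |u x| with hUdef
  set s := 2 * A * (2 / U) ^ q with hs
  have hs0 : 0 < s := by positivity
  set r := (s / ω) ^ (1 / ((m + 1 : ℕ) : ℝ)) with hr
  have hr0 : 0 < r := by positivity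
  have hrn : r ^ (m + 1) = s / ω := by
    rw [hr, ← Real.rpow_natCast, ← Real.rpow_mul (by positivity), one_div,
      inv_mul_cancel₀ hn0.ne', Real.rpow_one]
  set z : EuclideanSpace ℝ (Fin (m + 1)) := x + EuclideanSpace.single i r with hz
  have hvol : volume (ball z r) = ENNReal.ofReal s := by
    rw [Measure.addHaar_ball _ _ hr0.le, finrank_euclideanSpace, Fintype.card_fin, hω, hrn,
      ← ENNReal.ofReal_mul (by positivity), div_mul_cancel₀ _ hω0.ne']
  have hball : ∀ y ∈ ball z r, x i < y i ∧ ‖x - y‖ ≤ 2 * r := by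
    intro y hy
    rw [mem_ball, dist_eq_norm] at hy
    constructor
    · have h1 := (PiLp.norm_apply_le (y - z) i).trans_lt hy
      simp only [hz, PiLp.sub_apply, PiLp.add_apply, EuclideanSpace.single_apply, if_true,
        Real.norm_eq_abs] at h1
      have := (abs_lt.mp h1).1
      linarith
    · have h2 : ‖x - z‖ = r := by
        rw [hz]; simp [abs_of_pos hr0]
      calc ‖x - y‖ = ‖(x - z) - (y - z)‖ := by congr 1; abel
        _ ≤ ‖x - z‖ + ‖y - z‖ := norm_sub_le _ _
        _ ≤ 2 * r := by linarith
  set D : Set (EuclideanSpace ℝ (Fin (m + 1))) := {x | 0 < x i} with hD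
  set B : Set (EuclideanSpace ℝ (Fin (m + 1))) :=
    {y | ENNReal.ofReal ((U / 2) ^ q) ≤ ENNReal.ofReal (|u y| ^ q)} with hB
  have hqc : Continuous fun y => |u y| ^ q :=
    (continuous_abs.comp hu).rpow_const fun _ => Or.inr hq0.le
  have hBm : MeasurableSet B :=
    measurableSet_le measurable_const (ENNReal.measurable_ofReal.comp hqc.measurable)
  have hmarkov := mul_meas_ge_le_lintegral (μ := volume.restrict D)
    (ENNReal.measurable_ofReal.comp hqc.measurable) (ENNReal.ofReal ((U / 2) ^ q))
  have hBD : volume.restrict D B ≤ ENNReal.ofReal (s / 2) := by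
    have h1 : ENNReal.ofReal ((U / 2) ^ q) * volume.restrict D B ≤ ENNReal.ofReal A := by
      rw [← hI]; exact hmarkov
    have hp : 0 < (U / 2) ^ q := by positivity
    rw [← ENNReal.mul_le_mul_iff_right (a := ENNReal.ofReal ((U / 2) ^ q)) (by simpa using hp)
      ENNReal.ofReal_ne_top]
    refine h1.trans (le_of_eq ?_)
    rw [← ENNReal.ofReal_mul hp.le]
    congr 1
    have : (U / 2) ^ q * (2 / U) ^ q = 1 := by
      rw [← Real.mul_rpow (by positivity) (by positivity), show U / 2 * (2 / U) = 1 by field_simp,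
        Real.one_rpow]
    rw [hs]
    linear_combination (-A) * this
  have hT : ENNReal.ofReal (s / 2) ≤ volume (ball z r \ B) := by
    have h1 : volume (ball z r) ≤ volume.restrict D B + volume (ball z r \ B) := by
      rw [Measure.restrict_apply hBm]
      refine (measure_mono ?_).trans (measure_union_le _ _)
      intro y hy
      by_cases hyB : y ∈ B
      · exact Or.inl ⟨hyB, hx.trans (hball y hy).1⟩
      · exact Or.inr ⟨hy, hyB⟩
    rw [hvol] at h1
    have h2 : ENNReal.ofReal (s / 2) + ENNReal.ofReal (s / 2) ≤
        ENNReal.ofReal (s / 2) + volume (ball z r \ B) := by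
      rw [← ENNReal.ofReal_add (by positivity) (by positivity), add_halves]
      exact h1.trans (by gcongr)
    exact (ENNReal.add_le_add_iff_left ENNReal.ofReal_ne_top).mp h2
  calc _ = ENNReal.ofReal (U ^ 2 / 4 * (2 * r) ^ (-(((m + 1 : ℕ) : ℝ) + α))) *
        ENNReal.ofReal (s / 2) := by
        rw [← ENNReal.ofReal_mul (by positivity)]
    _ ≤ ENNReal.ofReal (U ^ 2 / 4 * (2 * r) ^ (-(((m + 1 : ℕ) : ℝ) + α))) *
        volume (ball z r \ B) := by gcongr
    _ = ∫⁻ y in ball z r \ B,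
        ENNReal.ofReal (U ^ 2 / 4 * (2 * r) ^ (-(((m + 1 : ℕ) : ℝ) + α))) := by
        rw [setLIntegral_const]
    _ ≤ ∫⁻ y in ball z r \ B, (lowPairs m i 1).indicator (jDens m i α β u) (x, y) := by
        apply setLIntegral_mono' (measurableSet_ball.diff hBm)
        rintro y ⟨hy, hyB⟩
        obtain ⟨h1, h2⟩ := hball y hy
        rw [Set.indicator_of_mem (show (x, y) ∈ lowPairs m i 1 from ⟨hx, by simpa using h1⟩)]
        apply jDens_ge m i hα0 hβ0 u hx h1 h2
        by_contra hcon
        push Not at hcon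
        apply hyB
        apply ENNReal.ofReal_le_ofReal
        exact Real.rpow_le_rpow (by positivity) hcon.le hq0.le
    _ ≤ _ := setLIntegral_le_lintegral _ _

lemma sobolev (m : ℕ) (i : Fin (m + 1)) {α β q : ℝ} (hα0 : 0 < α) (hβ0 : 0 < β)
    (hnα : α < ((m + 1 : ℕ) : ℝ))
    (hq : q = 2 * ((m + 1 : ℕ) : ℝ) / (((m + 1 : ℕ) : ℝ) - α)) :
    ∃ c : ℝ, 0 < c ∧ ∀ u : EuclideanSpace ℝ (Fin (m + 1)) → ℝ, Continuous u →
      ∀ A : ℝ, 0 ≤ A →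
      ∫⁻ x in {x : EuclideanSpace ℝ (Fin (m + 1)) | 0 < x i}, ENNReal.ofReal (|u x| ^ q) =
        ENNReal.ofReal A →
      ENNReal.ofReal (c * A ^ (2 / q)) ≤ ∫⁻ p in lowPairs m i 1, jDens m i α β u p := by
  have hn0 : (0 : ℝ) < ((m + 1 : ℕ) : ℝ) := by positivity
  have hnα' : 0 < ((m + 1 : ℕ) : ℝ) - α := by linarith
  have hq0 : 0 < q := by rw [hq]; positivity
  obtain ⟨ω, hω0, hω⟩ : ∃ ω : ℝ, 0 < ω ∧
      volume (ball (0 : EuclideanSpace ℝ (Fin (m + 1))) 1) = ENNReal.ofReal ω := by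
    have h1 : volume (ball (0 : EuclideanSpace ℝ (Fin (m + 1))) 1) ≠ ∞ := measure_ball_lt_top.ne
    have h2 : volume (ball (0 : EuclideanSpace ℝ (Fin (m + 1))) 1) ≠ 0 :=
      (measure_ball_pos _ _ one_pos).ne'
    exact ⟨_, ENNReal.toReal_pos h2 h1, (ENNReal.ofReal_toReal h1).symm⟩
  set n : ℝ := ((m + 1 : ℕ) : ℝ) with hn
  set c : ℝ := 1 / 8 * 2 ^ (-(n + α)) * ω ^ ((n + α) / n) * 2 ^ (-(α / n)) * 2 ^ (-(q * α / n))
    with hc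
  have hc0 : 0 < c := by positivity
  refine ⟨c, hc0, ?_⟩
  intro u hu A hA hI
  rcases hA.eq_or_lt with rfl | hA
  · rw [Real.zero_rpow (by positivity)]; simp
  have hmj : Measurable (jDens m i α β u) := by unfold jDens; fun_prop
  have hqc : Continuous fun y => |u y| ^ q :=
    (continuous_abs.comp hu).rpow_const fun _ => Or.inr hq0.le
  rw [← lintegral_indicator (measurableSet_lowPairs m i 1), Measure.volume_eq_prod,
    lintegral_prod _ (hmj.indicator (measurableSet_lowPairs m i 1)).aemeasurable]
  calc ENNReal.ofReal (c * A ^ (2 / q)) = ENNReal.ofReal (c * A ^ (-(α / n))) *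
        ∫⁻ x in {x : EuclideanSpace ℝ (Fin (m + 1)) | 0 < x i}, ENNReal.ofReal (|u x| ^ q) := by
        have he : 2 / q = -(α / n) + 1 := by rw [hq]; field_simp; ring
        rw [hI, ← ENNReal.ofReal_mul (by positivity), he, Real.rpow_add_one hA.ne']
        congr 1
        ring
    _ = ∫⁻ x in {x : EuclideanSpace ℝ (Fin (m + 1)) | 0 < x i},
        ENNReal.ofReal (c * A ^ (-(α / n)) * |u x| ^ q) := by
        rw [← lintegral_const_mul' _ _ ENNReal.ofReal_ne_top]
        congr 1
        ext x
        rw [← ENNReal.ofReal_mul (by positivity)]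
    _ ≤ ∫⁻ x in {x : EuclideanSpace ℝ (Fin (m + 1)) | 0 < x i},
        ∫⁻ y, (lowPairs m i 1).indicator (jDens m i α β u) (x, y) := by
        apply setLIntegral_mono' (measurableSet_half m i)
        intro x hx
        by_cases hux : u x = 0
        · rw [hux, abs_zero, Real.zero_rpow hq0.ne']; simp
        · have := sobolev_pointwise m i hα0 hβ0 hnα hq hω0 hω u hu hA hI hx hux
          rwa [exponent_calc hn0 hnα hω0 hA (abs_pos.mpr hux) hq] at this
    _ ≤ _ := setLIntegral_le_lintegral _ _

lemma kappa_eq (m : ℕ) (α : ℝ) : kappa (m + 1) α = tcst m α *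
    ((eulerBeta ((1 + α) / 2) ((2 - α) / 2) - 2 ^ α) / (α * 2 ^ α)) := by
  unfold kappa tcst
  congr 3
  push_cast; ring

lemma main_aux (m : ℕ) (hm : 1 ≤ m) (i : Fin (m + 1)) (α : ℝ) (hα1 : 1 < α) (hα2 : α < 2) :
    ∃ c : ℝ, 0 < c ∧ ∀ u : EuclideanSpace ℝ (Fin (m + 1)) → ℝ,
      Continuous u → HasCompactSupport u →
      tsupport u ⊆ {x : EuclideanSpace ℝ (Fin (m + 1)) | 0 < x i} →
      energy (m + 1) α {x : EuclideanSpace ℝ (Fin (m + 1)) | 0 < x i} u ≥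
        ENNReal.ofReal (kappa (m + 1) α *
          ∫ x in {x : EuclideanSpace ℝ (Fin (m + 1)) | 0 < x i}, (u x) ^ 2 * (x i) ^ (-α)) +
        ENNReal.ofReal (c *
          (∫ x in {x : EuclideanSpace ℝ (Fin (m + 1)) | 0 < x i},
            |u x| ^ ((2 * ((m + 1 : ℕ) : ℝ)) / (((m + 1 : ℕ) : ℝ) - α))) ^
              (2 / ((2 * ((m + 1 : ℕ) : ℝ)) / (((m + 1 : ℕ) : ℝ) - α)))) := by
  have hα0 : 0 < α := by linarith
  have hnα : α < ((m + 1 : ℕ) : ℝ) := by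
    have : (1 : ℝ) ≤ m := by exact_mod_cast hm
    push_cast; linarith
  have hnα' : 0 < ((m + 1 : ℕ) : ℝ) - α := by linarith
  have hn0 : (0 : ℝ) < ((m + 1 : ℕ) : ℝ) := by positivity
  obtain ⟨β, hβ⟩ : ∃ β, β = (α - 1) / 2 := ⟨_, rfl⟩
  have hβ0 : 0 < β := by rw [hβ]; linarith
  obtain ⟨c, hc0, hc⟩ := sobolev m i hα0 hβ0 hnα rfl
  refine ⟨c, hc0, ?_⟩
  intro u hu hcs hsupp
  generalize hq : (2 * ((m + 1 : ℕ) : ℝ)) / (((m + 1 : ℕ) : ℝ) - α) = q at *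
  have hq0 : 0 < q := by rw [← hq]; positivity
  have hint1 : Integrable fun x : EuclideanSpace ℝ (Fin (m + 1)) => (u x) ^ 2 * (x i) ^ (-α) := by
    rw [← integrableOn_iff_integrable_of_support_subset (s := tsupport u)]
    · apply ContinuousOn.integrableOn_compact hcs
      intro x hx
      have hxi : 0 < x i := hsupp hx
      apply ContinuousAt.continuousWithinAt
      apply ContinuousAt.mul (by fun_prop)
      exact ContinuousAt.rpow_const (by fun_prop) (Or.inl hxi.ne')
    · intro x hx
      apply subset_tsupport
      intro h
      apply hx
      simp [h]
  have hint2 : Integrable fun x : EuclideanSpace ℝ (Fin (m + 1)) => |u x| ^ q := by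
    apply Continuous.integrable_of_hasCompactSupport
    · exact (continuous_abs.comp hu).rpow_const fun _ => Or.inr hq0.le
    · exact hcs.comp_left (g := fun t : ℝ => |t| ^ q) (by simp [Real.zero_rpow hq0.ne'])
  have hD := measurableSet_half m i
  have hH : hardyInt m i α u = ENNReal.ofReal
      (∫ x in {x : EuclideanSpace ℝ (Fin (m + 1)) | 0 < x i}, (u x) ^ 2 * (x i) ^ (-α)) := by
    rw [ofReal_integral_eq_lintegral_ofReal hint1.integrableOn]
    · unfold hardyInt
      congr 1
      ext x
      rw [ENNReal.ofReal_mul (by positivity)]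
    · filter_upwards [ae_restrict_mem hD] with x hx
      have hxi : 0 < x i := hx
      simp only [Pi.zero_apply]; positivity
  have hM0 : 0 ≤ ∫ x in {x : EuclideanSpace ℝ (Fin (m + 1)) | 0 < x i},
      (u x) ^ 2 * (x i) ^ (-α) := by
    apply setIntegral_nonneg hD
    intro x hx
    have hxi : 0 < x i := hx
    positivity
  have hA0 : 0 ≤ ∫ x in {x : EuclideanSpace ℝ (Fin (m + 1)) | 0 < x i}, |u x| ^ q :=
    integral_nonneg fun x => by positivity
  have hA := hc u hu _ hA0 (by
    rw [ofReal_integral_eq_lintegral_ofReal hint2.integrableOn]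
    filter_upwards with x
    simp only [Pi.zero_apply]; positivity)
  have hg := ground_state m i hβ hβ0 u hu (by rw [hH]; exact ENNReal.ofReal_ne_top)
  have ht0 : 0 ≤ tcst m α := by
    unfold tcst
    have := Real.Gamma_pos_of_pos (s := (1 + α) / 2) (by linarith)
    have := Real.Gamma_pos_of_pos (s := (((m + 1 : ℕ) : ℝ) + α) / 2) (by positivity)
    positivity
  rw [hH, qdiff_one hβ hα1 hα2, ← ENNReal.ofReal_mul ht0, ← kappa_eq, mul_comm,
    ← ENNReal.ofReal_mul' hM0] at hg
  refine le_trans ?_ hg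
  rw [add_comm]
  gcongr

/-- Fractional Hardy–Sobolev–Maz'ya inequality for the upper half-space
`Π = ℝ^{n-1} × (0,∞)`. -/
theorem fractional_hardy_sobolev_mazya_halfspace (n : ℕ) (hn : 2 ≤ n) (α : ℝ)
    (hα1 : 1 < α) (hα2 : α < 2) :
    ∃ c : ℝ, 0 < c ∧ ∀ u : EuclideanSpace ℝ (Fin n) → ℝ,
      Continuous u → HasCompactSupport u →
      tsupport u ⊆ {x : EuclideanSpace ℝ (Fin n) | 0 < x ⟨n - 1, by omega⟩} →
      energy n α {x : EuclideanSpace ℝ (Fin n) | 0 < x ⟨n - 1, by omega⟩} u ≥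
        ENNReal.ofReal (kappa n α *
          ∫ x in {x : EuclideanSpace ℝ (Fin n) | 0 < x ⟨n - 1, by omega⟩},
            (u x) ^ 2 * (x ⟨n - 1, by omega⟩) ^ (-α)) +
        ENNReal.ofReal (c *
          (∫ x in {x : EuclideanSpace ℝ (Fin n) | 0 < x ⟨n - 1, by omega⟩},
            |u x| ^ ((2 * n) / ((n : ℝ) - α))) ^ (2 / ((2 * n) / ((n : ℝ) - α)))) := by
  obtain ⟨m, rfl⟩ : ∃ m, n = m + 1 := ⟨n - 1, by omega⟩
  exact main_aux m (by omega) _ α hα1 hα2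
end
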